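/- For every p < 1/2, the critical colouring densities of the DaC model on the square lattice satisfy r_c(p) + r_c*(p) ≥ 1. -/

import Mathlib

/-!
Common definitions for the Divide-and-Colour (DaC) model of
Bálint, Camia and Meester, "Sharp phase transition and critical
behaviour in 2D divide and colour models".

The model is built concretely: a single uniform random variable on `(0,1]`
is decomposed into countably many i.i.d. uniform random variables (via its
binary digits); one family of uniforms drives the Bernoulli(p) bond
percolation (the edge configuration), and an independent family of uniforms
attaches an independent Bernoulli(r) colour to each bond cluster (the colour
of a cluster is determined by the uniform label of its canonical
representative, the vertex of minimal encoding).  The DaC measure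
`ℙ_{p,r}` is the pushforward of Lebesgue measure on `(0,1]` under the map
producing the pair (edge configuration, colour configuration).
-/

open MeasureTheory ENNReal

namespace DaC

/-- Vertices of the lattice. -/
abbrev V : Type := ℤ × ℤ

/-- Square lattice adjacency: Euclidean distance `1`. -/
def SqAdj (u v : V) : Prop := (u.1 - v.1) ^ 2 + (u.2 - v.2) ^ 2 = 1

/-- `*`-adjacency (matching graph of the square lattice):
Euclidean distance `1` or `√2`. -/
def StarAdj (u v : V) : Prop :=
  (u.1 - v.1) ^ 2 + (u.2 - v.2) ^ 2 = 1 ∨ (u.1 - v.1) ^ 2 + (u.2 - v.2) ^ 2 = 2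

/-- Triangular lattice adjacency. -/
def TriAdj (u v : V) : Prop :=
  (u.1 - v.1, u.2 - v.2) ∈
    ({(1, 0), (-1, 0), (0, 1), (0, -1), (1, 1), (-1, -1)} : Set (ℤ × ℤ))

/-- Classical indicator of a proposition, as a boolean. -/
noncomputable def boolOf (P : Prop) : Bool := @decide P (Classical.propDecidable P)

/-- The `n`-th binary digit of a real number `x ∈ (0,1]`. -/
noncomputable def bit (n : ℕ) (x : ℝ) : Bool := boolOf (⌊x * 2 ^ (n + 1)⌋ % 2 = 1)

/-- A countable family of i.i.d. uniform random variables on `[0,1]`, extracted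
from a single uniform sample `x` by splitting its binary digits. -/
noncomputable def unif (i : ℕ) (x : ℝ) : ℝ :=
  ∑' k : ℕ, if bit (Nat.pair i k) x then ((2 : ℝ)⁻¹) ^ (k + 1) else 0

/-- A symmetric encoding of (unordered) pairs of vertices. -/
noncomputable def eIdx (u v : V) : ℕ :=
  min (Encodable.encode (u, v)) (Encodable.encode (v, u))

/-- The uniform label attached to the edge `{u,v}`. -/
noncomputable def edgeU (u v : V) (x : ℝ) : ℝ := unif (2 * eIdx u v) x

/-- The uniform label attached to the vertex `v` (independent of the edge labels). -/
noncomputable def vtxU (v : V) (x : ℝ) : ℝ := unif (2 * Encodable.encode v + 1) x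

/-- Edge configurations: a boolean (open/closed) for each (ordered) pair of
vertices; configurations arising from the model are symmetric and are
supported on pairs of adjacent vertices. -/
abbrev EdgeCfg : Type := V → V → Bool

/-- Colour configurations: a colour (black = `true`, white = `false`) for each vertex. -/
abbrev ColourCfg : Type := V → Bool

/-- Full configurations of the DaC model: an edge configuration together with
a colour configuration. -/
abbrev Config : Type := EdgeCfg × ColourCfg

/-- The Bernoulli(p) edge configuration determined by the uniform sample `x`,
on the lattice with adjacency `adj`: an edge `{u,v}` of the lattice is open
iff its uniform label is `< p`. -/
noncomputable def edgeCfg (adj : V → V → Prop) (p : ℝ) (x : ℝ) : EdgeCfg :=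
  fun u v => boolOf (adj u v) && boolOf (edgeU u v x < p)

/-- Connectivity through open edges of the edge configuration `η`. -/
def Conn (η : EdgeCfg) (u v : V) : Prop :=
  Relation.ReflTransGen (fun a b => η a b = true) u v

/-- The `p`-cluster of the vertex `v`: its connected component in the graph
retaining only open edges. -/
def pCluster (η : EdgeCfg) (v : V) : Set V := {w | Conn η v w}

/-- Canonical representative of the `p`-cluster of `v`: the vertex of the
cluster with minimal encoding. -/
noncomputable def clusterRep (η : EdgeCfg) (v : V) : V :=
  (Encodable.decode (α := V) (sInf (Encodable.encode '' pCluster η v))).getD v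

/-- The colour configuration with parameters `p, r` determined by the uniform
sample `x`: every `p`-cluster is coloured black (with probability `r`)
or white, independently of all other `p`-clusters, according to the uniform
label of its canonical representative. -/
noncomputable def colourCfg (adj : V → V → Prop) (p r : ℝ) (x : ℝ) : ColourCfg :=
  fun v => boolOf (vtxU (clusterRep (edgeCfg adj p x) v) x < r)

/-- The uniform sample: Lebesgue measure on `(0,1]`. -/
noncomputable def base : Measure ℝ := volume.restrict (Set.Ioc 0 1)

/-- `ν_p`: the product Bernoulli(p) measure on edge configurations of the
lattice with adjacency `adj`. -/
noncomputable def edgeMeasure (adj : V → V → Prop) (p : ℝ) : Measure EdgeCfg :=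
  base.map (edgeCfg adj p)

/-- `ℙ_{p,r}`: the DaC measure on pairs (edge configuration, colour
configuration) for the lattice with adjacency `adj`. -/
noncomputable def DaCMeasure (adj : V → V → Prop) (p r : ℝ) : Measure Config :=
  base.map (fun x => (edgeCfg adj p x, colourCfg adj p r x))

/-- Monochromatic connectivity: `u` and `v` are joined by a path (for the
adjacency `adj`) all of whose vertices have colour `c`. -/
def MonoConn (adj : V → V → Prop) (ξ : ColourCfg) (c : Bool) (u v : V) : Prop :=
  Relation.ReflTransGen (fun a b => adj a b ∧ ξ a = c ∧ ξ b = c) u v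

/-- The colour-`c` cluster of `v` (for the adjacency `adj`): empty if `v` does
not have colour `c`, and otherwise the maximal `adj`-connected set of
`c`-coloured vertices containing `v`. -/
def monoCluster (adj : V → V → Prop) (ξ : ColourCfg) (c : Bool) (v : V) : Set V :=
  {w | ξ v = c ∧ MonoConn adj ξ c v w}

/-- The origin. -/
def origin : V := (0, 0)

/-- The size (cardinality) of a set of vertices, with values in `ℝ≥0∞`. -/
noncomputable def sizeE (S : Set V) : ℝ≥0∞ := S.encard

/-- The probability, under the DaC measure with edge adjacency `eadj` and
parameters `p, r`, that the origin lies in an infinite colour-`c` cluster for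
the adjacency `cadj`. -/
noncomputable def percProb (eadj cadj : V → V → Prop) (c : Bool) (p r : ℝ) : ℝ≥0∞ :=
  DaCMeasure eadj p r {ω | (monoCluster cadj ω.2 c origin).Infinite}

/-- `Θ(p,r)` for the square lattice: probability that the origin lies in an
infinite black `r`-cluster. -/
noncomputable def thetaSq (p r : ℝ) : ℝ≥0∞ := percProb SqAdj SqAdj true p r

/-- `Θ*(p,s)` for the square lattice: the `ℙ_{p,1-s}`-probability that the
origin lies in an infinite white `*`-cluster. -/
noncomputable def thetaStarSq (p s : ℝ) : ℝ≥0∞ := percProb SqAdj StarAdj false p (1 - s)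

/-- `Θ(p,r)` for the triangular lattice. -/
noncomputable def thetaTri (p r : ℝ) : ℝ≥0∞ := percProb TriAdj TriAdj true p r

/-- The critical colouring density `r_c(p)` of the square lattice DaC model. -/
noncomputable def rcSq (p : ℝ) : ℝ :=
  sSup {r : ℝ | r ∈ Set.Icc (0 : ℝ) 1 ∧ thetaSq p r = 0}

/-- The critical colouring density `r_c*(p)` for white `*`-percolation. -/
noncomputable def rcStarSq (p : ℝ) : ℝ :=
  sSup {s : ℝ | s ∈ Set.Icc (0 : ℝ) 1 ∧ thetaStarSq p s = 0}

/-- The critical colouring density `r_c(p)` of the triangular lattice DaC model. -/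
noncomputable def rcTri (p : ℝ) : ℝ :=
  sSup {r : ℝ | r ∈ Set.Icc (0 : ℝ) 1 ∧ thetaTri p r = 0}

/-! ### Rectangles and crossings -/

/-- The rectangle `S_{n,m} = ([0,n] × [0,m]) ∩ ℤ²`. -/
def Rect (n m : ℕ) : Set V :=
  {v | 0 ≤ v.1 ∧ v.1 ≤ (n : ℤ) ∧ 0 ≤ v.2 ∧ v.2 ≤ (m : ℤ)}

/-- The top side of `S_{n,m}`. -/
def TopSide (n m : ℕ) : Set V := {v | v ∈ Rect n m ∧ v.2 = (m : ℤ)}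

/-- The bottom side of `S_{n,m}`. -/
def BotSide (n m : ℕ) : Set V := {v | v ∈ Rect n m ∧ v.2 = 0}

/-- The left side of `S_{n,m}`. -/
def LeftSide (n m : ℕ) : Set V := {v | v ∈ Rect n m ∧ v.1 = 0}

/-- The right side of `S_{n,m}`. -/
def RightSide (n m : ℕ) : Set V := {v | v ∈ Rect n m ∧ v.1 = (n : ℤ)}

/-- There is a path (for the adjacency `adj`), all of whose vertices lie in the
region `R` and satisfy the predicate `good`, from the set `A` to the set `B`. -/
def HasCrossing (adj : V → V → Prop) (good : V → Prop) (R A B : Set V) : Prop :=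
  ∃ (k : ℕ) (f : Fin (k + 1) → V),
    (∀ i, f i ∈ R ∧ good (f i)) ∧
    (∀ i : Fin k, adj (f i.castSucc) (f i.succ)) ∧
    f 0 ∈ A ∧ f (Fin.last k) ∈ B

/-- `V^b_{n,m}` as a set of colour configurations: there is a black vertical
crossing of `S_{n,m}` (for the adjacency `adj`). -/
def VertBC (adj : V → V → Prop) (n m : ℕ) : Set ColourCfg :=
  {ξ | HasCrossing adj (fun v => ξ v = true) (Rect n m) (TopSide n m) (BotSide n m)}

/-- `V^{w*}_{n,m}` as a set of colour configurations: there is a white vertical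
`*`-crossing of `S_{n,m}`. -/
def VertWStarC (n m : ℕ) : Set ColourCfg :=
  {ξ | HasCrossing StarAdj (fun v => ξ v = false) (Rect n m) (TopSide n m) (BotSide n m)}

/-- `H^{w*}_{n,m}` as a set of colour configurations: there is a white
horizontal `*`-crossing of `S_{n,m}`. -/
def HorizWStarC (n m : ℕ) : Set ColourCfg :=
  {ξ | HasCrossing StarAdj (fun v => ξ v = false) (Rect n m) (LeftSide n m) (RightSide n m)}

/-- The event (set of full configurations) determined by a set of colour
configurations. -/
def colourEvent (C : Set ColourCfg) : Set Config := {ω | ω.2 ∈ C}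

/-! ### Events depending on colours, increasing events, pivotal clusters -/

/-- The event `A` is defined in terms of the colours of the vertices in `W`. -/
def DependsOnColoursIn (A : Set Config) (W : Set V) : Prop :=
  ∀ ω ω' : Config, (∀ v ∈ W, ω.2 v = ω'.2 v) → (ω ∈ A ↔ ω' ∈ A)

/-- The event `A` is increasing (for the partial order comparing colour
configurations pointwise, black = `true` above white = `false`). -/
def IncreasingColourEvent (A : Set Config) : Prop :=
  ∀ ω ω' : Config, (∀ v : V, ω.2 v = true → ω'.2 v = true) → ω ∈ A → ω' ∈ A

/-- Flip the colours of the vertices of `C`. -/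
noncomputable def flipOn (C : Set V) (ξ : ColourCfg) : ColourCfg :=
  fun v => @ite _ (v ∈ C) (Classical.propDecidable _) (!ξ v) (ξ v)

/-- The set `C` is a pivotal `p`-cluster for the event `A` in the
configuration `ω`: `C` is a `p`-cluster of the edge configuration of `ω`, and
flipping the colour of (all the vertices of) `C` changes whether the
configuration belongs to `A`. -/
def IsPivotal (A : Set Config) (ω : Config) (C : Set V) : Prop :=
  (∃ v : V, C = pCluster ω.1 v) ∧ ¬ (ω ∈ A ↔ (ω.1, flipOn C ω.2) ∈ A)

/-- `n(A)`: the number of pivotal `p`-clusters for the event `A`, with values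
in `ℝ≥0∞`. -/
noncomputable def numPivotal (A : Set Config) (ω : Config) : ℝ≥0∞ :=
  {C : Set V | IsPivotal A ω C}.encard

/-! ### Barriers -/

/-- Connectivity in the square lattice avoiding the edges of `E`. -/
def AvoidConn (E : Set (V × V)) (u v : V) : Prop :=
  Relation.ReflTransGen (fun a b => SqAdj a b ∧ (a, b) ∉ E ∧ (b, a) ∉ E) u v

/-- `E` is a barrier: a set of edges of the square lattice whose removal
(keeping the end-vertices) separates `ℤ²` into two or more connected
components, exactly one of which is infinite. -/
def IsBarrier (E : Set (V × V)) : Prop :=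
  (∀ e ∈ E, SqAdj e.1 e.2) ∧
  (∃ v, {w | AvoidConn E v w}.Infinite) ∧
  (∀ v w, {x | AvoidConn E v x}.Infinite → {x | AvoidConn E w x}.Infinite → AvoidConn E v w) ∧
  (∃ v, {w | AvoidConn E v w}.Finite)

/-- The exterior of a barrier: its unique infinite complementary component. -/
def barrierExt (E : Set (V × V)) : Set V := {v | {w | AvoidConn E v w}.Infinite}

/-- The interior of a barrier: the union of the finite complementary components. -/
def barrierInt (E : Set (V × V)) : Set V := {v | {w | AvoidConn E v w}.Finite}

/-- The event `A ⊆ EdgeCfg` is increasing (opening edges preserves it). -/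
def IncreasingEdgeEvent (A : Set EdgeCfg) : Prop :=
  ∀ η η' : EdgeCfg, (∀ a b : V, η a b = true → η' a b = true) → η ∈ A → η' ∈ A

/-- The event `A ⊆ EdgeCfg` depends only on the states of the edges both of
whose endpoints lie in `W`. -/
def DependsOnEdgesIn (A : Set EdgeCfg) (W : Set V) : Prop :=
  ∀ η η' : EdgeCfg, (∀ a b : V, a ∈ W → b ∈ W → η a b = η' a b) → (η ∈ A ↔ η' ∈ A)

/-! ### Translations -/

/-- Translation of configurations by the vector `u`. -/
def shift (u : V) (ω : Config) : Config :=
  (fun a b => ω.1 (a + u) (b + u), fun a => ω.2 (a + u))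

end DaC

namespace DaC

/-! ### Planar topology: parity of crossings -/

lemma rtg_seq {R : V → V → Prop} {u v : V} (h : Relation.ReflTransGen R u v) :
    ∃ (n : ℕ) (f : ℕ → V), f 0 = u ∧ f n = v ∧ ∀ i < n, R (f i) (f (i + 1)) := by
  induction h with
  | refl => exact ⟨0, fun _ => u, rfl, rfl, by simp⟩
  | @tail b c _ hbc ih =>
    obtain ⟨n, f, h0, hn, hs⟩ := ih
    refine ⟨n + 1, fun i => if i ≤ n then f i else c, by simp [h0], by simp, ?_⟩
    intro i hi
    rcases Nat.lt_or_ge i n with h | h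
    · have h1 : i ≤ n := by omega
      have h2 : i + 1 ≤ n := by omega
      simpa [h1, h2] using hs i h
    · have : i = n := by omega
      subst this
      simpa [hn] using hbc

lemma seq_rtg {R : V → V → Prop} {n : ℕ} {f : ℕ → V}
    (hs : ∀ i < n, R (f i) (f (i + 1))) {i j : ℕ} (hij : i ≤ j) (hj : j ≤ n) :
    Relation.ReflTransGen R (f i) (f j) := by
  induction j with
  | zero =>
    have : i = 0 := by omega
    subst this; exact .refl
  | succ k ih =>
    rcases Nat.lt_or_ge k i with h | h
    · have : i = k + 1 := by omega
      subst this; exact .refl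
    · exact (ih h (by omega)).tail (hs k (by omega))

lemma sqAdj_cases {a b : V} (h : SqAdj a b) :
    (b.1 = a.1 + 1 ∧ b.2 = a.2) ∨ (b.1 = a.1 - 1 ∧ b.2 = a.2) ∨
    (b.1 = a.1 ∧ b.2 = a.2 + 1) ∨ (b.1 = a.1 ∧ b.2 = a.2 - 1) := by
  unfold SqAdj at h
  have h1 : (a.1 - b.1) ^ 2 ≤ 1 := by nlinarith [sq_nonneg (a.2 - b.2)]
  have h2 : (a.2 - b.2) ^ 2 ≤ 1 := by nlinarith [sq_nonneg (a.1 - b.1)]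
  have h3 : a.1 - b.1 ≤ 1 := by nlinarith
  have h4 : -1 ≤ a.1 - b.1 := by nlinarith
  have h5 : a.2 - b.2 ≤ 1 := by nlinarith
  have h6 : -1 ≤ a.2 - b.2 := by nlinarith
  generalize hx : a.1 - b.1 = x at *
  generalize hy : a.2 - b.2 = y at *
  have hX : x = -1 ∨ x = 0 ∨ x = 1 := by omega
  have hY : y = -1 ∨ y = 0 ∨ y = 1 := by omega
  rcases hX with hX | hX | hX <;> rcases hY with hY | hY | hY <;> rw [hX, hY] at h <;>
    first | (exfalso; norm_num at h; done) | omega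

lemma starAdj_cases {a b : V} (h : StarAdj a b) :
    (b.1 = a.1 ∧ b.2 = a.2 + 1) ∨ (b.1 = a.1 ∧ a.2 = b.2 + 1) ∨
    (b.1 = a.1 + 1 ∧ a.2 - 1 ≤ b.2 ∧ b.2 ≤ a.2 + 1) ∨
    (a.1 = b.1 + 1 ∧ b.2 - 1 ≤ a.2 ∧ a.2 ≤ b.2 + 1) := by
  unfold StarAdj at h
  have h0 : (a.1 - b.1) ^ 2 + (a.2 - b.2) ^ 2 ≤ 2 := by rcases h with h | h <;> omega
  have h1 : (a.1 - b.1) ^ 2 ≤ 2 := by nlinarith [sq_nonneg (a.2 - b.2)]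
  have h2 : (a.2 - b.2) ^ 2 ≤ 2 := by nlinarith [sq_nonneg (a.1 - b.1)]
  have h3 : a.1 - b.1 ≤ 1 := by nlinarith
  have h4 : -1 ≤ a.1 - b.1 := by nlinarith
  have h5 : a.2 - b.2 ≤ 1 := by nlinarith
  have h6 : -1 ≤ a.2 - b.2 := by nlinarith
  have h7 : ¬ (a.1 - b.1 = 0 ∧ a.2 - b.2 = 0) := by
    rintro ⟨h8, h9⟩
    rw [h8, h9] at h
    norm_num at h
  omega

/-- crossing indicator: the step `a → b` crosses the vertical line `x + 1/2` strictly below `y`. -/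
def cr (x y : ℤ) (a b : V) : ZMod 2 :=
  if (a.1 = x ∧ b.1 = x + 1 ∨ a.1 = x + 1 ∧ b.1 = x) ∧ a.2 < y then 1 else 0

/-- indicator of the half column below `(x,y)`. -/
def dd (x y : ℤ) (a : V) : ZMod 2 := if a.1 = x ∧ a.2 < y then 1 else 0

/-- number of crossings (mod 2). -/
def SS (x y : ℤ) (f : ℕ → V) (n : ℕ) : ZMod 2 :=
  ∑ i ∈ Finset.range n, cr x y (f i) (f (i + 1))

lemma cr_step {x y : ℤ} {a b : V} (h : SqAdj a b)
    (hne : ¬ (a.1 = x + 1 ∧ b.1 = x + 1 ∧ (a.2 = y ∧ b.2 = y - 1 ∨ a.2 = y - 1 ∧ b.2 = y))) :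
    cr x y a b + cr (x + 1) y a b = dd (x + 1) y a + dd (x + 1) y b := by
  unfold cr dd
  have h2 : (1 : ZMod 2) + 1 = 0 := by decide
  rcases sqAdj_cases h with ⟨h1, h3⟩ | ⟨h1, h3⟩ | ⟨h1, h3⟩ | ⟨h1, h3⟩ <;> split_ifs <;>
    first | rfl | (simp only [h2, add_zero, zero_add]; done) | (exfalso; omega)

lemma cr_tot {x y : ℤ} {a b : V} (h : SqAdj a b) (ha : a.2 < y) :
    cr x y a b = (if a.1 ≤ x then 1 else 0) + (if b.1 ≤ x then 1 else 0) := by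
  unfold cr
  have h2 : (1 : ZMod 2) + 1 = 0 := by decide
  rcases sqAdj_cases h with ⟨h1, h3⟩ | ⟨h1, h3⟩ | ⟨h1, h3⟩ | ⟨h1, h3⟩ <;> split_ifs <;>
    first | rfl | (simp only [h2, add_zero, zero_add]; done) | (exfalso; omega)

lemma tele (F : V → ZMod 2) (f : ℕ → V) (n : ℕ) :
    ∑ i ∈ Finset.range n, (F (f i) + F (f (i + 1))) = F (f 0) + F (f n) := by
  induction n with
  | zero => simp [CharTwo.add_self_eq_zero]
  | succ k ih =>
    rw [Finset.sum_range_succ, ih]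
    have := CharTwo.add_self_eq_zero (F (f k))
    linear_combination this

lemma SS_horiz {x y : ℤ} {f : ℕ → V} {n : ℕ} (hf : ∀ i < n, SqAdj (f i) (f (i + 1)))
    (hne : ∀ i < n, ¬ ((f i).1 = x + 1 ∧ (f (i + 1)).1 = x + 1 ∧
      ((f i).2 = y ∧ (f (i + 1)).2 = y - 1 ∨ (f i).2 = y - 1 ∧ (f (i + 1)).2 = y)))
    (h0 : ¬ ((f 0).1 = x + 1 ∧ (f 0).2 < y)) (hn : ¬ ((f n).1 = x + 1 ∧ (f n).2 < y)) :
    SS x y f n = SS (x + 1) y f n := by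
  have h : SS x y f n + SS (x + 1) y f n = 0 := by
    unfold SS
    rw [← Finset.sum_add_distrib,
      Finset.sum_congr rfl (fun i hi => cr_step (hf i (Finset.mem_range.1 hi))
        (hne i (Finset.mem_range.1 hi))), tele (dd (x + 1) y)]
    simp [dd, h0, hn]
  exact CharTwo.add_eq_zero.1 h

lemma SS_vert {x y : ℤ} {f : ℕ → V} {n : ℕ}
    (hf : ∀ i < n, SqAdj (f i) (f (i + 1)))
    (hne : ∀ i < n, ¬ ((f i).2 = y ∧ (f (i + 1)).2 = y ∧
      ((f i).1 = x ∧ (f (i + 1)).1 = x + 1 ∨ (f i).1 = x + 1 ∧ (f (i + 1)).1 = x))) :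
    SS x (y + 1) f n = SS x y f n := by
  unfold SS
  refine Finset.sum_congr rfl fun i hi => ?_
  have h1 := hne i (Finset.mem_range.1 hi)
  have h2 := sqAdj_cases (hf i (Finset.mem_range.1 hi))
  unfold cr
  split_ifs <;> first | rfl | (exfalso; omega)

lemma SS_total {x y : ℤ} {f : ℕ → V} {n : ℕ} (hf : ∀ i < n, SqAdj (f i) (f (i + 1)))
    (hy : ∀ i ≤ n, (f i).2 < y) (h0 : (f 0).1 ≤ x) (hn : x < (f n).1) : SS x y f n = 1 := by
  unfold SS
  rw [Finset.sum_congr rfl (fun i hi => cr_tot (x := x) (hf i (Finset.mem_range.1 hi))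
    (hy i (Finset.mem_range.1 hi).le)), tele (fun a => if a.1 ≤ x then 1 else 0)]
  simp [h0, hn]

lemma SS_zero {x y : ℤ} {f : ℕ → V} {n : ℕ} (hy : ∀ i ≤ n, y ≤ (f i).2) : SS x y f n = 0 := by
  unfold SS
  refine Finset.sum_eq_zero fun i hi => ?_
  have := hy i (Finset.mem_range.1 hi).le
  unfold cr
  rw [if_neg]; omega

/-- one star step, to the right. -/
lemma SS_star_right {f : ℕ → V} {n : ℕ} (hf : ∀ i < n, SqAdj (f i) (f (i + 1))) {v w : V}
    (hv : ∀ i ≤ n, f i ≠ v) (hw : ∀ i ≤ n, f i ≠ w)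
    (h1 : w.1 = v.1 + 1) (h2 : v.2 - 1 ≤ w.2) (h3 : w.2 ≤ v.2 + 1)
    (h0 : ¬ ((f 0).1 = w.1 ∧ (f 0).2 < w.2)) (hn : ¬ ((f n).1 = w.1 ∧ (f n).2 < w.2)) :
    SS v.1 v.2 f n = SS w.1 w.2 f n := by
  have hv' : ∀ i ≤ n, ¬ ((f i).1 = v.1 ∧ (f i).2 = v.2) := fun i hi h => hv i hi (Prod.ext h.1 h.2)
  have hw' : ∀ i ≤ n, ¬ ((f i).1 = w.1 ∧ (f i).2 = w.2) := fun i hi h => hw i hi (Prod.ext h.1 h.2)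
  have e1 : SS v.1 w.2 f n = SS w.1 w.2 f n := by
    rw [h1] at h0 hn ⊢
    refine SS_horiz hf (fun i hi => ?_) h0 hn
    have := hw' i hi.le
    have := hw' (i + 1) hi
    omega
  rw [← e1]
  have : w.2 = v.2 ∨ w.2 = v.2 + 1 ∨ v.2 = w.2 + 1 := by omega
  rcases this with h | h | h
  · rw [h]
  · rw [h, SS_vert hf]
    intro i hi
    have := hv' i hi.le
    have := hv' (i + 1) hi
    omega
  · rw [h, SS_vert hf]
    intro i hi
    have := hw' i hi.le
    have := hw' (i + 1) hi
    omega

lemma SS_star {f : ℕ → V} {n : ℕ} (hf : ∀ i < n, SqAdj (f i) (f (i + 1))) {v w : V}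
    (hvw : StarAdj v w)
    (hv : ∀ i ≤ n, f i ≠ v) (hw : ∀ i ≤ n, f i ≠ w)
    (h0 : ¬ ((f 0).1 = w.1 ∧ (f 0).2 < w.2)) (hn : ¬ ((f n).1 = w.1 ∧ (f n).2 < w.2))
    (h0' : ¬ ((f 0).1 = v.1 ∧ (f 0).2 < v.2)) (hn' : ¬ ((f n).1 = v.1 ∧ (f n).2 < v.2)) :
    SS v.1 v.2 f n = SS w.1 w.2 f n := by
  have hv' : ∀ i ≤ n, ¬ ((f i).1 = v.1 ∧ (f i).2 = v.2) := fun i hi h => hv i hi (Prod.ext h.1 h.2)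
  have hw' : ∀ i ≤ n, ¬ ((f i).1 = w.1 ∧ (f i).2 = w.2) := fun i hi h => hw i hi (Prod.ext h.1 h.2)
  rcases starAdj_cases hvw with ⟨h1, h2⟩ | ⟨h1, h2⟩ | ⟨h1, h2, h3⟩ | ⟨h1, h2, h3⟩
  · rw [h1, h2, SS_vert hf]
    intro i hi
    have := hv' i hi.le
    have := hv' (i + 1) hi
    omega
  · rw [h1, h2, SS_vert hf]
    intro i hi
    have := hw' i hi.le
    have := hw' (i + 1) hi
    omega
  · exact SS_star_right hf hv hw h1 h2 h3 h0 hn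
  · exact (SS_star_right hf hw hv h1 h2 h3 h0' hn').symm

lemma SS_star_walk {f g : ℕ → V} {n l : ℕ} (hf : ∀ i < n, SqAdj (f i) (f (i + 1)))
    (hg : ∀ j < l, StarAdj (g j) (g (j + 1))) (hd : ∀ i ≤ n, ∀ j ≤ l, f i ≠ g j)
    (h0 : ∀ j ≤ l, ¬ ((f 0).1 = (g j).1 ∧ (f 0).2 < (g j).2))
    (hn : ∀ j ≤ l, ¬ ((f n).1 = (g j).1 ∧ (f n).2 < (g j).2)) :
    SS (g 0).1 (g 0).2 f n = SS (g l).1 (g l).2 f n := by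
  have : ∀ j ≤ l, SS (g 0).1 (g 0).2 f n = SS (g j).1 (g j).2 f n := by
    intro j
    induction j with
    | zero => intro; rfl
    | succ k ih =>
      intro hk
      rw [ih (by omega)]
      exact SS_star hf (hg k hk) (fun i hi => hd i hi k (by omega)) (fun i hi => hd i hi _ hk)
        (h0 _ hk) (hn _ hk) (h0 k (by omega)) (hn k (by omega))
  exact this l le_rfl

/-- blocking: a horizontal square path in the strip `N ≤ y ≤ M` meets any star path. -/
lemma block_star {f g : ℕ → V} {n l : ℕ} {N M : ℤ} (hf : ∀ i < n, SqAdj (f i) (f (i + 1)))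
    (hg : ∀ j < l, StarAdj (g j) (g (j + 1)))
    (hfs : ∀ i ≤ n, N ≤ (f i).2 ∧ (f i).2 ≤ M) (hf0 : (f 0).1 ≤ -(M + 1)) (hfn : M + 1 ≤ (f n).1)
    (hgs : ∀ j ≤ l, -M ≤ (g j).1 ∧ (g j).1 ≤ M) (hg0 : (g 0).2 ≤ N) (hgl : M ≤ (g l).2) :
    ∃ i ≤ n, ∃ j ≤ l, f i = g j := by
  by_contra hcon
  push Not at hcon
  have e := SS_star_walk hf hg hcon
    (fun j hj => by have := hgs j hj; omega) (fun j hj => by have := hgs j hj; omega)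
  rw [SS_zero (fun i hi => by have := hfs i hi; omega)] at e
  have hl := hgs l le_rfl
  rw [← SS_vert (x := (g l).1) (y := (g l).2) hf] at e
  · rw [SS_total hf (fun i hi => by have := hfs i hi; omega) (by omega) (by omega)] at e
    exact absurd e (by decide)
  · intro i hi hc
    rcases hc with ⟨h1, h2, ⟨h3, -⟩ | ⟨-, h3⟩⟩
    · exact hcon i hi.le l le_rfl (Prod.ext h3 h1)
    · exact hcon (i + 1) hi l le_rfl (Prod.ext h3 h2)

/-- crossing in a vertical strip. -/
lemma strip_cross {f g : ℕ → V} {n l : ℕ} {a b : ℤ} (hab : a ≤ b)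
    (hf : ∀ i < n, SqAdj (f i) (f (i + 1)))
    (hg : ∀ j < l, SqAdj (g j) (g (j + 1)))
    (hfs : ∀ i ≤ n, a ≤ (f i).1 ∧ (f i).1 ≤ b) (hgs : ∀ i ≤ l, a ≤ (g i).1 ∧ (g i).1 ≤ b)
    (hf0 : (f 0).1 = a) (hfn : (f n).1 = b) (hg0 : (g 0).1 = a) (hgl : (g l).1 = b)
    (h0 : (f 0).2 ≤ (g 0).2) (hl : (g l).2 ≤ (f n).2) :
    ∃ i ≤ n, ∃ j ≤ l, f i = g j := by
  by_contra hcon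
  push Not at hcon
  have h0' : (f 0).2 < (g 0).2 := by
    rcases h0.lt_or_eq with h | h
    · exact h
    · exact absurd (Prod.ext (hf0.trans hg0.symm) h) (hcon 0 (by omega) 0 (by omega))
  set F : ℕ → V := fun i => if i = 0 then (a - 1, (f 0).2) else if i ≤ n + 1 then f (i - 1)
    else (b + 1, (f n).2) with hF
  have hF0 : F 0 = (a - 1, (f 0).2) := by simp [hF]
  have hFi : ∀ i ≤ n, F (i + 1) = f i := by intro i hi; simp [hF, hi]
  have hFn : F (n + 2) = (b + 1, (f n).2) := by simp [hF]
  have hFs : ∀ i < n + 2, SqAdj (F i) (F (i + 1)) := by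
    intro i hi
    rcases Nat.eq_zero_or_pos i with rfl | h
    · rw [hF0, hFi 0 (by omega)]
      unfold SqAdj; rw [hf0]; ring_nf
    · obtain ⟨k, rfl⟩ : ∃ k, i = k + 1 := ⟨i - 1, by omega⟩
      rcases Nat.lt_or_ge k n with hk | hk
      · rw [hFi k (by omega), hFi (k + 1) (by omega)]; exact hf k hk
      · have : k = n := by omega
        subst this
        rw [hFi k le_rfl, hFn]
        unfold SqAdj; rw [hfn]; ring_nf
  have hd : ∀ i ≤ n + 2, ∀ j ≤ l, F i ≠ g j := by
    intro i hi j hj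
    have hj' := hgs j hj
    rcases Nat.eq_zero_or_pos i with rfl | h
    · rw [hF0]; intro h; rw [← h] at hj'; simp at hj'
    · obtain ⟨k, rfl⟩ : ∃ k, i = k + 1 := ⟨i - 1, by omega⟩
      rcases Nat.lt_or_ge n k with hk | hk
      · have : k = n + 1 := by omega
        subst this
        rw [hFn]; intro h; rw [← h] at hj'; simp at hj'
      · rw [hFi k hk]; exact hcon k hk j hj
  have hstar : ∀ j < l, StarAdj (g j) (g (j + 1)) := fun j hj => Or.inl (hg j hj)
  have e := SS_star_walk hFs hstar hd
    (fun j hj => by have := hgs j hj; rw [hF0]; rintro ⟨h, -⟩; simp at h; omega)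
    (fun j hj => by have := hgs j hj; rw [hFn]; rintro ⟨h, -⟩; simp at h; omega)
  have e2 : SS (a - 1) (g 0).2 F (n + 2) = SS a (g 0).2 F (n + 2) := by
    have := SS_horiz (x := a - 1) (y := (g 0).2) hFs ?_ ?_ ?_
    · simpa using this
    · intro i hi hc
      rw [sub_add_cancel] at hc
      rcases hc with ⟨h1, h2, ⟨h3, -⟩ | ⟨-, h3⟩⟩
      · exact hd i hi.le 0 (by omega) (Prod.ext (h1.trans hg0.symm) h3)
      · exact hd (i + 1) hi 0 (by omega) (Prod.ext (h2.trans hg0.symm) h3)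
    · rw [hF0]; rintro ⟨h, -⟩; simp at h
    · rw [hFn]; rintro ⟨h, -⟩; simp at h; omega
  have e3 : SS (a - 1) (g 0).2 F (n + 2) = 1 := by
    unfold SS
    rw [Finset.sum_range_succ', Finset.sum_eq_zero, zero_add]
    · rw [hF0, hFi 0 (by omega)]
      unfold cr
      rw [if_pos]
      exact ⟨Or.inl ⟨rfl, by rw [hf0]; ring⟩, h0'⟩
    · intro i hi
      have hi' := Finset.mem_range.1 hi
      unfold cr
      rw [if_neg]
      rintro ⟨h1, -⟩
      rcases Nat.lt_or_ge i n with hk | hk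
      · rw [hFi i (by omega), hFi (i + 1) (by omega)] at h1
        have := hfs i (by omega)
        have := hfs (i + 1) (by omega)
        omega
      · have : i = n := by omega
        subst this
        rw [hFi i le_rfl, hFn] at h1
        have := hfs i le_rfl
        simp at h1
        omega
  have e4 : SS b (g l).2 F (n + 2) = 0 := by
    unfold SS
    refine Finset.sum_eq_zero fun i hi => ?_
    have hi' := Finset.mem_range.1 hi
    unfold cr
    rw [if_neg]
    rintro ⟨h1, h2⟩
    rcases Nat.eq_zero_or_pos i with rfl | h
    · rw [hF0, hFi 0 (by omega)] at h1
      simp at h1; omega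
    · obtain ⟨k, rfl⟩ : ∃ k, i = k + 1 := ⟨i - 1, by omega⟩
      rcases Nat.lt_or_ge k n with hk | hk
      · rw [hFi k (by omega), hFi (k + 1) (by omega)] at h1
        have := hfs k (by omega)
        have := hfs (k + 1) (by omega)
        omega
      · have : k = n := by omega
        subst this
        rw [hFi k le_rfl] at h2
        omega
  rw [hg0, hgl, ← e2, e3, e4] at e
  exact absurd e (by decide)

/-- index of the edge between two adjacent vertices. -/
def edgeOf (u v : V) : V × Bool := ((min u.1 v.1, min u.2 v.2), decide (u.1 = v.1))

/-- index of the primal edge crossing a dual edge. -/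
def dualE (e : V × Bool) : V × Bool :=
  if e.2 then ((e.1.1, e.1.2 + 1), false) else ((e.1.1 + 1, e.1.2), true)

lemma edgeOf_comm (u v : V) : edgeOf u v = edgeOf v u := by
  simp only [edgeOf, min_comm, eq_comm]

lemma edgeOf_right (x y : ℤ) : edgeOf (x, y) (x + 1, y) = ((x, y), false) := by
  simp [edgeOf]

lemma edgeOf_up (x y : ℤ) : edgeOf (x, y) (x, y + 1) = ((x, y), true) := by
  simp [edgeOf]

lemma SS_dual_aux {f : ℕ → V} {n : ℕ} (hf : ∀ i < n, SqAdj (f i) (f (i + 1))) {x y : ℤ}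
    (hc : ∀ i < n, edgeOf (f i) (f (i + 1)) ≠ ((x + 1, y), true))
    (h0 : (f 0).1 < x) (hn : x + 2 ≤ (f n).1) :
    SS x (y + 1) f n = SS (x + 1) (y + 1) f n := by
  refine SS_horiz hf (fun i hi hcc => hc i hi ?_) (by omega) (by omega)
  simp only [edgeOf, Prod.mk.injEq, decide_eq_true_eq]
  omega

lemma SS_dual_aux2 {f : ℕ → V} {n : ℕ} (hf : ∀ i < n, SqAdj (f i) (f (i + 1))) {x y : ℤ}
    (hc : ∀ i < n, edgeOf (f i) (f (i + 1)) ≠ ((x, y + 1), false)) :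
    SS x (y + 1) f n = SS x (y + 1 + 1) f n := by
  refine (SS_vert hf (fun i hi hcc => hc i hi ?_)).symm
  simp only [edgeOf, Prod.mk.injEq, decide_eq_false_iff_not]
  omega

lemma SS_dual {f : ℕ → V} {n : ℕ} (hf : ∀ i < n, SqAdj (f i) (f (i + 1))) {v w : V}
    (hvw : SqAdj v w)
    (hc : ∀ i < n, edgeOf (f i) (f (i + 1)) ≠ dualE (edgeOf v w))
    (h0 : (f 0).1 < v.1 ∧ (f 0).1 < w.1) (hn : v.1 + 2 ≤ (f n).1 ∧ w.1 + 2 ≤ (f n).1) :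
    SS v.1 (v.2 + 1) f n = SS w.1 (w.2 + 1) f n := by
  obtain ⟨x, y⟩ := v
  obtain ⟨x', y'⟩ := w
  rcases sqAdj_cases hvw with ⟨h1, h3⟩ | ⟨h1, h3⟩ | ⟨h1, h3⟩ | ⟨h1, h3⟩ <;> simp only at h1 h3
  · subst h1 h3
    rw [edgeOf_right] at hc
    exact SS_dual_aux hf hc h0.1 hn.1
  · obtain rfl : x = x' + 1 := by omega
    subst h3
    rw [edgeOf_comm, edgeOf_right] at hc
    exact (SS_dual_aux hf hc h0.2 hn.2).symm
  · subst h1 h3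
    rw [edgeOf_up] at hc
    exact SS_dual_aux2 hf hc
  · obtain rfl : y = y' + 1 := by omega
    subst h1
    rw [edgeOf_comm, edgeOf_up] at hc
    exact (SS_dual_aux2 hf hc).symm

/-- blocking, dual version. -/
lemma block_dual {f g : ℕ → V} {n l : ℕ} {N M : ℤ} (hf : ∀ i < n, SqAdj (f i) (f (i + 1)))
    (hg : ∀ j < l, SqAdj (g j) (g (j + 1)))
    (hfs : ∀ i ≤ n, N ≤ (f i).2 ∧ (f i).2 ≤ M) (hf0 : (f 0).1 ≤ -(M + 2)) (hfn : M + 2 ≤ (f n).1)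
    (hgs : ∀ j ≤ l, -(M + 1) ≤ (g j).1 ∧ (g j).1 ≤ M) (hg0 : (g 0).2 ≤ N - 1) (hgl : M ≤ (g l).2) :
    ∃ i < n, ∃ j < l, edgeOf (f i) (f (i + 1)) = dualE (edgeOf (g j) (g (j + 1))) := by
  by_contra hcon
  push Not at hcon
  have : ∀ j ≤ l, SS (g 0).1 ((g 0).2 + 1) f n = SS (g j).1 ((g j).2 + 1) f n := by
    intro j
    induction j with
    | zero => intro; rfl
    | succ k ih =>
      intro hk
      rw [ih (by omega)]
      have h1 := hgs k (by omega)
      have h2 := hgs (k + 1) hk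
      exact SS_dual hf (hg k hk) (fun i hi => hcon i hi k hk) (by omega) (by omega)
  have e := this l le_rfl
  have hl := hgs l le_rfl
  rw [SS_zero (fun i hi => by have := hfs i hi; omega),
    SS_total hf (fun i hi => by have := hfs i hi; omega) (by omega) (by omega)] at e
  exact absurd e (by decide)

end DaC

namespace DaC

/-! ### An abstract RSW-type argument -/

/-- symmetric sub-relations of the square lattice adjacency -/
def Good (R : V → V → Prop) : Prop := ∀ a b, R a b → SqAdj a b ∧ R b a

/-- increasing events with finite witnesses -/
def Inc (Q : (V → V → Prop) → Prop) : Prop :=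
  (∀ R R' : V → V → Prop, (∀ a b, R a b → R' a b) → Q R → Q R') ∧
  (∀ R, Q R → ∃ F : Finset V, Q (fun a b => R a b ∧ a ∈ F ∧ b ∈ F))

/-- lattice automorphisms -/
def IsAut (σ : V ≃ V) : Prop := ∀ a b, SqAdj (σ a) (σ b) ↔ SqAdj a b

/-- properties of the law of a random sub-relation needed for the argument -/
structure PercLaw (pr : ((V → V → Prop) → Prop) → ℝ) : Prop where
  nonneg : ∀ Q, 0 ≤ pr Q
  mono : ∀ Q Q' : (V → V → Prop) → Prop, (∀ R, Good R → Q R → Q' R) → pr Q ≤ pr Q'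
  union : ∀ Q Q', pr (fun R => Q R ∨ Q' R) ≤ pr Q + pr Q'
  fkg : ∀ Q Q', Inc Q → Inc Q' → pr Q * pr Q' ≤ pr (fun R => Q R ∧ Q' R)
  inv : ∀ σ : V ≃ V, IsAut σ → ∀ Q, Inc Q → pr (fun R => Q (fun a b => R (σ a) (σ b))) = pr Q

/-- connection inside `S` -/
def cn (S : Set V) (R : V → V → Prop) (u v : V) : Prop :=
  Relation.ReflTransGen (fun a b => R a b ∧ a ∈ S ∧ b ∈ S) u v

/-- connection event -/
def ct (S : Set V) (u : V) (A : Set V) (R : V → V → Prop) : Prop := ∃ v ∈ A, cn S R u v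

lemma cn_symm {S : Set V} {R : V → V → Prop} (hR : Good R) {u v : V} (h : cn S R u v) :
    cn S R v u := by
  induction h with
  | refl => exact .refl
  | tail _ hab ih => exact Relation.ReflTransGen.head ⟨(hR _ _ hab.1).2, hab.2.2, hab.2.1⟩ ih

lemma cn_mono {S T : Set V} {R : V → V → Prop} (hST : S ⊆ T) {u v : V} (h : cn S R u v) :
    cn T R u v :=
  Relation.ReflTransGen.mono (fun _ _ hab => ⟨hab.1, hST hab.2.1, hST hab.2.2⟩) _ _ h

lemma cn_fin {S : Set V} {R : V → V → Prop} {u v : V} (h : cn S R u v) :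
    ∃ F : Finset V, cn S (fun a b => R a b ∧ a ∈ F ∧ b ∈ F) u v := by
  classical
  induction h with
  | refl => exact ⟨∅, .refl⟩
  | @tail b c _ hbc ih =>
    obtain ⟨F, hF⟩ := ih
    refine ⟨F ∪ {b, c}, Relation.ReflTransGen.tail (b := b) (Relation.ReflTransGen.mono ?_ _ _ hF) ?_⟩
    · rintro x y ⟨⟨h1, h2, h3⟩, h4⟩
      exact ⟨⟨h1, by simp [h2], by simp [h3]⟩, h4⟩
    · exact ⟨⟨hbc.1, by simp, by simp⟩, hbc.2⟩

lemma cn_monoR {S : Set V} {R R' : V → V → Prop} (h : ∀ a b, R a b → R' a b) {u v : V}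
    (hc : cn S R u v) : cn S R' u v :=
  Relation.ReflTransGen.mono (fun _ _ hab => ⟨h _ _ hab.1, hab.2⟩) _ _ hc

lemma inc_cn (S : Set V) (u v : V) : Inc (fun R => cn S R u v) :=
  ⟨fun _ _ h hc => cn_monoR h hc, fun _ h => cn_fin h⟩

lemma inc_ex {ι : Sort*} {Q : ι → (V → V → Prop) → Prop} (h : ∀ i, Inc (Q i)) :
    Inc (fun R => ∃ i, Q i R) := by
  refine ⟨fun R R' hR ⟨i, hi⟩ => ⟨i, (h i).1 R R' hR hi⟩, fun R ⟨i, hi⟩ => ?_⟩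
  obtain ⟨F, hF⟩ := (h i).2 R hi
  exact ⟨F, i, hF⟩

lemma inc_and {Q Q' : (V → V → Prop) → Prop} (h : Inc Q) (h' : Inc Q') :
    Inc (fun R => Q R ∧ Q' R) := by
  classical
  refine ⟨fun R R' hR hh => ⟨h.1 R R' hR hh.1, h'.1 R R' hR hh.2⟩, fun R hh => ?_⟩
  obtain ⟨F, hF⟩ := h.2 R hh.1
  obtain ⟨F', hF'⟩ := h'.2 R hh.2
  refine ⟨F ∪ F', h.1 _ _ ?_ hF, h'.1 _ _ ?_ hF'⟩
  · rintro a b ⟨h1, h2, h3⟩; exact ⟨h1, by simp [h2], by simp [h3]⟩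
  · rintro a b ⟨h1, h2, h3⟩; exact ⟨h1, by simp [h2], by simp [h3]⟩

lemma inc_const (P : Prop) : Inc (fun _ => P) := ⟨fun _ _ _ h => h, fun _ h => ⟨∅, h⟩⟩

lemma inc_ct (S : Set V) (u : V) (A : Set V) : Inc (ct S u A) := by
  unfold ct
  exact inc_ex fun v => inc_and (inc_const _) (inc_cn S u v)

lemma inc_comp {Q : (V → V → Prop) → Prop} (h : Inc Q) (σ : V ≃ V) :
    Inc (fun R => Q (fun a b => R (σ a) (σ b))) := by
  classical
  refine ⟨fun R R' hR hh => h.1 _ _ (fun a b => hR _ _) hh, fun R hh => ?_⟩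
  obtain ⟨F, hF⟩ := h.2 _ hh
  refine ⟨F.image σ, h.1 _ _ ?_ hF⟩
  rintro a b ⟨h1, h2, h3⟩
  exact ⟨h1, Finset.mem_image_of_mem _ h2, Finset.mem_image_of_mem _ h3⟩

lemma cn_comp {S : Set V} {R : V → V → Prop} {u v : V} (σ : V ≃ V) :
    cn (σ ⁻¹' S) (fun a b => R (σ a) (σ b)) u v ↔ cn S R (σ u) (σ v) := by
  constructor
  · intro h
    exact Relation.ReflTransGen.lift σ (fun a b hab => hab) _ _ h
  · intro h
    have := Relation.ReflTransGen.lift (p := fun a b => R (σ a) (σ b) ∧ a ∈ σ ⁻¹' S ∧ b ∈ σ ⁻¹' S)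
      σ.symm (fun a b hab => by simpa [Function.onFun] using hab) _ _ h
    simp only [Function.onFun, Equiv.symm_apply_apply] at this
    exact this

lemma ct_comp {S : Set V} {R : V → V → Prop} {u : V} {A : Set V} (σ : V ≃ V) :
    ct (σ ⁻¹' S) u (σ ⁻¹' A) (fun a b => R (σ a) (σ b)) ↔ ct S (σ u) A R := by
  constructor
  · rintro ⟨v, hv, h⟩
    exact ⟨σ v, hv, (cn_comp σ).1 h⟩
  · rintro ⟨v, hv, h⟩
    refine ⟨σ.symm v, by simpa using hv, (cn_comp σ).2 (by simpa using h)⟩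

/-- translation -/
def trE (z : V) : V ≃ V := Equiv.addRight z
/-- reflection of the first coordinate about `k / 2` -/
def rfX (k : ℤ) : V ≃ V := ⟨fun v => (k - v.1, v.2), fun v => (k - v.1, v.2),
  fun v => by simp, fun v => by simp⟩
/-- reflection of the second coordinate about `k / 2` -/
def rfY (k : ℤ) : V ≃ V := ⟨fun v => (v.1, k - v.2), fun v => (v.1, k - v.2),
  fun v => by simp, fun v => by simp⟩
/-- swapping coordinates -/
def swE : V ≃ V := Equiv.prodComm ℤ ℤ

@[simp] lemma trE_apply (z v : V) : trE z v = (v.1 + z.1, v.2 + z.2) := rfl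
@[simp] lemma rfX_apply (k : ℤ) (v : V) : rfX k v = (k - v.1, v.2) := rfl
@[simp] lemma rfY_apply (k : ℤ) (v : V) : rfY k v = (v.1, k - v.2) := rfl
@[simp] lemma swE_apply (v : V) : swE v = (v.2, v.1) := rfl

lemma aut_tr (z : V) : IsAut (trE z) := by intro a b; simp [SqAdj]
lemma aut_rfX (k : ℤ) : IsAut (rfX k) := by
  intro a b; simp only [SqAdj, rfX_apply]; ring_nf
lemma aut_rfY (k : ℤ) : IsAut (rfY k) := by
  intro a b; simp only [SqAdj, rfY_apply]; ring_nf
lemma aut_sw : IsAut swE := by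
  intro a b; simp only [SqAdj, swE_apply]; rw [add_comm]

section law
variable {pr : ((V → V → Prop) → Prop) → ℝ}

lemma PercLaw.inv_ct (H : PercLaw pr) {σ : V ≃ V} (hσ : IsAut σ) (S : Set V) (u : V) (A : Set V) :
    pr (ct S (σ u) A) = pr (ct (σ ⁻¹' S) u (σ ⁻¹' A)) := by
  rw [← H.inv σ hσ _ (inc_ct (σ ⁻¹' S) u (σ ⁻¹' A))]
  congr 1
  funext R
  exact propext (ct_comp σ).symm

/-- convenient form of invariance -/
lemma PercLaw.ct_le (H : PercLaw pr) {σ : V ≃ V} (hσ : IsAut σ) {S S' : Set V} {u u' : V}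
    {A A' : Set V} (hu : σ u = u') (hS : ∀ v, v ∈ S → σ v ∈ S') (hA : ∀ v, v ∈ A → σ v ∈ A') :
    pr (ct S u A) ≤ pr (ct S' u' A') := by
  rw [← hu, H.inv_ct hσ]
  apply H.mono
  rintro R - ⟨v, hv, h⟩
  exact ⟨v, hA v hv, cn_mono hS h⟩

/-- box -/
def bx (m : ℤ) (z : V) : Set V :=
  {v | z.1 - m ≤ v.1 ∧ v.1 ≤ z.1 + m ∧ z.2 - m ≤ v.2 ∧ v.2 ≤ z.2 + m}

/-- boundary of the box -/
def bd (m : ℤ) : Set V := {v | v.1 = m ∨ v.1 = -m ∨ v.2 = m ∨ v.2 = -m}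

/-- vertical segment -/
def sg (x a b : ℤ) : Set V := {v | v.1 = x ∧ a ≤ v.2 ∧ v.2 ≤ b}

lemma PercLaw.oct (H : PercLaw pr) {m : ℤ} :
    pr (ct (bx m (0, 0)) (0, 0) (bd m ∩ bx m (0, 0))) ≤
      8 * pr (ct (bx m (0, 0)) (0, 0) (sg m 0 m)) := by
  set B := bx m (0, 0)
  set A := sg m 0 m
  have key : ∀ σ : V ≃ V, IsAut σ → σ (0, 0) = (0, 0) → (∀ v, v ∈ B → σ v ∈ B) →
      pr (ct B (0, 0) (σ ⁻¹' A)) ≤ pr (ct B (0, 0) A) := fun σ h1 h2 h3 =>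
    H.ct_le h1 h2 h3 (fun v hv => hv)
  have hb : ∀ v, v ∈ B → -m ≤ v.1 ∧ v.1 ≤ m ∧ -m ≤ v.2 ∧ v.2 ≤ m := by
    intro v hv; simpa [B, bx] using hv
  have hb' : ∀ v : V, -m ≤ v.1 ∧ v.1 ≤ m ∧ -m ≤ v.2 ∧ v.2 ≤ m → v ∈ B := by
    intro v hv; simpa [B, bx] using hv
  have aut_tr : ∀ σ τ : V ≃ V, IsAut σ → IsAut τ → IsAut (σ.trans τ) := by
    intro σ τ h1 h2 a b
    simp only [Equiv.trans_apply]
    rw [h2, h1]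
  have k1 := key (Equiv.refl V) (by intro a b; rfl) rfl (fun v h => h)
  have k2 := key (rfX 0) (aut_rfX 0) rfl (fun v h => hb' _ (by have := hb v h; simp; omega))
  have k3 := key (rfY 0) (aut_rfY 0) rfl (fun v h => hb' _ (by have := hb v h; simp; omega))
  have k4 := key ((rfX 0).trans (rfY 0)) (aut_tr _ _ (aut_rfX 0) (aut_rfY 0)) rfl
    (fun v h => hb' _ (by have := hb v h; simp; omega))
  have k5 := key (swE.trans (Equiv.refl V)) (aut_tr _ _ aut_sw (by intro a b; rfl)) rfl
    (fun v h => hb' _ (by have := hb v h; simp; omega))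
  have k6 := key (swE.trans (rfX 0)) (aut_tr _ _ aut_sw (aut_rfX 0)) rfl
    (fun v h => hb' _ (by have := hb v h; simp; omega))
  have k7 := key (swE.trans (rfY 0)) (aut_tr _ _ aut_sw (aut_rfY 0)) rfl
    (fun v h => hb' _ (by have := hb v h; simp; omega))
  have k8 := key (swE.trans ((rfX 0).trans (rfY 0)))
    (aut_tr _ _ aut_sw (aut_tr _ _ (aut_rfX 0) (aut_rfY 0))) rfl
    (fun v h => hb' _ (by have := hb v h; simp; omega))
  have hsplit : ∀ A1 A2 : Set V, pr (ct B (0, 0) (A1 ∪ A2)) ≤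
      pr (ct B (0, 0) A1) + pr (ct B (0, 0) A2) := by
    intro A1 A2
    refine le_trans (H.mono _ _ ?_) (H.union _ _)
    rintro R - ⟨v, hv | hv, h⟩
    · exact Or.inl ⟨v, hv, h⟩
    · exact Or.inr ⟨v, hv, h⟩
  have hcover : pr (ct B (0, 0) (bd m ∩ B)) ≤ pr (ct B (0, 0)
      ((((Equiv.refl V) ⁻¹' A ∪ (rfX 0) ⁻¹' A) ∪ ((rfY 0) ⁻¹' A ∪ ((rfX 0).trans (rfY 0)) ⁻¹' A)) ∪
      (((swE.trans (Equiv.refl V)) ⁻¹' A ∪ (swE.trans (rfX 0)) ⁻¹' A) ∪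
        ((swE.trans (rfY 0)) ⁻¹' A ∪ (swE.trans ((rfX 0).trans (rfY 0))) ⁻¹' A)))) := by
    apply H.mono
    rintro R - ⟨v, ⟨hv, hv'⟩, h⟩
    refine ⟨v, ?_, h⟩
    have h2 := hb v hv'
    simp only [bd, Set.mem_ofPred_eq] at hv
    simp only [Set.mem_union, Set.mem_preimage, A, sg, Set.mem_ofPred_eq, Equiv.refl_apply,
      Equiv.trans_apply, rfX_apply, rfY_apply, swE_apply]
    omega
  have s1 := hsplit (((Equiv.refl V) ⁻¹' A ∪ (rfX 0) ⁻¹' A) ∪ ((rfY 0) ⁻¹' A ∪ ((rfX 0).trans (rfY 0)) ⁻¹' A)) (((swE.trans (Equiv.refl V)) ⁻¹' A ∪ (swE.trans (rfX 0)) ⁻¹' A) ∪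
        ((swE.trans (rfY 0)) ⁻¹' A ∪ (swE.trans ((rfX 0).trans (rfY 0))) ⁻¹' A))
  have s2 := hsplit ((Equiv.refl V) ⁻¹' A ∪ (rfX 0) ⁻¹' A) ((rfY 0) ⁻¹' A ∪ ((rfX 0).trans (rfY 0)) ⁻¹' A)
  have s3 := hsplit ((swE.trans (Equiv.refl V)) ⁻¹' A ∪ (swE.trans (rfX 0)) ⁻¹' A)
        ((swE.trans (rfY 0)) ⁻¹' A ∪ (swE.trans ((rfX 0).trans (rfY 0))) ⁻¹' A)
  have s4 := hsplit ((Equiv.refl V) ⁻¹' A) ((rfX 0) ⁻¹' A)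
  have s5 := hsplit ((rfY 0) ⁻¹' A) (((rfX 0).trans (rfY 0)) ⁻¹' A)
  have s6 := hsplit ((swE.trans (Equiv.refl V)) ⁻¹' A) ((swE.trans (rfX 0)) ⁻¹' A)
  have s7 := hsplit ((swE.trans (rfY 0)) ⁻¹' A) ((swE.trans ((rfX 0).trans (rfY 0))) ⁻¹' A)
  linarith

lemma PercLaw.alpha (H : PercLaw pr) {m : ℤ} (hm : 1 ≤ m) {c : ℝ} (hc : 0 < c)
    (h : 2 * c ≤ pr (ct (bx m (0, 0)) (0, 0) (sg m 0 m))) :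
    ∃ a : ℤ, 0 ≤ a ∧ a ≤ m ∧ c ≤ pr (ct (bx m (0, 0)) (0, 0) (sg m a m)) ∧
      c ≤ pr (ct (bx m (0, 0)) (0, 0) (sg m 0 a)) := by
  obtain ⟨a, ⟨h0, h1, h2⟩, hmax⟩ := Int.exists_greatest_of_bdd
    (P := fun a => 0 ≤ a ∧ a ≤ m ∧ c ≤ pr (ct (bx m (0, 0)) (0, 0) (sg m a m)))
    ⟨m, fun z hz => hz.2.1⟩ ⟨0, le_rfl, by omega, by linarith⟩
  refine ⟨a, h0, h1, h2, ?_⟩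
  rcases h1.lt_or_eq with h3 | h3
  · have h4 : pr (ct (bx m (0, 0)) (0, 0) (sg m (a + 1) m)) < c := by
      by_contra hcon
      push Not at hcon
      have := hmax (a + 1) ⟨by omega, by omega, hcon⟩
      omega
    have h5 : pr (ct (bx m (0, 0)) (0, 0) (sg m 0 m)) ≤
        pr (ct (bx m (0, 0)) (0, 0) (sg m 0 a)) + pr (ct (bx m (0, 0)) (0, 0) (sg m (a + 1) m)) := by
      refine le_trans (H.mono _ _ ?_) (H.union _ _)
      rintro R - ⟨v, hv, h⟩
      simp only [sg, Set.mem_ofPred_eq] at hv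
      rcases le_or_gt v.2 a with h6 | h6
      · exact Or.inl ⟨v, ⟨hv.1, hv.2.1, h6⟩, h⟩
      · exact Or.inr ⟨v, ⟨hv.1, by omega, hv.2.2⟩, h⟩
    linarith
  · rw [h3]; linarith

/-- all four corner segments are reached -/
def XX (m a : ℤ) (z : V) (R : V → V → Prop) : Prop :=
  (ct (bx m z) z (sg (z.1 + m) (z.2 + a) (z.2 + m)) R ∧
   ct (bx m z) z (sg (z.1 + m) (z.2 - m) (z.2 - a)) R) ∧
  (ct (bx m z) z (sg (z.1 - m) (z.2 + a) (z.2 + m)) R ∧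
   ct (bx m z) z (sg (z.1 - m) (z.2 - m) (z.2 - a)) R)

lemma inc_XX (m a : ℤ) (z : V) : Inc (XX m a z) :=
  inc_and (inc_and (inc_ct _ _ _) (inc_ct _ _ _)) (inc_and (inc_ct _ _ _) (inc_ct _ _ _))

lemma PercLaw.fkg' (H : PercLaw pr) {Q Q' : (V → V → Prop) → Prop} (h : Inc Q) (h' : Inc Q')
    {c c' : ℝ} (hc' : 0 ≤ c') (h1 : c ≤ pr Q) (h2 : c' ≤ pr Q') :
    c * c' ≤ pr (fun R => Q R ∧ Q' R) :=
  le_trans (mul_le_mul h1 h2 hc' (H.nonneg _)) (H.fkg _ _ h h')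

lemma PercLaw.XX_ge (H : PercLaw pr) {m a : ℤ} {c : ℝ} (hc : 0 < c)
    (h : c ≤ pr (ct (bx m (0, 0)) (0, 0) (sg m a m))) (z : V) :
    (c * c) * (c * c) ≤ pr (XX m a z) := by
  refine H.fkg' (inc_and (inc_ct _ _ _) (inc_ct _ _ _)) (inc_and (inc_ct _ _ _) (inc_ct _ _ _))
    (by positivity) (H.fkg' (inc_ct _ _ _) (inc_ct _ _ _) hc.le ?_ ?_)
    (H.fkg' (inc_ct _ _ _) (inc_ct _ _ _) hc.le ?_ ?_)
  · refine h.trans (H.ct_le (aut_tr z) (by simp) ?_ ?_) <;> intro v hv <;>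
      simp [bx, sg] at hv ⊢ <;> omega
  · refine h.trans (H.ct_le (σ := (rfY 0).trans (trE z)) ?_ (by simp) ?_ ?_)
    · intro a b; simp only [Equiv.trans_apply]; rw [aut_tr, aut_rfY]
    all_goals intro v hv; simp [bx, sg] at hv ⊢; omega
  · refine h.trans (H.ct_le (σ := (rfX 0).trans (trE z)) ?_ (by simp) ?_ ?_)
    · intro a b; simp only [Equiv.trans_apply]; rw [aut_tr, aut_rfX]
    all_goals intro v hv; simp [bx, sg] at hv ⊢; omega
  · refine h.trans (H.ct_le (σ := (rfX 0).trans ((rfY 0).trans (trE z))) ?_ (by simp) ?_ ?_)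
    · intro a b; simp only [Equiv.trans_apply]; rw [aut_tr, aut_rfY, aut_rfX]
    all_goals intro v hv; simp [bx, sg] at hv ⊢; omega

end law

lemma cn_seq_mem {S : Set V} {R : V → V → Prop} {f : ℕ → V} {n : ℕ}
    (hs : ∀ i < n, R (f i) (f (i + 1)) ∧ f i ∈ S ∧ f (i + 1) ∈ S) (hn : 0 < n) :
    ∀ i ≤ n, f i ∈ S := by
  intro i hi
  rcases hi.lt_or_eq with h | h
  · exact (hs i h).2.1
  · have := (hs (n - 1) (by omega)).2.2
    rwa [Nat.sub_add_cancel hn, ← h] at this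

/-- two crossings of a strip in opposite order are connected -/
lemma cn_cross {R : V → V → Prop} (hR : Good R) {S : Set V} {a b : ℤ} (hab : a ≤ b)
    {p q p' q' : V}
    (h : cn (S ∩ {v | a ≤ v.1 ∧ v.1 ≤ b}) R p q) (h' : cn (S ∩ {v | a ≤ v.1 ∧ v.1 ≤ b}) R p' q')
    (hp : p.1 = a) (hq : q.1 = b) (hp' : p'.1 = a) (hq' : q'.1 = b)
    (h1 : p.2 ≤ p'.2) (h2 : q'.2 ≤ q.2) : cn S R p p' := by
  obtain ⟨n, f, f0, fn, hf⟩ := rtg_seq h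
  obtain ⟨l, g, g0, gl, hg⟩ := rtg_seq h'
  have hfs : ∀ i ≤ n, a ≤ (f i).1 ∧ (f i).1 ≤ b := by
    intro i hi
    rcases Nat.eq_zero_or_pos n with h0 | h0
    · have : i = 0 := by omega
      rw [this, f0, hp]; exact ⟨le_rfl, hab⟩
    · exact (cn_seq_mem hf h0 i hi).2
  have hgs : ∀ i ≤ l, a ≤ (g i).1 ∧ (g i).1 ≤ b := by
    intro i hi
    rcases Nat.eq_zero_or_pos l with h0 | h0
    · have : i = 0 := by omega
      rw [this, g0, hp']; exact ⟨le_rfl, hab⟩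
    · exact (cn_seq_mem hg h0 i hi).2
  obtain ⟨i, hi, j, hj, hij⟩ := strip_cross hab (fun i hi => (hR _ _ (hf i hi).1).1)
    (fun i hi => (hR _ _ (hg i hi).1).1) hfs hgs (by rw [f0, hp]) (by rw [fn, hq]) (by rw [g0, hp'])
    (by rw [gl, hq']) (by rw [f0, g0]; exact h1) (by rw [fn, gl]; exact h2)
  have e1 : cn S R (f 0) (f i) := cn_mono Set.inter_subset_left (seq_rtg hf (Nat.zero_le i) hi)
  have e2 : cn S R (g 0) (g j) := cn_mono Set.inter_subset_left (seq_rtg hg (Nat.zero_le j) hj)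
  rw [f0] at e1; rw [g0, ← hij] at e2
  exact e1.trans (cn_symm hR e2)

lemma V_det {R : V → V → Prop} (hR : Good R) {m a : ℤ} (ha : 0 ≤ a) (ham : a ≤ m)
    (h : XX m a (0, 0) R) (h' : XX m a (0, 2 * a) R) :
    ct {v | -m ≤ v.1 ∧ v.1 ≤ m} (0, 0) {(0, 2 * a)} R := by
  obtain ⟨⟨⟨p, hp, h1⟩, -⟩, -, ⟨q, hq, h2⟩⟩ := h
  obtain ⟨⟨-, ⟨p', hp', h3⟩⟩, ⟨q', hq', h4⟩, -⟩ := h'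
  simp only [sg, Set.mem_ofPred_eq] at hp hq hp' hq'
  set T : Set V := {v | -m ≤ v.1 ∧ v.1 ≤ m} with hT
  have hS : T ∩ {v | -m ≤ v.1 ∧ v.1 ≤ m} = T := Set.inter_self _
  have b1 : bx m (0, 0) ⊆ T := by intro v hv; simp [bx] at hv; exact ⟨hv.1, hv.2.1⟩
  have b2 : bx m (0, 2 * a) ⊆ T := by intro v hv; simp [bx] at hv; exact ⟨hv.1, hv.2.1⟩
  have := cn_cross hR (S := T) (a := -m) (b := m) (by omega) (p := q) (q := p) (p' := q') (q' := p')
    (by rw [hS]; exact (cn_symm hR (cn_mono b1 h2)).trans (cn_mono b1 h1))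
    (by rw [hS]; exact (cn_symm hR (cn_mono b2 h4)).trans (cn_mono b2 h3))
    (by omega) (by omega) (by omega) (by omega) (by omega) (by omega)
  exact ⟨_, rfl, ((cn_mono b1 h2).trans this).trans (cn_symm hR (cn_mono b2 h4))⟩

lemma H_det {R : V → V → Prop} (hR : Good R) {m s a a' : ℤ} (hs : 1 ≤ s) (hm1 : 2 * s ≤ m)
    (hm2 : m ≤ 2 * s + 1) (ha : 0 ≤ a) (has : a ≤ s) (haa : a' ≤ 2 * a) (ham : a' ≤ m)
    (h : XX s a (m - s, a) R) (h' : ct (bx m (0, 0)) (0, 0) (sg m 0 a') R) :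
    cn {v | -m ≤ v.2 ∧ v.2 ≤ m} R (0, 0) (m - s, a) := by
  obtain ⟨⟨⟨ur, hur, h1⟩, ⟨lr, hlr, h2⟩⟩, ⟨ul, hul, h3⟩, -⟩ := h
  obtain ⟨y, hy, h5⟩ := h'
  simp only [sg, Set.mem_ofPred_eq] at hur hlr hul hy
  set T : Set V := {v | -m ≤ v.2 ∧ v.2 ≤ m} with hT
  have b1 : bx s (m - s, a) ⊆ T ∩ {v | m - 2 * s ≤ v.1 ∧ v.1 ≤ m} := by
    intro v hv; simp [bx] at hv; simp [hT]; omega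
  have b2 : bx m (0, 0) ⊆ T := by intro v hv; simp [bx] at hv; simp [hT]; omega
  have b3 : T ∩ {v : V | m - 2 * s ≤ v.1 ∧ v.1 ≤ m} ⊆ T := Set.inter_subset_left
  obtain ⟨n, f, f0, fn, hf⟩ := rtg_seq h5
  have hn : 0 < n := by
    rcases Nat.eq_zero_or_pos n with h0 | h0
    · rw [h0, f0] at fn; rw [← fn] at hy; simp at hy; omega
    · exact h0
  have hfB := cn_seq_mem hf hn
  classical
  have hex : ∃ i, i ≤ n ∧ (f i).1 ≤ m - 2 * s := ⟨0, by omega, by rw [f0]; simp; omega⟩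
  set i0 := Nat.findGreatest (fun i => (f i).1 ≤ m - 2 * s) n with hi0
  have hP : (f i0).1 ≤ m - 2 * s :=
    Nat.findGreatest_spec (P := fun i => (f i).1 ≤ m - 2 * s) (m := 0) (by omega)
      (by rw [f0]; simp; omega)
  have hle : i0 ≤ n := Nat.findGreatest_le n
  have hgt : ∀ k, i0 < k → k ≤ n → m - 2 * s < (f k).1 := by
    intro k h1 h2
    have := Nat.findGreatest_is_greatest (P := fun i => (f i).1 ≤ m - 2 * s) h1 h2
    omega
  have hlt : i0 < n := by
    rcases hle.lt_or_eq with h | h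
    · exact h
    · rw [h, fn] at hP; omega
  have hstep := sqAdj_cases (hR _ _ (hf i0 hlt).1).1
  have hnext := hgt (i0 + 1) (by omega) (by omega)
  have heq : (f i0).1 = m - 2 * s := by omega
  have hsub : cn (T ∩ {v | m - 2 * s ≤ v.1 ∧ v.1 ≤ m}) R (f i0) y := by
    rw [← fn]
    have hmem : ∀ k, i0 ≤ k → k ≤ n → f k ∈ T ∩ {v | m - 2 * s ≤ v.1 ∧ v.1 ≤ m} := by
      intro k h1 h2
      have h3 := hfB k h2
      refine ⟨b2 h3, ?_, ?_⟩
      · rcases h1.lt_or_eq with h | h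
        · exact (hgt k h h2).le
        · rw [← h, heq]
      · have := h3.2.1; simpa using this
    have := seq_rtg (R := fun a b => R a b ∧ a ∈ T ∩ {v | m - 2 * s ≤ v.1 ∧ v.1 ≤ m} ∧
      b ∈ T ∩ {v | m - 2 * s ≤ v.1 ∧ v.1 ≤ m}) (n := n - i0) (f := fun k => f (i0 + k))
      (fun i hi => ⟨(hf (i0 + i) (by omega)).1, hmem _ (by omega) (by omega),
        hmem _ (by omega) (by omega)⟩) (Nat.zero_le (n - i0)) le_rfl
    simp only [Nat.add_sub_cancel' hle, Nat.add_zero] at this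
    exact this
  have hpre : cn T R (0, 0) (f i0) := by
    rw [← f0]; exact cn_mono b2 (seq_rtg hf (Nat.zero_le _) hle)
  have k1 := cn_mono b1 h1
  have k2 := cn_mono b1 h2
  have k3 := cn_mono b1 h3
  rcases le_total (f i0).2 ul.2 with hc | hc
  · have := cn_cross hR (by omega) hsub ((cn_symm hR k3).trans k2) heq (by omega) (by omega)
      (by omega) hc (by omega)
    exact (hpre.trans this).trans (cn_symm hR (cn_mono b3 k3))
  · have := cn_cross hR (by omega) ((cn_symm hR k3).trans k1) hsub (by omega) (by omega) heq
      (by omega) hc (by omega)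
    exact (hpre.trans (cn_symm hR this)).trans (cn_symm hR (cn_mono b3 k3))

end DaC

namespace DaC

section law
variable {pr : ((V → V → Prop) → Prop) → ℝ}

lemma PercLaw.chain (H : PercLaw pr) {S : Set V} {d : V} (hS : ∀ v (k : ℕ), v ∈ S → v + k • d ∈ S)
    {δ : ℝ} (hδ : 0 ≤ δ) (h : δ ≤ pr (ct S (0, 0) {d})) (k : ℕ) :
    δ ^ (k + 1) ≤ pr (ct S (0, 0) {(k + 1) • d}) := by
  induction k with
  | zero => simpa using h
  | succ k ih =>
    have h2 : δ ≤ pr (ct S ((k + 1) • d) {(k + 1 + 1) • d}) := by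
      refine h.trans (H.ct_le (aut_tr ((k + 1) • d)) (zero_add _) ?_ ?_)
      · intro v hv
        exact hS v (k + 1) hv
      · rintro v rfl
        show v + (k + 1) • v = (k + 1 + 1) • v
        rw [succ_nsmul v (k + 1), add_comm]
    rw [pow_succ]
    refine (H.fkg' (inc_ct _ _ _) (inc_ct _ _ _) hδ ih h2).trans (H.mono _ _ ?_)
    rintro R - ⟨⟨v, hv, h3⟩, ⟨w, hw, h4⟩⟩
    rw [Set.mem_singleton_iff] at hv
    subst hv
    exact ⟨w, hw, h3.trans h4⟩

/-- long horizontal path -/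
def Hz (m L : ℤ) (R : V → V → Prop) : Prop := ct {v | -m ≤ v.2 ∧ v.2 ≤ m} (0, 0) {(L, 0)} R

lemma PercLaw.V_prob (H : PercLaw pr) {m a : ℤ} (ha : 0 ≤ a) (ham : a ≤ m) {c : ℝ} (hc : 0 < c)
    (h : c ≤ pr (ct (bx m (0, 0)) (0, 0) (sg m a m))) (k : ℕ) :
    (((c * c) * (c * c)) * ((c * c) * (c * c))) ^ (k + 1) ≤ pr (Hz m ((k + 1) * (2 * a))) := by
  have h1 := H.fkg' (inc_XX m a (0, 0)) (inc_XX m a (0, 2 * a)) (by positivity)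
    (H.XX_ge hc h (0, 0)) (H.XX_ge hc h (0, 2 * a))
  have h2 := H.chain (S := {v | -m ≤ v.1 ∧ v.1 ≤ m}) (d := (0, 2 * a))
    (by intro v k hv; simpa using hv) (by positivity)
    (h1.trans (H.mono _ _ fun R hR hh => V_det hR ha ham hh.1 hh.2)) k
  refine h2.trans (H.ct_le aut_sw rfl ?_ ?_)
  · intro v hv; exact hv
  · rintro v rfl
    simp

lemma PercLaw.H_prob (H : PercLaw pr) {m s a a' : ℤ} (hs : 1 ≤ s) (hm1 : 2 * s ≤ m)
    (hm2 : m ≤ 2 * s + 1) (ha : 0 ≤ a) (has : a ≤ s) (haa : a' ≤ 2 * a) (ham : a' ≤ m)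
    {c : ℝ} (hc : 0 < c)
    (h : c ≤ pr (ct (bx s (0, 0)) (0, 0) (sg s a s)))
    (h' : c ≤ pr (ct (bx m (0, 0)) (0, 0) (sg m 0 a'))) (k : ℕ) :
    ((((c * c) * (c * c)) * c) * (((c * c) * (c * c)) * c)) ^ (k + 1) ≤
      pr (Hz m ((k + 1) * (2 * (m - s)))) := by
  have h1 := H.fkg' (inc_XX s a (m - s, a)) (inc_ct (bx m (0, 0)) (0, 0) (sg m 0 a')) hc.le
    (H.XX_ge hc h (m - s, a)) h'
  set S : Set V := {v | -m ≤ v.2 ∧ v.2 ≤ m}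
  have h2 : (((c * c) * (c * c)) * c) ≤ pr (ct S (0, 0) {(m - s, a)}) :=
    h1.trans (H.mono _ _ fun R hR hh =>
      ⟨_, rfl, H_det hR hs hm1 hm2 ha has haa ham hh.1 hh.2⟩)
  have h3 : (((c * c) * (c * c)) * c) ≤ pr (ct S (2 * (m - s), 0) {(m - s, a)}) := by
    refine h2.trans (H.ct_le (aut_rfX (2 * (m - s))) (by simp) (fun v hv => hv) ?_)
    rintro v rfl
    simp; ring
  have h4 := H.fkg' (inc_ct _ _ _) (inc_ct _ _ _) (by positivity) h2 h3
  have h5 := H.chain (S := S) (d := (2 * (m - s), 0)) (by intro v k hv; simpa [S] using hv)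
    (by positivity) (h4.trans (H.mono _ (ct S (0, 0) {(2 * (m - s), 0)}) ?_)) k
  · refine h5.trans (le_of_eq ?_)
    simp [S]
    rfl
  · rintro R hR ⟨⟨v, hv, h5⟩, ⟨w, hw, h6⟩⟩
    rw [Set.mem_singleton_iff] at hv hw
    subst hv hw
    exact ⟨_, rfl, h5.trans (cn_symm hR h6)⟩

/-- the arm hypothesis implies long crossings at infinitely many scales -/
lemma PercLaw.long (H : PercLaw pr) {θ : ℝ} (hθ : 0 < θ)
    (arm : ∀ m : ℤ, 1 ≤ m → θ ≤ pr (ct (bx m (0, 0)) (0, 0) (bd m ∩ bx m (0, 0)))) :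
    ∃ c : ℝ, 0 < c ∧ ∀ N : ℤ, ∃ m L : ℤ, N ≤ m ∧ 1 ≤ m ∧ 10 * m ≤ L ∧ c ≤ pr (Hz m L) := by
  set c := θ / 16 with hc
  have hc0 : 0 < c := by positivity
  have hα : ∀ m : ℤ, ∃ a : ℤ, 1 ≤ m → 0 ≤ a ∧ a ≤ m ∧
      c ≤ pr (ct (bx m (0, 0)) (0, 0) (sg m a m)) ∧
      c ≤ pr (ct (bx m (0, 0)) (0, 0) (sg m 0 a)) := by
    intro m
    by_cases hm : 1 ≤ m
    · have h1 := H.oct (m := m)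
      have h2 := arm m hm
      obtain ⟨a, ha⟩ := H.alpha hm hc0 (by rw [hc]; linarith)
      exact ⟨a, fun _ => ha⟩
    · exact ⟨0, fun h => absurd h hm⟩
  choose α hα using hα
  by_cases hd : ∀ N : ℤ, ∃ m, N ≤ m ∧ α m ≤ 2 * α (m / 2)
  · refine ⟨((((c * c) * (c * c)) * c) * (((c * c) * (c * c)) * c)) ^ (9 + 1), by positivity, ?_⟩
    intro N
    obtain ⟨m, hm, ham⟩ := hd (max N 2)
    have hmN : N ≤ m := (le_max_left _ _).trans hm
    have hm2 : 2 ≤ m := (le_max_right _ _).trans hm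
    obtain ⟨a1, a2, a3, a4⟩ := hα m (by omega)
    obtain ⟨b1, b2, b3, b4⟩ := hα (m / 2) (by omega)
    refine ⟨m, _, hmN, by omega, ?_, H.H_prob (s := m / 2) (by omega) (by omega) (by omega) b1 b2 ham
      a2 hc0 b3 a4 9⟩
    push_cast
    omega
  · push Not at hd
    obtain ⟨N1, hN1⟩ := hd
    set N0 : ℕ := (max N1 2).toNat with hN0
    have e0 : (N0 : ℤ) = max N1 2 := Int.toNat_of_nonneg (le_trans (by norm_num) (le_max_right _ _))
    have hN01 : 2 ≤ (N0 : ℤ) := by rw [e0]; exact le_max_right _ _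
    have hN0N : N1 ≤ (N0 : ℤ) := by rw [e0]; exact le_max_left _ _
    have hgrow : ∀ j : ℕ, (2 : ℤ) ^ j ≤ α (2 ^ j * N0) := by
      intro j
      induction j with
      | zero =>
        have h1 := hN1 N0 hN0N
        have := (hα ((N0 : ℤ) / 2) (by omega)).1
        simp; omega
      | succ j ih =>
        have hp : (1 : ℤ) ≤ 2 ^ j := one_le_pow₀ (by norm_num)
        have h1 := hN1 (2 ^ (j + 1) * N0) (by rw [pow_succ]; nlinarith)
        have h2 : (2 : ℤ) ^ (j + 1) * N0 / 2 = 2 ^ j * N0 := by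
          rw [pow_succ]
          have : (2 : ℤ) ^ j * 2 * N0 = (2 ^ j * N0) * 2 := by ring
          rw [this, Int.mul_ediv_cancel _ (by norm_num)]
        rw [h2] at h1
        have e : (2 : ℤ) ^ (j + 1) = 2 ^ j * 2 := pow_succ _ _
        linarith
    refine ⟨(((c * c) * (c * c)) * ((c * c) * (c * c))) ^ (5 * N0 + 1), by positivity, ?_⟩
    intro N
    have hp : N ≤ 2 ^ N.toNat := by
      have : N.toNat < 2 ^ N.toNat := Nat.lt_two_pow_self
      have h2 : ((N.toNat : ℕ) : ℤ) < ((2 ^ N.toNat : ℕ) : ℤ) := by exact_mod_cast this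
      push_cast at h2
      have := Int.self_le_toNat N
      omega
    have hp1 : (1 : ℤ) ≤ 2 ^ N.toNat := one_le_pow₀ (by norm_num)
    have hg := hgrow N.toNat
    generalize (2 : ℤ) ^ N.toNat = t at hp hp1 hg
    obtain ⟨a1, a2, a3, a4⟩ := hα (t * N0) (by nlinarith)
    refine ⟨t * N0, _, by nlinarith, by nlinarith, ?_, H.V_prob a1 a2 hc0 a3 (5 * N0)⟩
    push_cast
    nlinarith

/-- horizontal crossing of the top strip of the annulus -/
def TopEv (N M : ℤ) (R : V → V → Prop) : Prop :=
  ∃ u v : V, (u.1 ≤ -(M + 2) ∧ M + 2 ≤ v.1) ∧ cn {v | N ≤ v.2 ∧ v.2 ≤ M} R u v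

lemma inc_TopEv (N M : ℤ) : Inc (TopEv N M) :=
  inc_ex fun _ => inc_ex fun _ => inc_and (inc_const _) (inc_cn _ _ _)

/-- all four strips are crossed -/
def Circ (N M : ℤ) (R : V → V → Prop) : Prop :=
  (TopEv N M R ∧ TopEv N M (fun a b => R (rfY 0 a) (rfY 0 b))) ∧
  (TopEv N M (fun a b => R (swE a) (swE b)) ∧
    TopEv N M (fun a b => R (swE (rfY 0 a)) (swE (rfY 0 b))))

lemma PercLaw.circ (H : PercLaw pr) {θ : ℝ} (hθ : 0 < θ)
    (arm : ∀ m : ℤ, 1 ≤ m → θ ≤ pr (ct (bx m (0, 0)) (0, 0) (bd m ∩ bx m (0, 0)))) :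
    ∃ c : ℝ, 0 < c ∧ ∀ N : ℤ, 1 ≤ N → ∃ M : ℤ, N < M ∧ c ≤ pr (Circ N M) := by
  obtain ⟨c, hc, h⟩ := H.long hθ arm
  refine ⟨(c * c) * (c * c), by positivity, fun N hN => ?_⟩
  obtain ⟨m, L, h1, h2, h3, h4⟩ := h N
  refine ⟨N + 2 * m, by omega, ?_⟩
  set M := N + 2 * m with hM
  have h5 : c ≤ pr (TopEv N M) := by
    have := H.ct_le (aut_tr (-(M + 2), N + m)) (S := {v | -m ≤ v.2 ∧ v.2 ≤ m})
      (S' := {v | N ≤ v.2 ∧ v.2 ≤ M}) (u := (0, 0)) (u' := (-(M + 2), N + m))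
      (A := {(L, 0)}) (A' := {(L - (M + 2), N + m)}) (by simp)
      (by intro v hv; simp only [Set.mem_ofPred_eq, trE_apply] at hv ⊢; omega)
      (by rintro v rfl; simp; ring)
    refine (h4.trans this).trans (H.mono _ _ ?_)
    rintro R - ⟨v, hv, hh⟩
    rw [Set.mem_singleton_iff] at hv
    subst hv
    exact ⟨_, _, ⟨le_rfl, by simp only; omega⟩, hh⟩
  have iT := inc_TopEv N M
  refine H.fkg' (inc_and iT (inc_comp iT _)) (inc_and (inc_comp iT _) ?_) (by positivity)
    (H.fkg' iT (inc_comp iT _) hc.le h5 ?_) (H.fkg' (inc_comp iT _) ?_ hc.le ?_ ?_)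
  · exact inc_comp iT ((rfY 0).trans swE)
  · rw [H.inv _ (aut_rfY 0) _ iT]; exact h5
  · exact inc_comp iT ((rfY 0).trans swE)
  · rw [H.inv _ aut_sw _ iT]; exact h5
  · have := H.inv ((rfY 0).trans swE) (by
      intro a b; simp only [Equiv.trans_apply]; rw [aut_sw, aut_rfY]) _ iT
    simp only [Equiv.trans_apply] at this
    rw [this]; exact h5

end law

end DaC

namespace DaC

/-- black nearest neighbour relation -/
def Rcol (ξ : V → Bool) (u v : V) : Prop := SqAdj u v ∧ ξ u = true ∧ ξ v = true

/-- white star relation -/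
def Wst (ξ : V → Bool) (u v : V) : Prop := StarAdj u v ∧ ξ u = false ∧ ξ v = false

/-- bond relation -/
def Rbd (ω : V × Bool → Bool) (u v : V) : Prop := SqAdj u v ∧ ω (edgeOf u v) = true

/-- closed dual bond relation -/
def Dbd (ω : V × Bool → Bool) (u v : V) : Prop := SqAdj u v ∧ ω (dualE (edgeOf u v)) = false

lemma sqAdj_symm {u v : V} (h : SqAdj u v) : SqAdj v u := by
  unfold SqAdj at *; rw [← h]; ring

lemma good_Rcol (ξ : V → Bool) : Good (Rcol ξ) := fun _ _ h => ⟨h.1, sqAdj_symm h.1, h.2.2, h.2.1⟩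

lemma good_Rbd (ω : V × Bool → Bool) : Good (Rbd ω) :=
  fun u v h => ⟨h.1, sqAdj_symm h.1, by rw [edgeOf_comm]; exact h.2⟩

lemma Rcol_comp (ξ : V → Bool) {σ : V ≃ V} (hσ : IsAut σ) :
    (fun a b => Rcol ξ (σ a) (σ b)) = Rcol (ξ ∘ σ) := by
  funext a b
  simp only [Rcol, Function.comp, hσ a b]

/-- sequence version of the top crossing -/
lemma topEv_seq {R : V → V → Prop} (hR : Good R) {N M : ℤ} (hM : 0 ≤ M) (h : TopEv N M R) :
    ∃ (n : ℕ) (f : ℕ → V), 0 < n ∧ (∀ i < n, R (f i) (f (i + 1))) ∧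
      (∀ i < n, SqAdj (f i) (f (i + 1))) ∧
      (∀ i ≤ n, N ≤ (f i).2 ∧ (f i).2 ≤ M) ∧ (f 0).1 ≤ -(M + 2) ∧ M + 2 ≤ (f n).1 := by
  obtain ⟨u, v, ⟨h1, h2⟩, h3⟩ := h
  obtain ⟨n, f, f0, fn, hf⟩ := rtg_seq h3
  have hn : 0 < n := by
    rcases Nat.eq_zero_or_pos n with h0 | h0
    · rw [h0, f0] at fn; rw [fn] at h1; omega
    · exact h0
  exact ⟨n, f, hn, fun i hi => (hf i hi).1, fun i hi => (hR _ _ (hf i hi).1).1,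
    fun i hi => cn_seq_mem hf hn i hi, by rw [f0]; exact h1, by rw [fn]; exact h2⟩

lemma top_block_star {ξ : V → Bool} {N M : ℤ} (hM : 0 ≤ M) (h : TopEv N M (Rcol ξ))
    {g : ℕ → V} {l : ℕ} (hg : ∀ j < l, StarAdj (g j) (g (j + 1))) (hw : ∀ j ≤ l, ξ (g j) = false)
    (hgs : ∀ j ≤ l, -M ≤ (g j).1 ∧ (g j).1 ≤ M) (hg0 : (g 0).2 ≤ N) (hgl : M ≤ (g l).2) :
    False := by
  obtain ⟨n, f, hn, hf, hfa, hfs, hf0, hfn⟩ := topEv_seq (good_Rcol ξ) hM h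
  obtain ⟨i, hi, j, hj, hij⟩ := block_star hfa hg hfs (by omega) (by omega) hgs hg0 hgl
  have hb : ξ (f i) = true := by
    rcases hi.lt_or_eq with h | h
    · exact (hf i h).2.1
    · have := (hf (n - 1) (by omega)).2.2
      rwa [Nat.sub_add_cancel hn, ← h] at this
  rw [hij, hw j hj] at hb
  exact absurd hb (by simp)

lemma starAdj_rfY (k : ℤ) {a b : V} (h : StarAdj a b) : StarAdj (rfY k a) (rfY k b) := by
  unfold StarAdj at *
  simp only [rfY_apply]
  have : (k - a.2 - (k - b.2)) ^ 2 = (a.2 - b.2) ^ 2 := by ring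
  rw [this]; exact h

lemma starAdj_sw {a b : V} (h : StarAdj a b) : StarAdj (swE a) (swE b) := by
  unfold StarAdj at *
  simp only [swE_apply]
  rw [add_comm]; exact h

/-- first exit from a set -/
lemma first_exit {R : V → V → Prop} {B : Set V} {u v : V} (h : Relation.ReflTransGen R u v)
    (hu : u ∈ B) (hv : v ∉ B) :
    ∃ (l : ℕ) (g : ℕ → V), 0 < l ∧ g 0 = u ∧ (∀ j < l, R (g j) (g (j + 1))) ∧ (∀ j < l, g j ∈ B) ∧
      g l ∉ B := by
  classical
  obtain ⟨n, g, g0, gn, hg⟩ := rtg_seq h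
  have hex : ∃ k, g k ∉ B := ⟨n, by rw [gn]; exact hv⟩
  have hle : Nat.find hex ≤ n := Nat.find_min' hex (by rw [gn]; exact hv)
  refine ⟨Nat.find hex, g, ?_, g0, fun j hj => hg j (by omega), fun j hj => ?_, Nat.find_spec hex⟩
  · rcases Nat.eq_zero_or_pos (Nat.find hex) with h0 | h0
    · have := Nat.find_spec hex
      rw [h0, g0] at this
      exact absurd hu this
    · exact h0
  · by_contra hc
    exact Nat.find_min hex hj hc

lemma circ_star {ξ : V → Bool} {N M : ℤ} (hN : 1 ≤ N) (hNM : N < M) (h : Circ N M (Rcol ξ))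
    {u v : V} (hu : u ∈ bx N (0, 0)) (huv : Relation.ReflTransGen (Wst ξ) u v) :
    v ∈ bx M (0, 0) := by
  by_contra hv
  have hv' : v ∉ bx (M - 1) (0, 0) := by
    intro hc; apply hv; simp only [bx, Set.mem_ofPred_eq] at hc ⊢; omega
  have hu' : u ∈ bx (M - 1) (0, 0) := by
    simp only [bx, Set.mem_ofPred_eq] at hu ⊢; omega
  obtain ⟨l, g, hl, g0, hg, hin, hout⟩ := first_exit huv hu' hv'
  have hw : ∀ j ≤ l, ξ (g j) = false := by
    intro j hj
    rcases hj.lt_or_eq with h | h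
    · exact (hg j h).2.1
    · have := (hg (l - 1) (by omega)).2.2
      rwa [Nat.sub_add_cancel hl, ← h] at this
  have hM : ∀ j ≤ l, -M ≤ (g j).1 ∧ (g j).1 ≤ M ∧ -M ≤ (g j).2 ∧ (g j).2 ≤ M := by
    intro j hj
    rcases hj.lt_or_eq with h | h
    · have := hin j h
      simp only [bx, Set.mem_ofPred_eq] at this; omega
    · have h1 := hin (l - 1) (by omega)
      have h2 := starAdj_cases (hg (l - 1) (by omega)).1
      rw [Nat.sub_add_cancel hl] at h2
      simp only [bx, Set.mem_ofPred_eq] at h1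
      rw [h]; omega
  have h0 : -N ≤ (g 0).1 ∧ (g 0).1 ≤ N ∧ -N ≤ (g 0).2 ∧ (g 0).2 ≤ N := by
    rw [g0]; simp only [bx, Set.mem_ofPred_eq] at hu; omega
  have hcase : M ≤ (g l).2 ∨ (g l).2 ≤ -M ∨ M ≤ (g l).1 ∨ (g l).1 ≤ -M := by
    have h1 := hout
    simp only [bx, Set.mem_ofPred_eq] at h1
    omega
  obtain ⟨⟨t1, t2⟩, t3, t4⟩ := h
  have t4' : TopEv N M (fun a b => Rcol ξ (((rfY 0).trans swE) a) (((rfY 0).trans swE) b)) := t4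
  rw [Rcol_comp ξ (aut_rfY 0)] at t2
  rw [Rcol_comp ξ aut_sw] at t3
  rw [Rcol_comp ξ (σ := (rfY 0).trans swE) (by
      intro a b; simp only [Equiv.trans_apply]; rw [aut_sw, aut_rfY])] at t4'
  rcases hcase with hc | hc | hc | hc
  · exact top_block_star (by omega) t1 (fun j hj => (hg j hj).1) hw
      (fun j hj => by have := hM j hj; omega) (by omega) hc
  · refine top_block_star (g := fun j => rfY 0 (g j)) (l := l) (by omega) t2
      (fun j hj => starAdj_rfY 0 (hg j hj).1) (fun j hj => by simpa using hw j hj)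
      (fun j hj => by have := hM j hj; simp; omega) (by simp; omega) (by simp; omega)
  · refine top_block_star (g := fun j => swE (g j)) (l := l) (by omega) t3
      (fun j hj => starAdj_sw (hg j hj).1) (fun j hj => by simpa using hw j hj)
      (fun j hj => by have := hM j hj; simp; omega) (by simp; omega) (by simp; omega)
  · refine top_block_star (g := fun j => rfY 0 (swE (g j))) (l := l) (by omega) t4'
      (fun j hj => starAdj_rfY 0 (starAdj_sw (hg j hj).1)) (fun j hj => by simpa using hw j hj)
      (fun j hj => by have := hM j hj; simp; omega) (by simp; omega) (by simp; omega)

/-! dual version -/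

lemma cross_iff {a b c d : V} (h : SqAdj a b) (h' : SqAdj c d) :
    edgeOf a b = dualE (edgeOf c d) ↔ a.1 + b.1 = c.1 + d.1 + 1 ∧ a.2 + b.2 = c.2 + d.2 + 1 := by
  obtain ⟨x, y⟩ := c
  obtain ⟨x', y'⟩ := d
  have ha := sqAdj_cases h
  rcases sqAdj_cases h' with ⟨h1, h3⟩ | ⟨h1, h3⟩ | ⟨h1, h3⟩ | ⟨h1, h3⟩ <;> simp only at h1 h3
  · subst h1 h3
    rw [edgeOf_right]
    simp only [dualE, edgeOf, Bool.false_eq_true, if_false, Prod.mk.injEq, decide_eq_true_eq]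
    omega
  · obtain rfl : x = x' + 1 := by omega
    subst h3
    rw [edgeOf_comm (x' + 1, _), edgeOf_right]
    simp only [dualE, edgeOf, Bool.false_eq_true, if_false, Prod.mk.injEq, decide_eq_true_eq]
    omega
  · subst h1 h3
    rw [edgeOf_up]
    simp only [dualE, edgeOf, if_true, Prod.mk.injEq, decide_eq_false_iff_not]
    omega
  · obtain rfl : y = y' + 1 := by omega
    subst h1
    rw [edgeOf_comm (_, y' + 1), edgeOf_up]
    simp only [dualE, edgeOf, if_true, Prod.mk.injEq, decide_eq_false_iff_not]
    omega

lemma top_block_dual {R : V → V → Prop} (hR : Good R) {N M : ℤ} (hM : 0 ≤ M) (h : TopEv N M R)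
    {g : ℕ → V} {l : ℕ} (hg : ∀ j < l, SqAdj (g j) (g (j + 1)))
    (hw : ∀ j < l, ∀ a b, R a b → ¬ (a.1 + b.1 = (g j).1 + (g (j + 1)).1 + 1 ∧
      a.2 + b.2 = (g j).2 + (g (j + 1)).2 + 1))
    (hgs : ∀ j ≤ l, -(M + 1) ≤ (g j).1 ∧ (g j).1 ≤ M) (hg0 : (g 0).2 ≤ N - 1) (hgl : M ≤ (g l).2) :
    False := by
  obtain ⟨n, f, hn, hf, hfa, hfs, hf0, hfn⟩ := topEv_seq hR hM h
  obtain ⟨i, hi, j, hj, hij⟩ := block_dual hfa hg hfs (by omega) (by omega) hgs hg0 hgl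
  rw [cross_iff (hfa i hi) (hg j hj)] at hij
  exact hw j hj _ _ (hf i hi) hij

lemma good_comp {R : V → V → Prop} (hR : Good R) {σ : V ≃ V} (hσ : IsAut σ) :
    Good (fun a b => R (σ a) (σ b)) :=
  fun a b h => ⟨(hσ a b).1 (hR _ _ h).1, (hR _ _ h).2⟩

/-- dual box -/
def dbx (m : ℤ) : Set V := {v | -m ≤ v.1 ∧ v.1 ≤ m - 1 ∧ -m ≤ v.2 ∧ v.2 ≤ m - 1}

lemma circ_dual {ω : V × Bool → Bool} {N M : ℤ} (hN : 1 ≤ N) (hNM : N < M) (h : Circ N M (Rbd ω))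
    {u v : V} (hu : u ∈ dbx N) (huv : Relation.ReflTransGen (Dbd ω) u v) :
    v ∈ dbx M := by
  by_contra hv'
  have hu' : u ∈ dbx M := by
    simp only [dbx, Set.mem_ofPred_eq] at hu ⊢; omega
  obtain ⟨l, g, hl, g0, hg, hin, hout⟩ := first_exit huv hu' hv'
  have hM : ∀ j ≤ l, -(M + 1) ≤ (g j).1 ∧ (g j).1 ≤ M ∧ -(M + 1) ≤ (g j).2 ∧ (g j).2 ≤ M := by
    intro j hj
    rcases hj.lt_or_eq with h | h
    · have := hin j h
      simp only [dbx, Set.mem_ofPred_eq] at this; omega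
    · have h1 := hin (l - 1) (by omega)
      have h2 := sqAdj_cases (hg (l - 1) (by omega)).1
      rw [Nat.sub_add_cancel hl] at h2
      simp only [dbx, Set.mem_ofPred_eq] at h1
      rw [h]; omega
  have h0 : -N ≤ (g 0).1 ∧ (g 0).1 ≤ N - 1 ∧ -N ≤ (g 0).2 ∧ (g 0).2 ≤ N - 1 := by
    rw [g0]; simp only [dbx, Set.mem_ofPred_eq] at hu; omega
  have hcase : M ≤ (g l).2 ∨ (g l).2 ≤ -(M + 1) ∨ M ≤ (g l).1 ∨ (g l).1 ≤ -(M + 1) := by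
    have h1 := hout
    simp only [dbx, Set.mem_ofPred_eq] at h1
    omega
  have hno : ∀ j < l, ∀ a b, Rbd ω a b → ¬ (a.1 + b.1 = (g j).1 + (g (j + 1)).1 + 1 ∧
      a.2 + b.2 = (g j).2 + (g (j + 1)).2 + 1) := by
    intro j hj a b hab hc
    have h1 := (cross_iff hab.1 (hg j hj).1).2 hc
    have h2 := (hg j hj).2
    rw [← h1, hab.2] at h2
    exact absurd h2 (by simp)
  obtain ⟨⟨t1, t2⟩, t3, t4⟩ := h
  have gR := good_Rbd ω
  rcases hcase with hc | hc | hc | hc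
  · exact top_block_dual gR (by omega) t1 (fun j hj => (hg j hj).1) hno
      (fun j hj => by have := hM j hj; omega) (by omega) hc
  · refine top_block_dual (g := fun j => rfY (-1) (g j)) (l := l) (good_comp gR (aut_rfY 0))
      (by omega) t2 (fun j hj => (aut_rfY (-1) _ _).2 (hg j hj).1) (fun j hj a b hab hcc => ?_)
      (fun j hj => by have := hM j hj; simp; omega) (by simp; omega) (by simp; omega)
    have := hno j hj _ _ hab
    simp only [rfY_apply] at this hcc
    omega
  · refine top_block_dual (g := fun j => swE (g j)) (l := l) (good_comp gR aut_sw) (by omega) t3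
      (fun j hj => (aut_sw _ _).2 (hg j hj).1) (fun j hj a b hab hcc => ?_)
      (fun j hj => by have := hM j hj; simp; omega) (by simp; omega) (by simp; omega)
    have := hno j hj _ _ hab
    simp only [swE_apply] at this hcc
    omega
  · refine top_block_dual (g := fun j => rfY (-1) (swE (g j))) (l := l)
      (good_comp gR (σ := (rfY 0).trans swE) (by
        intro a b; simp only [Equiv.trans_apply]; rw [aut_sw, aut_rfY])) (by omega) t4
      (fun j hj => (aut_rfY (-1) _ _).2 ((aut_sw _ _).2 (hg j hj).1)) (fun j hj a b hab hcc => ?_)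
      (fun j hj => by have := hM j hj; simp; omega) (by simp; omega) (by simp; omega)
    have := hno j hj _ _ hab
    simp only [swE_apply, rfY_apply, Equiv.trans_apply] at this hcc
    omega

end DaC

namespace DaC

/-! ### FKG by exploration -/

section ex
variable {ι : Type*} [DecidableEq ι]

/-- weight of a finite configuration -/
def wt (w : ι → ℝ) (U η : Finset ι) : ℝ := ∏ i ∈ U, if i ∈ η then w i else 1 - w i

/-- finite expectation -/
def Ex (w : ι → ℝ) (U O : Finset ι) (F : Finset ι → ℝ) : ℝ :=
  ∑ η ∈ U.powerset, wt w U η * F (O ∪ η)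

lemma Ex_insert (w : ι → ℝ) {U : Finset ι} (O : Finset ι) (F : Finset ι → ℝ) {e : ι} (he : e ∉ U) :
    Ex w (insert e U) O F = (1 - w e) * Ex w U O F + w e * Ex w U (insert e O) F := by
  unfold Ex
  rw [Finset.sum_powerset_insert he, Finset.mul_sum, Finset.mul_sum]
  congr 1
  · refine Finset.sum_congr rfl fun η hη => ?_
    rw [Finset.mem_powerset] at hη
    have : e ∉ η := fun h => he (hη h)
    unfold wt
    rw [Finset.prod_insert he, if_neg this]
    ring
  · refine Finset.sum_congr rfl fun η hη => ?_
    rw [Finset.mem_powerset] at hη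
    have h1 : ∏ i ∈ U, (if i ∈ insert e η then w i else 1 - w i) =
        ∏ i ∈ U, (if i ∈ η then w i else 1 - w i) := by
      refine Finset.prod_congr rfl fun i hi => ?_
      have : i ≠ e := fun h => he (h ▸ hi)
      simp [this]
    unfold wt
    rw [Finset.prod_insert he, if_pos (Finset.mem_insert_self _ _), h1,
      Finset.union_insert, Finset.insert_union]
    ring

lemma wt_nonneg {w : ι → ℝ} (hw : ∀ i, 0 ≤ w i ∧ w i ≤ 1) (U η : Finset ι) : 0 ≤ wt w U η := by
  refine Finset.prod_nonneg fun i _ => ?_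
  have := hw i
  split_ifs <;> linarith

lemma Ex_mono {w : ι → ℝ} (hw : ∀ i, 0 ≤ w i ∧ w i ≤ 1) {U O O' : Finset ι} {F G : Finset ι → ℝ}
    (h : ∀ η ⊆ U, F (O ∪ η) ≤ G (O' ∪ η)) : Ex w U O F ≤ Ex w U O' G :=
  Finset.sum_le_sum fun η hη =>
    mul_le_mul_of_nonneg_left (h η (Finset.mem_powerset.1 hη)) (wt_nonneg hw _ _)

/-- FKG inequality by exploration -/
theorem fkg_explore {w : ι → ℝ} (hw : ∀ i, 0 ≤ w i ∧ w i ≤ 1) (f g : Finset ι → ℝ)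
    (step : ∀ O U : Finset ι, U.Nonempty → ∃ e ∈ U,
      (∀ η ⊆ U.erase e, f (O ∪ η) ≤ f (insert e O ∪ η) ∧ g (O ∪ η) ≤ g (insert e O ∪ η)) ∨
      (∀ η ⊆ U.erase e, f (insert e O ∪ η) ≤ f (O ∪ η) ∧ g (insert e O ∪ η) ≤ g (O ∪ η)))
    (U O : Finset ι) : Ex w U O f * Ex w U O g ≤ Ex w U O (fun S => f S * g S) := by
  induction hn : U.card generalizing U O with
  | zero =>
    rw [Finset.card_eq_zero] at hn
    subst hn
    simp [Ex, wt]
  | succ n ih =>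
    have hU : U.Nonempty := by rw [← Finset.card_pos]; omega
    obtain ⟨e, he, hs⟩ := step O U hU
    have hc : (U.erase e).card = n := by rw [Finset.card_erase_of_mem he]; omega
    have hi : insert e (U.erase e) = U := Finset.insert_erase he
    rw [← hi, Ex_insert w O f (Finset.notMem_erase e U), Ex_insert w O g (Finset.notMem_erase e U),
      Ex_insert w O _ (Finset.notMem_erase e U)]
    have h0 := ih (U.erase e) O hc
    have h1 := ih (U.erase e) (insert e O) hc
    set f0 := Ex w (U.erase e) O f
    set f1 := Ex w (U.erase e) (insert e O) f
    set g0 := Ex w (U.erase e) O g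
    set g1 := Ex w (U.erase e) (insert e O) g
    obtain ⟨hw0, hw1⟩ := hw e
    have hprod : 0 ≤ (f1 - f0) * (g1 - g0) := by
      rcases hs with hs | hs
      · exact mul_nonneg (sub_nonneg.2 (Ex_mono hw fun η hη => (hs η hη).1))
          (sub_nonneg.2 (Ex_mono hw fun η hη => (hs η hη).2))
      · exact mul_nonneg_of_nonpos_of_nonpos (sub_nonpos.2 (Ex_mono hw fun η hη => (hs η hη).1))
          (sub_nonpos.2 (Ex_mono hw fun η hη => (hs η hη).2))
    have h2 : 0 ≤ w e * (1 - w e) * ((f1 - f0) * (g1 - g0)) :=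
      mul_nonneg (mul_nonneg hw0 (by linarith)) hprod
    have h3 := mul_le_mul_of_nonneg_left h0 (by linarith : 0 ≤ 1 - w e)
    have h4 := mul_le_mul_of_nonneg_left h1 hw0
    nlinarith
end ex

/-! ### Bernoulli product measures -/

/-- Bernoulli measure -/
noncomputable def ber (t : unitInterval) : Measure Bool :=
  ENNReal.ofReal t • Measure.dirac true + ENNReal.ofReal (1 - t) • Measure.dirac false

instance (t : unitInterval) : IsProbabilityMeasure (ber t) := by
  constructor
  simp only [ber, Measure.coe_add, Measure.coe_smul, Pi.add_apply, Pi.smul_apply, measure_univ,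
    smul_eq_mul, mul_one]
  rw [← ENNReal.ofReal_add t.2.1 (by linarith [t.2.2])]
  simp

lemma ber_true (t : unitInterval) : ber t {true} = ENNReal.ofReal t := by
  simp [ber]

lemma ber_false (t : unitInterval) : ber t {false} = ENNReal.ofReal (1 - t) := by
  simp [ber]

section prodm
variable {ι : Type*}

/-- product Bernoulli measure -/
noncomputable def bprod (w : ι → unitInterval) : Measure (ι → Bool) :=
  Measure.infinitePi (fun i => ber (w i))

instance (w : ι → unitInterval) : IsProbabilityMeasure (bprod w) := by
  unfold bprod; infer_instance

variable [DecidableEq ι]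

/-- configuration of a finite set -/
def toB (S : Finset ι) : ι → Bool := fun i => decide (i ∈ S)

/-- restriction of a configuration to a finite set -/
def rs (U : Finset ι) (b : ι → Bool) : Finset ι := U.filter (fun i => b i = true)

lemma rs_fiber {U η : Finset ι} (hη : η ⊆ U) :
    {b : ι → Bool | rs U b = η} = Set.pi U (fun i => {decide (i ∈ η)}) := by
  ext b
  simp only [Set.mem_ofPred_eq, rs, Set.mem_pi, Finset.mem_coe, Set.mem_singleton_iff]
  constructor
  · intro h i hi
    rw [← h]
    simp [hi]
  · intro h
    ext i
    rw [Finset.mem_filter]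
    constructor
    · rintro ⟨h1, h2⟩
      rw [h i h1] at h2
      simpa using h2
    · intro hi
      exact ⟨hη hi, by rw [h i (hη hi)]; simpa using hi⟩

lemma meas_fiber {U η : Finset ι} (hη : η ⊆ U) : MeasurableSet {b : ι → Bool | rs U b = η} := by
  rw [rs_fiber hη]
  exact MeasurableSet.pi U.countable_toSet fun _ _ => MeasurableSet.of_discrete

lemma rs_subset (U : Finset ι) (b : ι → Bool) : rs U b ⊆ U := Finset.filter_subset _ _

lemma bprod_fiber (w : ι → unitInterval) {U η : Finset ι} (hη : η ⊆ U) :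
    (bprod w).real {b | rs U b = η} = wt (fun i => (w i : ℝ)) U η := by
  rw [rs_fiber hη, Measure.real, bprod, Measure.infinitePi_pi _ (fun _ _ => MeasurableSet.of_discrete),
    ENNReal.toReal_prod]
  refine Finset.prod_congr rfl fun i _ => ?_
  by_cases h : i ∈ η
  · simp only [h, decide_true, if_true, ber_true]
    exact ENNReal.toReal_ofReal (w i).2.1
  · simp only [h, decide_false, if_false, ber_false]
    exact ENNReal.toReal_ofReal (by linarith [(w i).2.2])

lemma rs_sum (U : Finset ι) (F : Finset ι → ℝ) (b : ι → Bool) :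
    F (rs U b) = ∑ η ∈ U.powerset, Set.indicator {b | rs U b = η} (fun _ => F η) b := by
  rw [Finset.sum_eq_single (rs U b)]
  · simp
  · intro η _ hne
    rw [Set.indicator_of_notMem]
    intro h; exact hne h.symm
  · intro h
    exact absurd (Finset.mem_powerset.2 (rs_subset U b)) h

lemma rs_meas (U : Finset ι) (F : Finset ι → ℝ) : Measurable (fun b : ι → Bool => F (rs U b)) := by
  simp_rw [rs_sum U F]
  refine Finset.measurable_sum _ fun η hη => ?_
  exact measurable_const.indicator (meas_fiber (Finset.mem_powerset.1 hη))

lemma rs_integral (w : ι → unitInterval) (U : Finset ι) (F : Finset ι → ℝ) :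
    ∫ b, F (rs U b) ∂(bprod w) = Ex (fun i => (w i : ℝ)) U ∅ F := by
  simp_rw [rs_sum U F]
  rw [integral_finset_sum]
  · unfold Ex
    refine Finset.sum_congr rfl fun η hη => ?_
    have h := Finset.mem_powerset.1 hη
    rw [integral_indicator_const _ (meas_fiber h), bprod_fiber w h]
    simp
  · intro η hη
    exact (integrable_const _).indicator (meas_fiber (Finset.mem_powerset.1 hη))

/-- exploration property of a field of boolean variables -/
def Explor {K : Type*} (X : (ι → Bool) → K → Bool) : Prop :=
  ∀ O U : Finset ι, U.Nonempty → ∃ e ∈ U,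
    (∀ η ⊆ U.erase e, X (toB (O ∪ η)) ≤ X (toB (insert e O ∪ η))) ∨
    (∀ η ⊆ U.erase e, X (toB (insert e O ∪ η)) ≤ X (toB (O ∪ η)))

/-- approximation property -/
def Approx {K : Type*} (X : (ι → Bool) → K → Bool) : Prop :=
  ∃ U : ℕ → Finset ι, ∀ b k, ∀ᶠ n in Filter.atTop, X (toB (rs (U n) b)) k = X b k

theorem fkg_local {K : Type*} {X : (ι → Bool) → K → Bool} (w : ι → unitInterval)
    (hE : Explor X) (hA : Approx X) (hX : ∀ k, Measurable fun b => X b k) {A B : Set (K → Bool)}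
    (F : Finset K)
    (dA : ∀ x y : K → Bool, (∀ k ∈ F, x k = y k) → x ∈ A → y ∈ A)
    (dB : ∀ x y : K → Bool, (∀ k ∈ F, x k = y k) → x ∈ B → y ∈ B)
    (mA : ∀ x y : K → Bool, x ≤ y → x ∈ A → y ∈ A)
    (mB : ∀ x y : K → Bool, x ≤ y → x ∈ B → y ∈ B) :
    (bprod w).real {b | X b ∈ A} * (bprod w).real {b | X b ∈ B} ≤
      (bprod w).real {b | X b ∈ A ∧ X b ∈ B} := by
  classical
  obtain ⟨U, hU⟩ := hA
  have hlim : ∀ C : Set (K → Bool), (∀ x y : K → Bool, (∀ k ∈ F, x k = y k) → x ∈ C → y ∈ C) →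
      Filter.Tendsto (fun n => Ex (fun i => (w i : ℝ)) (U n) ∅
        (fun S => if X (toB S) ∈ C then (1 : ℝ) else 0)) Filter.atTop
        (nhds ((bprod w).real {b | X b ∈ C})) := by
    intro C dC
    have hev : ∀ b, ∀ᶠ n in Filter.atTop, (X (toB (rs (U n) b)) ∈ C ↔ X b ∈ C) := by
      intro b
      have : ∀ᶠ n in Filter.atTop, ∀ k ∈ F, X (toB (rs (U n) b)) k = X b k := by
        rw [Filter.eventually_all_finset]
        intro k _
        exact hU b k
      filter_upwards [this] with n hn
      exact ⟨fun h => dC _ _ hn h, fun h => dC _ _ (fun k hk => (hn k hk).symm) h⟩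
    have hpt : ∀ b, Filter.Tendsto (fun n => if X (toB (rs (U n) b)) ∈ C then (1 : ℝ) else 0)
        Filter.atTop (nhds (if X b ∈ C then (1 : ℝ) else 0)) := by
      intro b
      refine tendsto_const_nhds.congr' ?_
      filter_upwards [hev b] with n hn
      simp [hn]
    have hm : ∀ n, Measurable (fun b => if X (toB (rs (U n) b)) ∈ C then (1 : ℝ) else 0) :=
      fun n => rs_meas (U n) (fun S => if X (toB S) ∈ C then (1 : ℝ) else 0)
    have hml : Measurable (fun b => if X b ∈ C then (1 : ℝ) else 0) :=
      measurable_of_tendsto_metrizable hm (tendsto_pi_nhds.2 hpt)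
    have hms : MeasurableSet {b | X b ∈ C} := by
      have := hml (measurableSet_singleton (1 : ℝ))
      convert this using 1
      ext b
      simp
    have h1 := tendsto_integral_of_dominated_convergence (μ := bprod w) (fun _ => (1 : ℝ))
      (fun n => (hm n).aestronglyMeasurable) (integrable_const _)
      (fun n => Filter.Eventually.of_forall fun b => by split_ifs <;> simp)
      (Filter.Eventually.of_forall hpt)
    have h2 : ∫ b, (if X b ∈ C then (1 : ℝ) else 0) ∂(bprod w) = (bprod w).real {b | X b ∈ C} := by
      rw [← integral_indicator_one hms]
      rfl
    rw [h2] at h1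
    refine h1.congr fun n => ?_
    exact rs_integral w (U n) (fun S => if X (toB S) ∈ C then (1 : ℝ) else 0)
  have lA := hlim A dA
  have lB := hlim B dB
  have lAB := hlim (A ∩ B) (fun x y h hx => ⟨dA x y h hx.1, dB x y h hx.2⟩)
  refine le_of_tendsto_of_tendsto' (lA.mul lB) lAB fun n => ?_
  have hmonoInd : ∀ C : Set (K → Bool), (∀ x y : K → Bool, x ≤ y → x ∈ C → y ∈ C) →
      ∀ x y, x ≤ y → (if x ∈ C then (1 : ℝ) else 0) ≤ (if y ∈ C then (1 : ℝ) else 0) := by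
    intro C hC x y hxy
    by_cases hx : x ∈ C
    · simp [hx, hC x y hxy hx]
    · simp only [hx, if_false]; split_ifs <;> simp
  refine (fkg_explore (fun i => (w i).2) _ _ ?_ (U n) ∅).trans (le_of_eq ?_)
  · intro O W hW
    obtain ⟨e, he, h | h⟩ := hE O W hW
    · exact ⟨e, he, Or.inl fun η hη => ⟨hmonoInd A mA _ _ (h η hη), hmonoInd B mB _ _ (h η hη)⟩⟩
    · exact ⟨e, he, Or.inr fun η hη => ⟨hmonoInd A mA _ _ (h η hη), hmonoInd B mB _ _ (h η hη)⟩⟩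
  · congr 1
    funext S
    by_cases h1 : X (toB S) ∈ A <;> by_cases h2 : X (toB S) ∈ B <;> simp [h1, h2]

end prodm

end DaC

namespace DaC

/-! ### Cluster representatives and the exploration property of the colours -/

/-- edge configuration from the set of open edges -/
noncomputable def etaOf (ω : V × Bool → Bool) : EdgeCfg :=
  fun u v => boolOf (SqAdj u v) && ω (edgeOf u v)

/-- colour configuration from edges and vertex labels -/
noncomputable def xiOf (ω : V × Bool → Bool) (y : V → Bool) : V → Bool :=
  fun v => y (clusterRep (etaOf ω) v)

lemma boolOf_iff (P : Prop) : boolOf P = true ↔ P := by simp [boolOf]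

lemma etaOf_iff (ω : V × Bool → Bool) (u v : V) : etaOf ω u v = true ↔ Rbd ω u v := by
  simp [etaOf, Rbd, boolOf_iff]

lemma conn_iff (ω : V × Bool → Bool) (u v : V) :
    Conn (etaOf ω) u v ↔ Relation.ReflTransGen (Rbd ω) u v := by
  unfold Conn
  simp_rw [etaOf_iff]

lemma rtg_symm {R : V → V → Prop} (hR : Good R) {u v : V} (h : Relation.ReflTransGen R u v) :
    Relation.ReflTransGen R v u := by
  induction h with
  | refl => exact .refl
  | tail _ hab ih => exact Relation.ReflTransGen.head (hR _ _ hab).2 ih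

lemma conn_symm {ω : V × Bool → Bool} {u v : V} (h : Conn (etaOf ω) u v) : Conn (etaOf ω) v u := by
  rw [conn_iff] at *
  exact rtg_symm (good_Rbd ω) h

lemma conn_mono {ω ω' : V × Bool → Bool} (h : ω ≤ ω') {u v : V} (hc : Conn (etaOf ω) u v) :
    Conn (etaOf ω') u v := by
  rw [conn_iff] at *
  exact Relation.ReflTransGen.mono (fun a b hab => ⟨hab.1, h (edgeOf a b) hab.2⟩) _ _ hc

lemma rep_spec (η : EdgeCfg) (v : V) : Conn η v (clusterRep η v) ∧
    ∀ w, Conn η v w → Encodable.encode (clusterRep η v) ≤ Encodable.encode w := by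
  have hne : (Encodable.encode '' pCluster η v).Nonempty :=
    ⟨_, v, (Relation.ReflTransGen.refl : Conn η v v), rfl⟩
  obtain ⟨w, hw, hww⟩ := Nat.sInf_mem hne
  have : clusterRep η v = w := by
    unfold clusterRep
    rw [← hww, Encodable.encodek]
    rfl
  rw [this]
  refine ⟨hw, fun z hz => ?_⟩
  rw [hww]
  exact Nat.sInf_le ⟨z, hz, rfl⟩

lemma rep_eq {η : EdgeCfg} {v w : V} (h1 : Conn η v w)
    (h2 : ∀ z, Conn η v z → Encodable.encode w ≤ Encodable.encode z) : clusterRep η v = w := by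
  obtain ⟨h3, h4⟩ := rep_spec η v
  exact Encodable.encode_injective (le_antisymm (h4 _ h1) (h2 _ h3))

lemma rep_conn {ω : V × Bool → Bool} {u v : V} (h : Conn (etaOf ω) u v) :
    clusterRep (etaOf ω) u = clusterRep (etaOf ω) v := by
  obtain ⟨h3, h4⟩ := rep_spec (etaOf ω) v
  exact rep_eq (h.trans h3) fun z hz => h4 z ((conn_symm h).trans hz)

lemma rep_eq_iff (ω : V × Bool → Bool) (u v : V) :
    clusterRep (etaOf ω) u = clusterRep (etaOf ω) v ↔ Conn (etaOf ω) u v := by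
  refine ⟨fun h => ?_, rep_conn⟩
  have h1 := (rep_spec (etaOf ω) u).1
  have h2 := (rep_spec (etaOf ω) v).1
  rw [h] at h1
  exact h1.trans (conn_symm h2)

lemma rep_congr {η η' : EdgeCfg} {v : V} (h : ∀ w, Conn η v w ↔ Conn η' v w) :
    clusterRep η v = clusterRep η' v := by
  obtain ⟨h3, h4⟩ := rep_spec η' v
  exact rep_eq ((h _).2 h3) fun z hz => h4 z ((h z).1 hz)

/-- second endpoint of an edge -/
def eEnd (e : V × Bool) : V := if e.2 then (e.1.1, e.1.2 + 1) else (e.1.1 + 1, e.1.2)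

lemma adj_eEnd (e : V × Bool) : SqAdj e.1 (eEnd e) := by
  obtain ⟨⟨x, y⟩, b⟩ := e
  cases b <;> simp [eEnd, SqAdj]

lemma edgeOf_eEnd (e : V × Bool) : edgeOf e.1 (eEnd e) = e := by
  obtain ⟨⟨x, y⟩, b⟩ := e
  cases b <;> simp [eEnd, edgeOf]

lemma edgeOf_ends {a b : V} (h : SqAdj a b) :
    (a = (edgeOf a b).1 ∧ b = eEnd (edgeOf a b)) ∨ (b = (edgeOf a b).1 ∧ a = eEnd (edgeOf a b)) := by
  obtain ⟨x, y⟩ := a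
  obtain ⟨x', y'⟩ := b
  rcases sqAdj_cases h with ⟨h1, h3⟩ | ⟨h1, h3⟩ | ⟨h1, h3⟩ | ⟨h1, h3⟩ <;> simp only at h1 h3
  · subst h1 h3; left; simp [edgeOf, eEnd]
  · obtain rfl : x = x' + 1 := by omega
    subst h3; right; simp [edgeOf, eEnd]
  · subst h1 h3; left; simp [edgeOf, eEnd]
  · obtain rfl : y = y' + 1 := by omega
    subst h1; right; simp [edgeOf, eEnd]

/-- index set of the product space -/
abbrev Idx : Type := (V × Bool) ⊕ V

/-- colour field on the product space -/
noncomputable def xiB (b : Idx → Bool) : V → Bool := xiOf (b ∘ Sum.inl) (b ∘ Sum.inr)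

lemma xi_explor : Explor xiB := by
  classical
  intro O U hU
  by_cases hv : ∃ v : V, Sum.inr v ∈ U
  · obtain ⟨v, hv⟩ := hv
    refine ⟨_, hv, Or.inl fun η _ z => ?_⟩
    have : toB (insert (Sum.inr v : Idx) O ∪ η) ∘ Sum.inl = toB (O ∪ η) ∘ Sum.inl := by
      funext e; simp [toB]
    unfold xiB xiOf
    rw [this]
    simp only [toB, Function.comp]
    intro h
    simp only [decide_eq_true_eq, Finset.mem_union, Finset.mem_insert] at *
    tauto
  · push Not at hv
    set lab : V → ℕ := fun z => Encodable.encode (clusterRep (etaOf (toB O ∘ Sum.inl)) z) with hlab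
    let f : Idx → ℕ := fun i => Sum.elim (fun e => min (lab e.1) (lab (eEnd e))) (fun _ => 0) i
    obtain ⟨i, hi, hmin⟩ := Finset.exists_min_image U f hU
    rcases i with e | v
    swap
    · exact absurd hi (hv v)
    obtain ⟨u, hu, hul⟩ : ∃ u, (u = e.1 ∨ u = eEnd e) ∧ lab u = f (Sum.inl e) := by
      rcases le_total (lab e.1) (lab (eEnd e)) with h | h
      · exact ⟨_, Or.inl rfl, by simp [f, h]⟩
      · exact ⟨_, Or.inr rfl, by simp [f, h]⟩
    -- representative of `u` in any intermediate configuration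
    have key : ∀ S : Finset Idx, O ⊆ S → S ⊆ O ∪ U →
        clusterRep (etaOf (toB S ∘ Sum.inl)) u = clusterRep (etaOf (toB O ∘ Sum.inl)) u := by
      intro S h1 h2
      refine rep_eq (conn_mono ?_ (rep_spec _ u).1) fun z hz => ?_
      · intro e'
        simp only [Function.comp, toB]
        intro h
        simp only [decide_eq_true_eq] at *
        exact h1 h
      · have hz' : lab u ≤ lab z := by
          rw [conn_iff] at hz
          induction hz with
          | refl => exact le_rfl
          | @tail a c _ hac ih =>
            have hm : (Sum.inl (edgeOf a c) : Idx) ∈ S := by simpa [toB] using hac.2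
            rcases Finset.mem_union.1 (h2 hm) with h | h
            · have : lab a = lab c := by
                simp only [hlab]
                rw [rep_conn (u := a) (v := c)]
                rw [conn_iff]
                exact .single ⟨hac.1, by simpa [toB] using h⟩
              omega
            · have h5 := hmin _ h
              rw [hul]
              refine h5.trans ?_
              simp only [f, Sum.elim_inl]
              rcases edgeOf_ends hac.1 with h6 | h6
              · conv_rhs => rw [h6.2]
                exact min_le_right _ _
              · conv_rhs => rw [h6.1]
                exact min_le_left _ _
        exact hz'.trans ((rep_spec _ z).2 _ .refl)
    set vs := clusterRep (etaOf (toB O ∘ Sum.inl)) u with hvs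
    have hcol : ∀ S : Finset Idx, O ⊆ S → S ⊆ O ∪ U → ∀ z, Conn (etaOf (toB S ∘ Sum.inl)) z u →
        xiB (toB S) z = decide (Sum.inr vs ∈ O) := by
      intro S h1 h2 z hz
      unfold xiB xiOf
      rw [rep_conn hz, key S h1 h2]
      simp only [Function.comp, toB]
      congr 1
      apply propext
      constructor
      · intro h
        rcases Finset.mem_union.1 (h2 h) with h | h
        · exact h
        · exact absurd h (hv _)
      · exact fun h => h1 h
    have hsame : ∀ S : Finset Idx, ∀ z,
        ¬ Conn (etaOf (toB (insert (Sum.inl e) S) ∘ Sum.inl)) z u →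
        xiB (toB (insert (Sum.inl e) S)) z = xiB (toB S) z := by
      intro S z hz
      unfold xiB xiOf
      have hle : (toB S ∘ Sum.inl : V × Bool → Bool) ≤ toB (insert (Sum.inl e) S) ∘ Sum.inl := by
        intro e'
        simp only [Function.comp, toB]
        intro h
        simp only [decide_eq_true_eq] at *
        exact Finset.mem_insert_of_mem h
      have hopen : (toB (insert (Sum.inl e) S) ∘ Sum.inl) e = true := by simp [toB]
      have hends : Conn (etaOf (toB (insert (Sum.inl e) S) ∘ Sum.inl)) e.1 (eEnd e) := by
        rw [conn_iff]
        exact .single ⟨adj_eEnd e, by rw [edgeOf_eEnd]; exact hopen⟩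
      have hend : ∀ a, (a = e.1 ∨ a = eEnd e) →
          Conn (etaOf (toB (insert (Sum.inl e) S) ∘ Sum.inl)) a u := by
        rintro a (rfl | rfl) <;> rcases hu with rfl | rfl
        · exact .refl
        · exact hends
        · exact conn_symm hends
        · exact .refl
      have hrep : clusterRep (etaOf (toB (insert (Sum.inl e) S) ∘ Sum.inl)) z =
          clusterRep (etaOf (toB S ∘ Sum.inl)) z := by
        refine rep_congr fun w => ⟨fun h => ?_, conn_mono hle⟩
        have h' := h
        rw [conn_iff] at h'
        rw [conn_iff]
        induction h' with
        | refl => exact .refl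
        | @tail a c hza hac ih =>
          refine (ih ((conn_iff _ _ _).2 hza)).tail ⟨hac.1, ?_⟩
          have hm : edgeOf a c = e ∨ Sum.inl (edgeOf a c) ∈ S := by
            simpa [toB] using hac.2
          rcases hm with hm | hm
          · exfalso
            apply hz
            refine Relation.ReflTransGen.trans ((conn_iff _ _ _).2 hza) (hend a ?_)
            rcases edgeOf_ends hac.1 with h6 | h6
            · left; rw [← hm]; exact h6.1
            · right; rw [← hm]; exact h6.2
          · simpa [toB] using hm
      rw [hrep]
      simp [toB]
    refine ⟨_, hi, ?_⟩
    have hins : ∀ η : Finset Idx, insert (Sum.inl e) O ∪ η = insert (Sum.inl e) (O ∪ η) :=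
      fun η => Finset.insert_union _ _ _
    have hmain : ∀ η ⊆ U.erase (Sum.inl e), ∀ z,
        xiB (toB (insert (Sum.inl e) O ∪ η)) z = decide (Sum.inr vs ∈ O) ∨
        xiB (toB (insert (Sum.inl e) O ∪ η)) z = xiB (toB (O ∪ η)) z := by
      intro η hη z
      by_cases hz : Conn (etaOf (toB (insert (Sum.inl e) (O ∪ η)) ∘ Sum.inl)) z u
      · left
        rw [hins]
        refine hcol _ ?_ ?_ z hz
        · exact Finset.subset_union_left.trans (Finset.subset_insert _ _)
        · refine Finset.insert_subset (Finset.mem_union_right _ hi) ?_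
          exact Finset.union_subset_union_right (hη.trans (Finset.erase_subset _ _))
      · right
        rw [hins]
        exact hsame _ z hz
    by_cases hc : Sum.inr vs ∈ O
    · left
      intro η hη z
      rcases hmain η hη z with h | h
      · rw [h]; simp [hc]
      · rw [h]
    · right
      intro η hη z
      rcases hmain η hη z with h | h
      · rw [h]; simp [hc]
      · rw [h]

lemma id_explor {ι : Type*} [DecidableEq ι] : Explor (fun b : ι → Bool => b) := by
  intro O U ⟨e, he⟩
  refine ⟨e, he, Or.inl fun η _ z => ?_⟩
  simp only [toB]
  intro h
  simp only [decide_eq_true_eq, Finset.mem_union, Finset.mem_insert] at *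
  tauto

lemma exhaust (ι : Type*) [Encodable ι] [DecidableEq ι] :
    ∃ U : ℕ → Finset ι, Monotone U ∧ ∀ i, ∀ᶠ n in Filter.atTop, i ∈ U n := by
  refine ⟨fun n => (Finset.range n).biUnion fun k => ((Encodable.decode (α := ι) k).toFinset), ?_, ?_⟩
  · intro m n h
    exact Finset.biUnion_subset_biUnion_of_subset_left _ (Finset.range_mono h)
  · intro i
    filter_upwards [Filter.eventually_gt_atTop (Encodable.encode i)] with n hn
    rw [Finset.mem_biUnion]
    exact ⟨_, Finset.mem_range.2 hn, by simp⟩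

lemma rs_apply {ι : Type*} [DecidableEq ι] (U : Finset ι) (b : ι → Bool) (i : ι) :
    toB (rs U b) i = true ↔ i ∈ U ∧ b i = true := by
  simp [toB, rs]

lemma id_approx {ι : Type*} [Encodable ι] [DecidableEq ι] : Approx (fun b : ι → Bool => b) := by
  obtain ⟨U, -, hU⟩ := exhaust ι
  refine ⟨U, fun b i => ?_⟩
  filter_upwards [hU i] with n hn
  rw [Bool.eq_iff_iff, rs_apply]
  tauto

lemma xi_approx : Approx xiB := by
  obtain ⟨U, -, hU⟩ := exhaust Idx
  refine ⟨U, fun b v => ?_⟩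
  have hle : ∀ n, (toB (rs (U n) b) ∘ Sum.inl : V × Bool → Bool) ≤ b ∘ Sum.inl := by
    intro n e h
    simp only [Function.comp] at *
    rw [rs_apply] at h
    exact h.2
  have hc : ∀ w, Conn (etaOf (b ∘ Sum.inl)) v w →
      ∀ᶠ n in Filter.atTop, Conn (etaOf (toB (rs (U n) b) ∘ Sum.inl)) v w := by
    intro w hw
    rw [conn_iff] at hw
    simp_rw [conn_iff]
    induction hw with
    | refl => exact Filter.Eventually.of_forall fun _ => .refl
    | @tail a c _ hac ih =>
      filter_upwards [ih, hU (Sum.inl (edgeOf a c))] with n h1 h2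
      exact h1.tail ⟨hac.1, (rs_apply _ _ _).2 ⟨h2, hac.2⟩⟩
  obtain ⟨h3, h4⟩ := rep_spec (etaOf (b ∘ Sum.inl)) v
  filter_upwards [hc _ h3, hU (Sum.inr (clusterRep (etaOf (b ∘ Sum.inl)) v))] with n h1 h2
  have : clusterRep (etaOf (toB (rs (U n) b) ∘ Sum.inl)) v = clusterRep (etaOf (b ∘ Sum.inl)) v :=
    rep_eq h1 fun z hz => h4 z (conn_mono (hle n) hz)
  unfold xiB xiOf
  rw [this, Bool.eq_iff_iff]
  simp only [Function.comp]
  rw [rs_apply]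
  tauto

end DaC

namespace DaC

/-! ### From the product measures to percolation laws -/

lemma approx_meas {ι K : Type*} [DecidableEq ι] {X : (ι → Bool) → K → Bool} (hA : Approx X) :
    Measurable X := by
  obtain ⟨U, hU⟩ := hA
  refine measurable_pi_iff.2 fun k => measurable_to_bool ?_
  have : (fun b => X b k) ⁻¹' {true} =
      ⋃ N : ℕ, ⋂ n : ℕ, {b | N ≤ n → X (toB (rs (U n) b)) k = true} := by
    ext b
    simp only [Set.mem_preimage, Set.mem_singleton_iff, Set.mem_iUnion, Set.mem_iInter,
      Set.mem_ofPred_eq]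
    constructor
    · intro h
      obtain ⟨N, hN⟩ := Filter.eventually_atTop.1 (hU b k)
      exact ⟨N, fun n hn => by rw [hN n hn, h]⟩
    · rintro ⟨N, hN⟩
      obtain ⟨M, hM⟩ := Filter.eventually_atTop.1 (hU b k)
      rw [← hM (max M N) (le_max_left _ _)]
      exact hN _ (le_max_right _ _)
  rw [this]
  refine MeasurableSet.iUnion fun N => MeasurableSet.iInter fun n => ?_
  by_cases hn : N ≤ n
  · simp only [hn, true_imp_iff]
    have h := rs_meas (U n) (fun S => if X (toB S) k = true then (1 : ℝ) else 0)
      (measurableSet_singleton (1 : ℝ))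
    convert h using 1
    ext b
    simp
  · simp [hn]

/-- a relation read off from a boolean field, locally and monotonically -/
structure LocRel {K : Type*} (Rel : (K → Bool) → V → V → Prop) : Prop where
  good : ∀ x, Good (Rel x)
  mono : ∀ x y : K → Bool, x ≤ y → ∀ a b, Rel x a b → Rel y a b
  loc : ∀ a b, ∃ F : Finset K, ∀ x y : K → Bool, (∀ k ∈ F, x k = y k) → Rel x a b → Rel y a b

lemma loc_Rcol : LocRel Rcol := by
  refine ⟨good_Rcol, fun x y h a b hab => ⟨hab.1, h a hab.2.1, h b hab.2.2⟩, fun a b => ?_⟩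
  refine ⟨{a, b}, fun x y h hab => ⟨hab.1, ?_, ?_⟩⟩
  · rw [← h a (by simp)]; exact hab.2.1
  · rw [← h b (by simp)]; exact hab.2.2

lemma loc_Rbd : LocRel Rbd := by
  refine ⟨good_Rbd, fun x y h a b hab => ⟨hab.1, h _ hab.2⟩, fun a b => ?_⟩
  exact ⟨{edgeOf a b}, fun x y h hab => ⟨hab.1, by rw [← h _ (by simp)]; exact hab.2⟩⟩

lemma meas_local {K : Type*} (C : Set (K → Bool)) (F : Finset K)
    (dC : ∀ x y : K → Bool, (∀ k ∈ F, x k = y k) → x ∈ C → y ∈ C) : MeasurableSet C := by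
  have : C = F.restrict ⁻¹' (F.restrict '' C) := by
    refine Set.Subset.antisymm (Set.subset_preimage_image _ _) ?_
    rintro y ⟨x, hx, hxy⟩
    exact dC x y (fun k hk => congrFun hxy ⟨k, hk⟩) hx
  rw [this]
  exact (Finset.measurable_restrict F) (Set.toFinite _).measurableSet

section loc
variable {K : Type*} {Rel : (K → Bool) → V → V → Prop}

lemma inc_approx (h : LocRel Rel) {Q : (V → V → Prop) → Prop} (hQ : Inc Q) :
    ∃ C : ℕ → Set (K → Bool), Monotone C ∧ (∀ x, Q (Rel x) ↔ ∃ n, x ∈ C n) ∧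
      (∀ n, ∀ x y : K → Bool, x ≤ y → x ∈ C n → y ∈ C n) ∧
      (∀ n, ∃ F : Finset K, ∀ x y : K → Bool, (∀ k ∈ F, x k = y k) → x ∈ C n → y ∈ C n) := by
  classical
  obtain ⟨B, hB, hB'⟩ := exhaust V
  refine ⟨fun n => {x | Q (fun a b => Rel x a b ∧ a ∈ B n ∧ b ∈ B n)}, ?_, ?_, ?_, ?_⟩
  · intro m n hmn x hx
    exact hQ.1 _ _ (fun a b hab => ⟨hab.1, hB hmn hab.2.1, hB hmn hab.2.2⟩) hx
  · intro x
    constructor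
    · intro hx
      obtain ⟨F, hF⟩ := hQ.2 _ hx
      have : ∀ᶠ n in Filter.atTop, ∀ v ∈ F, v ∈ B n := by
        rw [Filter.eventually_all_finset]
        intro v _
        exact hB' v
      obtain ⟨n, hn⟩ := this.exists
      exact ⟨n, hQ.1 _ _ (fun a b hab => ⟨hab.1, hn _ hab.2.1, hn _ hab.2.2⟩) hF⟩
    · rintro ⟨n, hn⟩
      exact hQ.1 _ _ (fun a b hab => hab.1) hn
  · intro n x y hxy hx
    exact hQ.1 _ _ (fun a b hab => ⟨h.mono x y hxy a b hab.1, hab.2⟩) hx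
  · intro n
    choose F hF using h.loc
    refine ⟨(B n).biUnion fun a => (B n).biUnion fun b => F a b, fun x y hxy hx => ?_⟩
    refine hQ.1 _ _ (fun a b hab => ⟨hF a b x y (fun k hk => hxy k ?_) hab.1, hab.2⟩) hx
    rw [Finset.mem_biUnion]
    refine ⟨a, hab.2.1, ?_⟩
    rw [Finset.mem_biUnion]
    exact ⟨b, hab.2.2, hk⟩

lemma inc_meas (h : LocRel Rel) {Q : (V → V → Prop) → Prop} (hQ : Inc Q) :
    MeasurableSet {x : K → Bool | Q (Rel x)} := by
  obtain ⟨C, -, hC, -, hd⟩ := inc_approx h hQ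
  have : {x : K → Bool | Q (Rel x)} = ⋃ n, C n := by
    ext x; simp [hC]
  rw [this]
  refine MeasurableSet.iUnion fun n => ?_
  obtain ⟨F, hF⟩ := hd n
  exact meas_local _ F hF

lemma inc_fkg (h : LocRel Rel) {ι : Type*} [DecidableEq ι] {X : (ι → Bool) → K → Bool}
    (w : ι → unitInterval) (hE : Explor X) (hA : Approx X)
    {Q Q' : (V → V → Prop) → Prop} (hQ : Inc Q) (hQ' : Inc Q') :
    (bprod w).real {b | Q (Rel (X b))} * (bprod w).real {b | Q' (Rel (X b))} ≤
      (bprod w).real {b | Q (Rel (X b)) ∧ Q' (Rel (X b))} := by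
  classical
  obtain ⟨C, hCm, hC, hCi, hd⟩ := inc_approx h hQ
  obtain ⟨C', hCm', hC', hCi', hd'⟩ := inc_approx h hQ'
  have lim : ∀ D : ℕ → Set (K → Bool), Monotone D →
      Filter.Tendsto (fun n => (bprod w).real {b | X b ∈ D n}) Filter.atTop
        (nhds ((bprod w).real {b | ∃ n, X b ∈ D n})) := by
    intro D hD
    have h1 : Monotone fun n => {b : ι → Bool | X b ∈ D n} := fun m n hmn b hb => hD hmn hb
    have h2 := tendsto_measure_iUnion_atTop (μ := bprod w) h1
    have h3 := (ENNReal.tendsto_toReal (measure_ne_top (bprod w) _)).comp h2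
    have h4 : {b : ι → Bool | ∃ n, X b ∈ D n} = ⋃ n, {b : ι → Bool | X b ∈ D n} := by
      ext b; simp
    rw [h4]
    exact h3
  have l1 := lim C hCm
  have l2 := lim C' hCm'
  have l3 := lim (fun n => C n ∩ C' n) (fun m n hmn => Set.inter_subset_inter (hCm hmn) (hCm' hmn))
  have e1 : {b | Q (Rel (X b))} = {b | ∃ n, X b ∈ C n} := by ext b; simp [hC]
  have e2 : {b | Q' (Rel (X b))} = {b | ∃ n, X b ∈ C' n} := by ext b; simp [hC']
  have e3 : {b | Q (Rel (X b)) ∧ Q' (Rel (X b))} = {b | ∃ n, X b ∈ C n ∩ C' n} := by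
    ext b
    simp only [Set.mem_ofPred_eq, hC, hC', Set.mem_inter_iff]
    constructor
    · rintro ⟨⟨m, hm⟩, ⟨n, hn⟩⟩
      exact ⟨max m n, hCm (le_max_left _ _) hm, hCm' (le_max_right _ _) hn⟩
    · rintro ⟨n, h1, h2⟩
      exact ⟨⟨n, h1⟩, ⟨n, h2⟩⟩
  rw [e1, e2, e3]
  refine le_of_tendsto_of_tendsto' (l1.mul l2) l3 fun n => ?_
  obtain ⟨F, hF⟩ := hd n
  obtain ⟨F', hF'⟩ := hd' n
  exact fkg_local w hE hA (fun k => (measurable_pi_iff.1 (approx_meas hA)) k) (F ∪ F')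
    (fun x y hxy => hF x y fun k hk => hxy k (Finset.mem_union_left _ hk))
    (fun x y hxy => hF' x y fun k hk => hxy k (Finset.mem_union_right _ hk))
    (hCi n) (hCi' n)

/-- general construction of percolation laws -/
theorem percLaw_of (h : LocRel Rel) {ι : Type*} [DecidableEq ι] {X : (ι → Bool) → K → Bool}
    (w : ι → unitInterval) (hE : Explor X) (hA : Approx X)
    (inv : ∀ σ : V ≃ V, IsAut σ → ∃ τ : K → K,
      (∀ x : K → Bool, (fun a b => Rel x (σ a) (σ b)) = Rel (x ∘ τ)) ∧
      ((bprod w).map X).map (fun x => x ∘ τ) = (bprod w).map X) :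
    PercLaw (fun Q => (bprod w).real {b | Q (Rel (X b))}) := by
  have hX := approx_meas hA
  refine ⟨fun Q => measureReal_nonneg, fun Q Q' hQ => ?_, fun Q Q' => ?_, fun Q Q' hQ hQ' => ?_, ?_⟩
  · exact measureReal_mono (fun b hb => hQ _ (h.good _) hb)
  · exact measureReal_union_le _ _
  · exact inc_fkg h w hE hA hQ hQ'
  · intro σ hσ Q hQ
    obtain ⟨τ, h1, h2⟩ := inv σ hσ
    have hm := inc_meas h hQ
    have hτ : Measurable (fun x : K → Bool => x ∘ τ) :=
      measurable_pi_iff.2 fun k => measurable_pi_apply _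
    simp only [h1, Measure.real]
    congr 1
    have e1 : (bprod w) {b | Q (Rel (X b))} = ((bprod w).map X) {x | Q (Rel x)} := by
      rw [Measure.map_apply hX hm]; rfl
    rw [e1, ← h2, Measure.map_apply hτ hm, Measure.map_apply hX (hτ hm)]
    rfl
end loc

/-! ### invariance -/

lemma bprod_comp_inj {ι κ : Type*} (w : ι → unitInterval) {f : κ → ι} (hf : Function.Injective f) :
    (bprod w).map (fun x => x ∘ f) = bprod (w ∘ f) :=
  Measure.map_infinitePi_infinitePi_of_inj hf

lemma meas_comp {ι κ : Type*} (f : κ → ι) : Measurable (fun x : ι → Bool => x ∘ f) :=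
  measurable_pi_iff.2 fun k => measurable_pi_apply _

lemma bprod_same_ker {α β : Type*} (t : unitInterval) (g₁ g₂ : α → β)
    (h : ∀ a b, g₁ a = g₁ b ↔ g₂ a = g₂ b) :
    (bprod (fun _ : β => t)).map (fun y => y ∘ g₁) = (bprod (fun _ : β => t)).map (fun y => y ∘ g₂) := by
  let k₁ : Set.range g₂ → β := fun z => g₁ z.2.choose
  have hk₁ : Function.Injective k₁ := by
    intro z z' hz
    apply Subtype.ext
    rw [← z.2.choose_spec, ← z'.2.choose_spec]
    exact (h _ _).1 hz
  let k₂ : Set.range g₂ → β := fun z => z.1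
  have hk₂ : Function.Injective k₂ := Subtype.val_injective
  let j : α → Set.range g₂ := fun a => ⟨g₂ a, a, rfl⟩
  have e1 : g₁ = k₁ ∘ j := by
    funext a
    exact (h _ _).2 (j a).2.choose_spec.symm
  have e2 : g₂ = k₂ ∘ j := rfl
  have key : ∀ k : Set.range g₂ → β, Function.Injective k →
      (bprod (fun _ : β => t)).map (fun y => y ∘ (k ∘ j)) =
        (bprod (fun _ : Set.range g₂ => t)).map (fun y => y ∘ j) := by
    intro k hk
    have := bprod_comp_inj (fun _ : β => t) hk
    have h2 : (fun _ : β => t) ∘ k = fun _ => t := rfl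
    rw [h2] at this
    rw [← this, Measure.map_map (meas_comp _) (meas_comp _)]
    rfl
  rw [e1, key k₁ hk₁]
  conv_rhs => rw [e2, key k₂ hk₂]

lemma bprod_sum {ι κ : Type*} (w₁ : ι → unitInterval) (w₂ : κ → unitInterval) :
    ((bprod w₁).prod (bprod w₂)).map (fun p => Sum.elim p.1 p.2) = bprod (Sum.elim w₁ w₂) := by
  have hm : Measurable (fun p : (ι → Bool) × (κ → Bool) => (Sum.elim p.1 p.2 : ι ⊕ κ → Bool)) := by
    refine measurable_pi_iff.2 fun i => ?_
    rcases i with i | i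
    · exact (measurable_pi_apply i).comp measurable_fst
    · exact (measurable_pi_apply i).comp measurable_snd
  refine Measure.eq_infinitePi _ fun s t ht => ?_
  rw [Measure.map_apply hm (MeasurableSet.pi s.countable_toSet fun i _ => ht i)]
  have : (fun p : (ι → Bool) × (κ → Bool) => (Sum.elim p.1 p.2 : ι ⊕ κ → Bool)) ⁻¹' (Set.pi s t) =
      (Set.pi s.toLeft fun i => t (Sum.inl i)) ×ˢ (Set.pi s.toRight fun i => t (Sum.inr i)) := by
    ext p
    simp only [Set.mem_preimage, Set.mem_pi, Set.mem_prod, Finset.mem_coe, Finset.mem_toLeft,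
      Finset.mem_toRight, Sum.forall, Sum.elim_inl, Sum.elim_inr]
  rw [this, Measure.prod_prod, bprod, bprod, Measure.infinitePi_pi _ (fun i _ => ht _),
    Measure.infinitePi_pi _ (fun i _ => ht _)]
  conv_rhs => rw [← Finset.toLeft_disjSum_toRight (u := s)]
  rw [Finset.prod_disjSum]
  rfl

/-- action of an automorphism on edges -/
def autE (σ : V → V) (e : V × Bool) : V × Bool := edgeOf (σ e.1) (σ (eEnd e))

lemma autE_edgeOf (σ : V → V) {a b : V} (h : SqAdj a b) :
    autE σ (edgeOf a b) = edgeOf (σ a) (σ b) := by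
  unfold autE
  rcases edgeOf_ends h with h1 | h1
  · rw [← h1.1, ← h1.2]
  · rw [← h1.1, ← h1.2, edgeOf_comm]

lemma edgeOf_inj {a b c d : V} (h : SqAdj a b) (h' : SqAdj c d) (he : edgeOf a b = edgeOf c d) :
    (a = c ∧ b = d) ∨ (a = d ∧ b = c) := by
  have h1 := edgeOf_ends h
  have h2 := edgeOf_ends h'
  rw [he] at h1
  rcases h1 with h1 | h1 <;> rcases h2 with h2 | h2
  · left; exact ⟨h1.1.trans h2.1.symm, h1.2.trans h2.2.symm⟩
  · right; exact ⟨h1.1.trans h2.1.symm, h1.2.trans h2.2.symm⟩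
  · right; exact ⟨h1.2.trans h2.2.symm, h1.1.trans h2.1.symm⟩
  · left; exact ⟨h1.2.trans h2.2.symm, h1.1.trans h2.1.symm⟩

lemma autE_inj {σ : V ≃ V} (hσ : IsAut σ) : Function.Injective (autE σ) := by
  intro e e' h
  rw [← edgeOf_eEnd e, ← edgeOf_eEnd e']
  rcases edgeOf_inj ((hσ _ _).2 (adj_eEnd e)) ((hσ _ _).2 (adj_eEnd e')) h with h1 | h1
  · rw [σ.injective h1.1, σ.injective h1.2]
  · rw [σ.injective h1.1, σ.injective h1.2, edgeOf_comm]

lemma Rbd_comp (ω : V × Bool → Bool) {σ : V ≃ V} (hσ : IsAut σ) :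
    (fun a b => Rbd ω (σ a) (σ b)) = Rbd (ω ∘ autE σ) := by
  funext a b
  simp only [Rbd, Function.comp, hσ a b, eq_iff_iff]
  refine and_congr_right fun h => ?_
  rw [autE_edgeOf _ h]

theorem percLaw_bond (q : unitInterval) :
    PercLaw (fun Q => (bprod (fun _ : V × Bool => q)).real {b | Q (Rbd b)}) := by
  refine percLaw_of loc_Rbd _ id_explor id_approx fun σ hσ => ⟨autE σ, fun x => Rbd_comp x hσ, ?_⟩
  simp only [Measure.map_id']
  exact bprod_comp_inj _ (autE_inj hσ)

lemma conn_aut (ω : V × Bool → Bool) {σ : V ≃ V} (hσ : IsAut σ) (u v : V) :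
    Conn (etaOf ω) (σ u) (σ v) ↔ Conn (etaOf (ω ∘ autE σ)) u v := by
  rw [conn_iff, conn_iff, ← Rbd_comp ω hσ]
  constructor
  · intro h
    have := Relation.ReflTransGen.lift (p := fun a b => Rbd ω (σ a) (σ b)) σ.symm
      (fun a b hab => by simpa [Function.onFun] using hab) _ _ h
    simpa [Function.onFun] using this
  · intro h
    exact Relation.ReflTransGen.lift (p := Rbd ω) σ (fun a b hab => hab) _ _ h

lemma meas_xiOf : Measurable (fun p : (V × Bool → Bool) × (V → Bool) => xiOf p.1 p.2) := by
  have hm : Measurable (fun p : (V × Bool → Bool) × (V → Bool) => (Sum.elim p.1 p.2 : Idx → Bool)) := by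
    refine measurable_pi_iff.2 fun i => ?_
    rcases i with i | i
    · exact (measurable_pi_apply i).comp measurable_fst
    · exact (measurable_pi_apply i).comp measurable_snd
  exact (approx_meas xi_approx).comp hm

/-- weights of the DaC model -/
def dw (q r : unitInterval) : Idx → unitInterval := Sum.elim (fun _ => q) (fun _ => r)

lemma xi_law (q r : unitInterval) : (bprod (dw q r)).map xiB =
    ((bprod (fun _ : V × Bool => q)).prod (bprod (fun _ : V => r))).map (fun p => xiOf p.1 p.2) := by
  have hm : Measurable (fun p : (V × Bool → Bool) × (V → Bool) => (Sum.elim p.1 p.2 : Idx → Bool)) := by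
    refine measurable_pi_iff.2 fun i => ?_
    rcases i with i | i
    · exact (measurable_pi_apply i).comp measurable_fst
    · exact (measurable_pi_apply i).comp measurable_snd
  rw [dw, ← bprod_sum, Measure.map_map (approx_meas xi_approx) hm]
  rfl

lemma xi_inv (q r : unitInterval) {σ : V ≃ V} (hσ : IsAut σ) :
    ((bprod (dw q r)).map xiB).map (fun x => x ∘ σ) = (bprod (dw q r)).map xiB := by
  rw [xi_law, Measure.map_map (meas_comp _) meas_xiOf]
  ext A hA
  have hA' := meas_xiOf hA
  rw [Measure.map_apply ((meas_comp _).comp meas_xiOf) hA, Measure.map_apply meas_xiOf hA,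
    Measure.prod_apply (((meas_comp σ).comp meas_xiOf) hA), Measure.prod_apply hA']
  set F : (V × Bool → Bool) → ℝ≥0∞ :=
    fun ω => bprod (fun _ : V => r) (Prod.mk ω ⁻¹' ((fun p : (V × Bool → Bool) × (V → Bool) =>
      xiOf p.1 p.2) ⁻¹' A)) with hF
  have hFm : Measurable F := measurable_measure_prodMk_left hA'
  have e : ∫⁻ ω, F ω ∂(bprod (fun _ : V × Bool => q)) =
      ∫⁻ ω, F (ω ∘ autE σ) ∂(bprod (fun _ : V × Bool => q)) := by
    rw [← lintegral_map (f := F) hFm (meas_comp (autE σ)), bprod_comp_inj _ (autE_inj hσ)]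
    rfl
  rw [e]
  refine lintegral_congr fun ω => ?_
  simp only [hF]
  have hk := bprod_same_ker r (fun v => clusterRep (etaOf ω) (σ v))
    (fun v => clusterRep (etaOf (ω ∘ autE σ)) v) (fun a b => by
      rw [rep_eq_iff, rep_eq_iff, conn_aut ω hσ])
  have h2 := congrArg (fun m => m A) hk
  simp only at h2
  rw [Measure.map_apply (meas_comp _) hA, Measure.map_apply (meas_comp _) hA] at h2
  exact h2

theorem percLaw_col (q r : unitInterval) :
    PercLaw (fun Q => (bprod (dw q r)).real {b | Q (Rcol (xiB b))}) :=
  percLaw_of loc_Rcol _ xi_explor xi_approx fun σ hσ =>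
    ⟨σ, fun x => Rcol_comp x hσ, xi_inv q r hσ⟩

end DaC

namespace DaC

/-! ### Infinite clusters -/

/-- the cluster of `u` is infinite -/
def InfC (R : V → V → Prop) (u : V) : Prop := {w | Relation.ReflTransGen R u w}.Infinite

lemma meas_rtg {Ω : Type*} [MeasurableSpace Ω] {R : Ω → V → V → Prop}
    (h : ∀ a b, MeasurableSet {x | R x a b}) (u v : V) :
    MeasurableSet {x | Relation.ReflTransGen (R x) u v} := by
  let T : ℕ → V → Set Ω := fun n => Nat.rec (fun v => {_x | u = v})
    (fun _ S v => ⋃ w, S w ∩ {x | R x w v}) n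
  have hT : ∀ n v, MeasurableSet (T n v) := by
    intro n
    induction n with
    | zero => intro v; exact MeasurableSet.const _
    | succ n ih => intro v; exact MeasurableSet.iUnion fun w => (ih w).inter (h w v)
  have : {x | Relation.ReflTransGen (R x) u v} = ⋃ n, T n v := by
    ext x
    simp only [Set.mem_ofPred_eq, Set.mem_iUnion]
    constructor
    · intro hx
      induction hx with
      | refl => exact ⟨0, rfl⟩
      | @tail a c _ hac ih =>
        obtain ⟨n, hn⟩ := ih
        exact ⟨n + 1, Set.mem_iUnion.2 ⟨a, hn, hac⟩⟩
    · rintro ⟨n, hn⟩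
      induction n generalizing v with
      | zero => obtain rfl : u = v := hn; exact .refl
      | succ n ih =>
        obtain ⟨w, hw, hw'⟩ := Set.mem_iUnion.1 hn
        exact (ih w hw).tail hw'
  rw [this]
  exact MeasurableSet.iUnion fun n => hT n v

lemma infinite_iff_finset (S : Set V) : S.Infinite ↔ ∀ F : Finset V, ∃ w, w ∉ F ∧ w ∈ S := by
  constructor
  · intro h F
    obtain ⟨w, hw, hw'⟩ := h.exists_notMem_finset F
    exact ⟨w, hw', hw⟩
  · intro h hS
    obtain ⟨w, hw, hw'⟩ := h hS.toFinset
    exact hw (hS.mem_toFinset.2 hw')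

lemma meas_infC {Ω : Type*} [MeasurableSpace Ω] {R : Ω → V → V → Prop}
    (h : ∀ a b, MeasurableSet {x | R x a b}) (u : V) : MeasurableSet {x | InfC (R x) u} := by
  have : {x | InfC (R x) u} =
      ⋂ F : Finset V, ⋃ w, {x | w ∉ F} ∩ {x | Relation.ReflTransGen (R x) u w} := by
    ext x
    simp only [InfC, infinite_iff_finset, Set.mem_ofPred_eq, Set.mem_iInter, Set.mem_iUnion,
      Set.mem_inter_iff]
  rw [this]
  exact MeasurableSet.iInter fun F => MeasurableSet.iUnion fun w =>
    (MeasurableSet.const _).inter (meas_rtg h u w)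

lemma bx_finite (m : ℤ) (z : V) : (bx m z).Finite := by
  refine ((Set.finite_Icc (z.1 - m) (z.1 + m)).prod (Set.finite_Icc (z.2 - m) (z.2 + m))).subset ?_
  intro v hv
  simp only [bx, Set.mem_ofPred_eq] at hv
  exact ⟨⟨hv.1, hv.2.1⟩, ⟨hv.2.2.1, hv.2.2.2⟩⟩

lemma infC_arm {R : V → V → Prop} (hR : Good R) (h : InfC R (0, 0)) {m : ℤ} (hm : 1 ≤ m) :
    ct (bx m (0, 0)) (0, 0) (bd m ∩ bx m (0, 0)) R := by
  obtain ⟨v, hv, hv'⟩ := h.exists_notMem_finite (bx_finite m (0, 0))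
  obtain ⟨l, g, hl, g0, hg, hin, hout⟩ := first_exit hv
    (B := bx m (0, 0)) (by simp only [bx, Set.mem_ofPred_eq]; omega) hv'
  have h1 := hin (l - 1) (by omega)
  have h2 := hg (l - 1) (by omega)
  rw [Nat.sub_add_cancel hl] at h2
  refine ⟨g (l - 1), ⟨?_, h1⟩, ?_⟩
  · simp only [bx, bd, Set.mem_ofPred_eq] at h1 hout ⊢
    rcases sqAdj_cases (hR _ _ h2).1 with h3 | h3 | h3 | h3 <;> omega
  · have := seq_rtg (R := fun a b => R a b ∧ a ∈ bx m (0, 0) ∧ b ∈ bx m (0, 0)) (n := l - 1) (f := g)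
      (fun i hi => ⟨hg i (by omega), hin i (by omega), hin (i + 1) (by omega)⟩)
      (Nat.zero_le (l - 1)) le_rfl
    rw [g0] at this
    exact this

/-- stability of infinite clusters under finite modifications -/
lemma infC_change {R R' : V → V → Prop} {D : Set V} (hD : D.Finite)
    (hfin : {w | ∃ a ∈ D, R a w}.Finite)
    (h : ∀ a b, R a b → a ∉ D → b ∉ D → R' a b) {u : V} (hu : InfC R u) : ∃ z, InfC R' z := by
  by_contra hcon
  push Not at hcon
  apply hu
  have hc : ∀ z, {w | Relation.ReflTransGen R' z w}.Finite := fun z => Set.not_infinite.1 (hcon z)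
  refine (hD.union ((hfin.insert u).biUnion fun z _ => hc z)).subset ?_
  intro w hw
  induction hw with
  | refl => exact Or.inr (Set.mem_biUnion (Set.mem_insert _ _) (Set.mem_ofPred_eq ▸ .refl))
  | @tail a c _ hac ih =>
    by_cases hcD : c ∈ D
    · exact Or.inl hcD
    right
    rcases ih with ih | ih
    · exact Set.mem_biUnion (x := c) (Set.mem_insert_of_mem _ ⟨a, ih, hac⟩) (by
        exact Relation.ReflTransGen.refl)
    · by_cases haD : a ∈ D
      · exact Set.mem_biUnion (x := c) (Set.mem_insert_of_mem _ ⟨a, haD, hac⟩) (by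
          exact Relation.ReflTransGen.refl)
      · obtain ⟨z, hz, hz'⟩ := Set.mem_iUnion₂.1 ih
        exact Set.mem_biUnion hz (Relation.ReflTransGen.tail hz' (h a c hac haD hcD))

lemma star_nbr_finite (a : V) : {w | StarAdj a w}.Finite := by
  refine (bx_finite 1 a).subset fun w hw => ?_
  simp only [bx, Set.mem_ofPred_eq]
  simp only [StarAdj, Set.mem_ofPred_eq] at hw
  have h1 : (a.1 - w.1) ^ 2 ≤ 2 := by
    rcases hw with h | h <;> nlinarith [sq_nonneg (a.2 - w.2), sq_nonneg (a.1 - w.1)]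
  have h2 : (a.2 - w.2) ^ 2 ≤ 2 := by
    rcases hw with h | h <;> nlinarith [sq_nonneg (a.2 - w.2), sq_nonneg (a.1 - w.1)]
  refine ⟨?_, ?_, ?_, ?_⟩ <;> nlinarith

lemma nbr_finite {R : V → V → Prop} (h : ∀ a b, R a b → StarAdj a b) {D : Set V} (hD : D.Finite) :
    {w | ∃ a ∈ D, R a w}.Finite := by
  refine (hD.biUnion fun a _ => star_nbr_finite a).subset ?_
  rintro w ⟨a, ha, haw⟩
  exact Set.mem_biUnion ha (h a w haw)

lemma infC_bond_change {ω ω' : V × Bool → Bool} (h : {e | ω e ≠ ω' e}.Finite)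
    (hi : ∃ u, InfC (Rbd ω) u) : ∃ u, InfC (Rbd ω') u := by
  obtain ⟨u, hu⟩ := hi
  refine infC_change (D := Prod.fst '' {e | ω e ≠ ω' e} ∪ eEnd '' {e | ω e ≠ ω' e})
    ((h.image _).union (h.image _)) (nbr_finite (fun a b hab => Or.inl hab.1)
      ((h.image _).union (h.image _))) ?_ hu
  intro a b hab ha hb
  refine ⟨hab.1, ?_⟩
  by_contra hc
  have hne : edgeOf a b ∈ {e | ω e ≠ ω' e} := by
    intro heq; rw [← heq] at hc; exact hc hab.2
  rcases edgeOf_ends hab.1 with h1 | h1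
  · exact ha (Or.inl ⟨_, hne, h1.1.symm⟩)
  · exact ha (Or.inr ⟨_, hne, h1.2.symm⟩)

/-! ### zero-one law -/

theorem zero_one {ι : Type*} (w : ι → unitInterval) {A : Set (ι → Bool)} (hA : MeasurableSet A)
    (hinv : ∀ x y : ι → Bool, {i | x i ≠ y i}.Finite → x ∈ A → y ∈ A) :
    bprod w A = 0 ∨ bprod w A = 1 := by
  classical
  let s : ι → MeasurableSpace (ι → Bool) := fun i => MeasurableSpace.comap (fun x => x i) inferInstance
  have hind : ProbabilityTheory.iIndep s (bprod w) :=
    ProbabilityTheory.iIndepFun_infinitePi (P := fun i => ber (w i)) (X := fun _ x => x)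
      (fun i => measurable_id)
  refine ProbabilityTheory.measure_zero_or_one_of_measurableSet_limsup (s := s)
    (f := Filter.cofinite) (p := Set.Finite) (ns := fun F : Finset ι => (F : Set ι))
    ?_ hind ?_ ?_ ?_ ?_ ?_
  · intro i
    exact (measurable_pi_apply i).comap_le
  · intro t ht
    exact ht.compl_mem_cofinite
  · intro F G
    exact ⟨F ∪ G, by simp, by simp⟩
  · intro F; exact F.finite_toSet
  · intro i; exact ⟨{i}, by simp⟩
  · rw [Filter.limsup_eq_iInf_iSup, MeasurableSpace.measurableSet_iInf]
    intro t
    rw [MeasurableSpace.measurableSet_iInf]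
    intro ht
    have hfin : tᶜ.Finite := ht
    let g : (ι → Bool) → ι → Bool := fun x i => if i ∈ t then x i else false
    have hg : @Measurable _ _ (⨆ a ∈ t, s a) _ g := by
      refine @measurable_pi_iff _ _ _ (⨆ a ∈ t, s a) _ _ |>.2 fun i => ?_
      by_cases hi : i ∈ t
      · simp only [g, hi, if_true]
        have h1 : @Measurable _ _ (s i) _ (fun x : ι → Bool => x i) := comap_measurable _
        exact h1.mono (le_iSup₂_of_le i hi le_rfl) le_rfl
      · simp only [g, hi, if_false]
        exact measurable_const
    have : A = g ⁻¹' A := by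
      have hd : ∀ x, {i | x i ≠ g x i}.Finite := fun x => hfin.subset fun i hi hit => by
        apply hi; simp [g, hit]
      ext x
      refine ⟨hinv _ _ (hd x), hinv _ _ ?_⟩
      have := hd x
      simpa only [ne_comm] using this
    rw [this]
    exact hg hA

end DaC

namespace DaC

lemma squeeze {Ω : Type*} [MeasurableSpace Ω] {μ : Measure Ω} [IsProbabilityMeasure μ]
    {E C : ℕ → Set Ω} (hE : Monotone E) (hm : ∀ n, MeasurableSet (E n)) (hU : μ (⋃ n, E n) = 1)
    {c : ℝ} (hc : 0 < c) (hC : ∀ n, c ≤ μ.real (C n)) (hd : ∀ n, C n ⊆ (E n)ᶜ) : False := by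
  have h2 := tendsto_measure_iUnion_atTop (μ := μ) hE
  rw [hU] at h2
  have h3 := (ENNReal.tendsto_toReal (by simp)).comp h2
  have h4 : ∀ᶠ n in Filter.atTop, 1 - c < μ.real (E n) :=
    h3.eventually (lt_mem_nhds (by simp; exact hc))
  obtain ⟨n, hn⟩ := h4.exists
  have h5 := (hC n).trans (measureReal_mono (hd n))
  rw [probReal_compl_eq_one_sub (hm n)] at h5
  linarith

/-! ### No infinite cluster in subcritical or critical bond percolation -/

lemma meas_Rbd (a b : V) : MeasurableSet {ω : V × Bool → Bool | Rbd ω a b} := by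
  have : {ω : V × Bool → Bool | Rbd ω a b} =
      {_ω | SqAdj a b} ∩ (fun ω => ω (edgeOf a b)) ⁻¹' {true} := rfl
  rw [this]
  exact (MeasurableSet.const _).inter ((measurable_pi_apply _) (measurableSet_singleton _))

lemma meas_Dbd (a b : V) : MeasurableSet {ω : V × Bool → Bool | Dbd ω a b} := by
  have : {ω : V × Bool → Bool | Dbd ω a b} =
      {_ω | SqAdj a b} ∩ (fun ω => ω (dualE (edgeOf a b))) ⁻¹' {false} := rfl
  rw [this]
  exact (MeasurableSet.const _).inter ((measurable_pi_apply _) (measurableSet_singleton _))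

lemma dualE_inj : Function.Injective dualE := by
  rintro ⟨⟨x, y⟩, b⟩ ⟨⟨x', y'⟩, b'⟩ h
  cases b <;> cases b' <;> simp [dualE] at h ⊢ <;> omega

/-- coupling measure -/
noncomputable def cpl (q : ℝ) : Measure (Bool × Bool) :=
  ENNReal.ofReal q • Measure.dirac (true, false) + ENNReal.ofReal q • Measure.dirac (false, true) +
    ENNReal.ofReal (1 - 2 * q) • Measure.dirac (false, false)

lemma cpl_prob {q : ℝ} (h0 : 0 ≤ q) (h1 : q ≤ 1 / 2) : IsProbabilityMeasure (cpl q) := by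
  constructor
  simp only [cpl, Measure.coe_add, Measure.coe_smul, Pi.add_apply, Pi.smul_apply, measure_univ,
    smul_eq_mul, mul_one]
  rw [← ENNReal.ofReal_add h0 h0, ← ENNReal.ofReal_add (by linarith) (by linarith)]
  simp [two_mul]

lemma cpl_fst (q : unitInterval) (h1 : (q : ℝ) ≤ 1 / 2) : (cpl q).map Prod.fst = ber q := by
  have h0 := q.2.1
  rw [cpl, Measure.map_add _ _ measurable_fst, Measure.map_add _ _ measurable_fst,
    Measure.map_smul, Measure.map_smul, Measure.map_smul, Measure.map_dirac' measurable_fst,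
    Measure.map_dirac' measurable_fst, Measure.map_dirac' measurable_fst, ber, add_assoc, ← add_smul,
    ← ENNReal.ofReal_add h0 (by linarith)]
  congr 3
  ring_nf

lemma cpl_snd (q : unitInterval) (h1 : (q : ℝ) ≤ 1 / 2) : (cpl q).map Prod.snd = ber q := by
  have h0 := q.2.1
  rw [cpl, Measure.map_add _ _ measurable_snd, Measure.map_add _ _ measurable_snd,
    Measure.map_smul, Measure.map_smul, Measure.map_smul, Measure.map_dirac' measurable_snd,
    Measure.map_dirac' measurable_snd, Measure.map_dirac' measurable_snd, ber,
    add_comm (ENNReal.ofReal (q : ℝ) • Measure.dirac false), add_assoc, ← add_smul,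
    ← ENNReal.ofReal_add h0 (by linarith)]
  congr 3
  ring_nf

lemma dbx_finite (m : ℤ) : (dbx m).Finite := by
  refine (bx_finite m (0, 0)).subset fun v hv => ?_
  simp only [bx, dbx, Set.mem_ofPred_eq] at hv ⊢
  omega

theorem no_inf_origin (q : unitInterval) (hq : (q : ℝ) ≤ 1 / 2) :
    bprod (fun _ : V × Bool => q) {ω | InfC (Rbd ω) (0, 0)} = 0 := by
  by_contra hpos
  set P := bprod (fun _ : V × Bool => q) with hP
  set θ : ℝ := P.real {ω | InfC (Rbd ω) (0, 0)} with hθ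
  have hθpos : 0 < θ := by
    rw [hθ, measureReal_def]
    exact ENNReal.toReal_pos hpos (measure_ne_top _ _)
  obtain ⟨c, hc, hcirc⟩ := (percLaw_bond q).circ hθpos fun m hm =>
    measureReal_mono fun ω hω => infC_arm (good_Rbd ω) hω hm
  have hex : MeasurableSet {ω : V × Bool → Bool | ∃ u, InfC (Rbd ω) u} := by
    have : {ω : V × Bool → Bool | ∃ u, InfC (Rbd ω) u} = ⋃ u, {ω | InfC (Rbd ω) u} := by
      ext; simp
    rw [this]
    exact MeasurableSet.iUnion fun u => meas_infC meas_Rbd u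
  have hone : P {ω | ∃ u, InfC (Rbd ω) u} = 1 := by
    rcases zero_one (fun _ : V × Bool => q) hex
      (fun x y hxy hx => infC_bond_change hxy hx) with h | h
    · exfalso
      apply hpos
      exact measure_mono_null (show {ω | InfC (Rbd ω) (0, 0)} ⊆ {ω | ∃ u, InfC (Rbd ω) u} from
        fun ω hω => ⟨_, hω⟩) h
    · exact h
  have := cpl_prob q.2.1 hq
  set κ : Measure (V × Bool → Bool × Bool) := Measure.infinitePi (fun _ => cpl q) with hκ
  have m1 : Measurable (fun (x : V × Bool → Bool × Bool) e => (x e).1) :=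
    measurable_pi_iff.2 fun e => measurable_fst.comp (measurable_pi_apply e)
  have m2 : Measurable (fun (x : V × Bool → Bool × Bool) e => (x e).2) :=
    measurable_pi_iff.2 fun e => measurable_snd.comp (measurable_pi_apply e)
  have l1 : κ.map (fun x e => (x e).1) = P := by
    rw [hκ, Measure.infinitePi_map_pi (f := fun _ => Prod.fst) _ (fun _ => measurable_fst)]
    simp only [cpl_fst q hq]
    rfl
  have l2 : κ.map (fun x e => (x (dualE e)).2) = P := by
    have : κ.map (fun x e => (x e).2) = P := by
      rw [hκ, Measure.infinitePi_map_pi (f := fun _ => Prod.snd) _ (fun _ => measurable_snd)]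
      simp only [cpl_snd q hq]
      rfl
    have h3 := bprod_comp_inj (fun _ : V × Bool => q) dualE_inj
    rw [← hP, ← this, Measure.map_map (meas_comp _) m2] at h3
    exact h3
  have m2' : Measurable (fun (x : V × Bool → Bool × Bool) e => (x (dualE e)).2) :=
    measurable_pi_iff.2 fun e => measurable_snd.comp (measurable_pi_apply _)
  have hae : ∀ᵐ x ∂κ, ∀ e, ¬ ((x e).1 = true ∧ (x e).2 = true) := by
    rw [ae_all_iff]
    intro e
    have h5 : κ.map (fun x => x e) = cpl q := Measure.infinitePi_map_eval (fun _ => cpl (q : ℝ)) e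
    have h6 : ∀ᵐ z ∂(κ.map (fun x => x e)), ¬ (z.1 = true ∧ z.2 = true) := by
      rw [h5, ae_iff]
      simp [cpl]
    exact ae_of_ae_map (measurable_pi_apply e).aemeasurable h6
  have hae2 : ∀ᵐ x ∂κ, ∃ u, InfC (Rbd (fun e => (x (dualE e)).2)) u := by
    have h7 : ∀ᵐ ω ∂P, ∃ u, InfC (Rbd ω) u := (mem_ae_iff_prob_eq_one hex).2 hone
    rw [← l2] at h7
    exact ae_of_ae_map m2'.aemeasurable h7
  have hae3 : ∀ᵐ x ∂κ, ∃ u, InfC (Dbd (fun e => (x e).1)) u := by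
    filter_upwards [hae, hae2] with x h8 ⟨u, hu⟩
    refine ⟨u, hu.mono fun w hw => Relation.ReflTransGen.mono (fun a b hab => ⟨hab.1, ?_⟩) _ _ hw⟩
    have h9 := h8 (dualE (edgeOf a b))
    have h10 := hab.2
    simp only at h10 ⊢
    simpa [h10] using h9
  have hae4 : ∀ᵐ ω ∂P, ∃ u, InfC (Dbd ω) u := by
    rw [← l1]
    have hms : MeasurableSet {ω : V × Bool → Bool | ∃ u, InfC (Dbd ω) u} := by
      have : {ω : V × Bool → Bool | ∃ u, InfC (Dbd ω) u} = ⋃ u, {ω | InfC (Dbd ω) u} := by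
        ext; simp
      rw [this]
      exact MeasurableSet.iUnion fun u => meas_infC meas_Dbd u
    exact (ae_map_iff m1.aemeasurable hms).2 hae3
  choose M hM1 hM2 using fun n : ℕ => hcirc (n + 1) (by omega)
  refine squeeze (μ := P) (E := fun n : ℕ => {ω | ∃ u ∈ dbx (n + 1), InfC (Dbd ω) u})
    (C := fun n : ℕ => {ω | Circ (n + 1) (M n) (Rbd ω)}) ?_ ?_ ?_ hc hM2 ?_
  · rintro m n hmn ω ⟨u, hu, hu'⟩
    refine ⟨u, ?_, hu'⟩
    simp only [dbx, Set.mem_ofPred_eq] at hu ⊢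
    omega
  · intro n
    have : {ω : V × Bool → Bool | ∃ u ∈ dbx ((n : ℤ) + 1), InfC (Dbd ω) u} =
        ⋃ u, {_ω | u ∈ dbx ((n : ℤ) + 1)} ∩ {ω | InfC (Dbd ω) u} := by
      ext; simp
    rw [this]
    exact MeasurableSet.iUnion fun u => (MeasurableSet.const _).inter (meas_infC meas_Dbd u)
  · have h11 : ∀ᵐ ω ∂P, ω ∈ ⋃ n : ℕ, {ω | ∃ u ∈ dbx ((n : ℤ) + 1), InfC (Dbd ω) u} := by
      filter_upwards [hae4] with ω ⟨u, hu⟩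
      refine Set.mem_iUnion.2 ⟨u.1.natAbs + u.2.natAbs, u, ?_, hu⟩
      simp only [dbx, Set.mem_ofPred_eq]
      omega
    exact (measure_congr (Filter.eventuallyEq_univ.2 h11)).trans measure_univ
  · intro n ω hω ⟨u, hu, hu'⟩
    refine hu' ((dbx_finite (M n)).subset fun v hv => ?_)
    exact circ_dual (by omega) (hM1 n) hω hu hv

lemma no_inf_any (q : unitInterval) (hq : (q : ℝ) ≤ 1 / 2) (u : V) :
    bprod (fun _ : V × Bool => q) {ω | InfC (Rbd ω) u} = 0 := by
  have h := no_inf_origin q hq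
  have hs := bprod_comp_inj (fun _ : V × Bool => q) (autE_inj (aut_tr u))
  have hs' : (bprod (fun _ : V × Bool => q)).map (fun x => x ∘ autE (trE u)) =
      bprod (fun _ : V × Bool => q) := hs
  rw [← hs', Measure.map_apply (meas_comp _) (meas_infC meas_Rbd _)] at h
  refine measure_mono_null ?_ h
  intro ω hω
  have h2 : {w | Relation.ReflTransGen (Rbd (ω ∘ autE (trE u))) (0, 0) w} =
      trE u ⁻¹' {w | Relation.ReflTransGen (Rbd ω) u w} := by
    ext w
    have h3 := conn_aut ω (aut_tr u) (0, 0) w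
    rw [conn_iff, conn_iff] at h3
    simp only [Set.mem_ofPred_eq, Set.mem_preimage]
    rw [← h3]
    have h4 : trE u (0, 0) = u := by simp [trE, Prod.ext_iff]
    rw [h4]
  show ({w | Relation.ReflTransGen (Rbd (ω ∘ autE (trE u))) (0, 0) w}).Infinite
  rw [h2]
  exact Set.Infinite.preimage hω (by simp)

theorem no_inf_ae (q : unitInterval) (hq : (q : ℝ) ≤ 1 / 2) :
    ∀ᵐ ω ∂(bprod (fun _ : V × Bool => q)), ∀ u, ¬ InfC (Rbd ω) u := by
  rw [ae_all_iff]
  intro u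
  rw [ae_iff]
  simpa using no_inf_any q hq u

end DaC

namespace DaC

lemma rtg_transfer {ω ω' : V × Bool → Bool} {K : Set V} {v w : V}
    (hK : ∀ e, ω e ≠ ω' e → e.1 ∈ K ∧ eEnd e ∈ K)
    (hv : ∀ a ∈ K, ¬ Relation.ReflTransGen (Rbd ω) v a)
    (h : Relation.ReflTransGen (Rbd ω) v w) : Relation.ReflTransGen (Rbd ω') v w := by
  induction h with
  | refl => exact .refl
  | @tail a b hva hab ih =>
    refine ih.tail ⟨hab.1, ?_⟩
    by_contra hc
    have h1 := hK (edgeOf a b) (by rw [hab.2]; exact fun h => hc h.symm)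
    rcases edgeOf_ends hab.1 with h2 | h2
    · exact hv a (by rw [h2.1]; exact h1.1) hva
    · exact hv a (by rw [h2.2]; exact h1.2) hva

lemma wst_change {b b' : Idx → Bool} (hf : {i | b i ≠ b' i}.Finite)
    (hfin : ∀ u, ¬ InfC (Rbd (b ∘ Sum.inl)) u) (h : ∃ u, InfC (Wst (xiB b)) u) :
    (∀ u, ¬ InfC (Rbd (b' ∘ Sum.inl)) u) ∧ ∃ u, InfC (Wst (xiB b')) u := by
  have hF : {e | (b ∘ Sum.inl) e ≠ (b' ∘ Sum.inl) e}.Finite :=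
    hf.preimage (f := Sum.inl) Sum.inl_injective.injOn
  have hG : {e | (b ∘ Sum.inr) e ≠ (b' ∘ Sum.inr) e}.Finite :=
    hf.preimage (f := Sum.inr) Sum.inr_injective.injOn
  have hF' : {e | (b' ∘ Sum.inl) e ≠ (b ∘ Sum.inl) e}.Finite := by
    refine hF.subset fun e he => ?_
    exact Ne.symm he
  have hfin' : ∀ u, ¬ InfC (Rbd (b' ∘ Sum.inl)) u := by
    intro u hu
    obtain ⟨z, hz⟩ := infC_bond_change hF' ⟨u, hu⟩
    exact hfin z hz
  refine ⟨hfin', ?_⟩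
  set F := {e | (b ∘ Sum.inl) e ≠ (b' ∘ Sum.inl) e} with hFdef
  set K : Set V := (Prod.fst '' F ∪ eEnd '' F) ∪ {e | (b ∘ Sum.inr) e ≠ (b' ∘ Sum.inr) e} with hKdef
  have hK : K.Finite := ((hF.image _).union (hF.image _)).union hG
  set D : Set V := ⋃ a ∈ K, ({w | Relation.ReflTransGen (Rbd (b ∘ Sum.inl)) a w} ∪
    {w | Relation.ReflTransGen (Rbd (b' ∘ Sum.inl)) a w}) with hDdef
  have hD : D.Finite := hK.biUnion fun a _ =>
    (Set.not_infinite.1 (hfin a)).union (Set.not_infinite.1 (hfin' a))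
  have hK1 : ∀ e, (b ∘ Sum.inl) e ≠ (b' ∘ Sum.inl) e → e.1 ∈ K ∧ eEnd e ∈ K := fun e he =>
    ⟨Or.inl (Or.inl ⟨e, he, rfl⟩), Or.inl (Or.inr ⟨e, he, rfl⟩)⟩
  have hcol : ∀ v, v ∉ D → xiB b v = xiB b' v := by
    intro v hv
    have h1 : ∀ a ∈ K, ¬ Relation.ReflTransGen (Rbd (b ∘ Sum.inl)) v a := fun a ha hva =>
      hv (Set.mem_biUnion ha (Or.inl (rtg_symm (good_Rbd _) hva)))
    have h2 : ∀ a ∈ K, ¬ Relation.ReflTransGen (Rbd (b' ∘ Sum.inl)) v a := fun a ha hva =>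
      hv (Set.mem_biUnion ha (Or.inr (rtg_symm (good_Rbd _) hva)))
    have h3 : clusterRep (etaOf (b ∘ Sum.inl)) v = clusterRep (etaOf (b' ∘ Sum.inl)) v := by
      refine rep_congr fun w => ?_
      rw [conn_iff, conn_iff]
      exact ⟨rtg_transfer hK1 h1, rtg_transfer (fun e he => hK1 e he.symm) h2⟩
    have h4 := (rep_spec (etaOf (b ∘ Sum.inl)) v).1
    rw [conn_iff] at h4
    unfold xiB xiOf
    rw [← h3]
    by_contra hc
    exact h1 _ (Or.inr hc) h4
  obtain ⟨u, hu⟩ := h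
  refine infC_change hD (nbr_finite (fun a c hac => hac.1) hD) ?_ hu
  intro a c hac ha hc
  refine ⟨hac.1, ?_, ?_⟩
  · rw [← hcol a ha]; exact hac.2.1
  · rw [← hcol c hc]; exact hac.2.2

lemma meas_xiB : Measurable xiB := approx_meas xi_approx

lemma meas_Wst (u v : V) : MeasurableSet {b | Wst (xiB b) u v} := by
  have : {b | Wst (xiB b) u v} = {_b | StarAdj u v} ∩
      ((fun b => xiB b u) ⁻¹' {false} ∩ (fun b => xiB b v) ⁻¹' {false}) := rfl
  rw [this]
  exact (MeasurableSet.const _).inter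
    ((((measurable_pi_apply _).comp meas_xiB) (measurableSet_singleton _)).inter
    (((measurable_pi_apply _).comp meas_xiB) (measurableSet_singleton _)))

theorem no_coexist (q r : unitInterval) (hq : (q : ℝ) ≤ 1 / 2)
    (h1 : bprod (dw q r) {b | InfC (Rcol (xiB b)) (0, 0)} ≠ 0)
    (h2 : bprod (dw q r) {b | InfC (Wst (xiB b)) (0, 0)} ≠ 0) : False := by
  set P := bprod (dw q r) with hP
  set θ : ℝ := P.real {b | InfC (Rcol (xiB b)) (0, 0)} with hθ
  have hθpos : 0 < θ := by
    rw [hθ, measureReal_def]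
    exact ENNReal.toReal_pos h1 (measure_ne_top _ _)
  obtain ⟨c, hc, hcirc⟩ := (percLaw_col q r).circ hθpos fun m hm =>
    measureReal_mono fun b hb => infC_arm (good_Rcol (xiB b)) hb hm
  have hfinae : ∀ᵐ b ∂P, ∀ u, ¬ InfC (Rbd (b ∘ Sum.inl)) u := by
    have h3 := no_inf_ae q hq
    have h4 : P.map (fun x => x ∘ Sum.inl) = bprod (fun _ : V × Bool => q) :=
      bprod_comp_inj (dw q r) Sum.inl_injective
    rw [← h4] at h3
    exact ae_of_ae_map (meas_comp _).aemeasurable h3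
  set A : Set (Idx → Bool) := {b | (∀ u, ¬ InfC (Rbd (b ∘ Sum.inl)) u) ∧
    ∃ u, InfC (Wst (xiB b)) u} with hA
  have hAm : MeasurableSet A := by
    have : A = (⋂ u, ((fun b : Idx → Bool => b ∘ Sum.inl) ⁻¹' {ω | InfC (Rbd ω) u})ᶜ) ∩
        ⋃ u, {b | InfC (Wst (xiB b)) u} := by
      ext b; simp [hA]
    rw [this]
    exact (MeasurableSet.iInter fun u => ((meas_comp _) (meas_infC meas_Rbd u)).compl).inter
      (MeasurableSet.iUnion fun u => meas_infC meas_Wst u)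
  have hA1 : P A = 1 := by
    rcases zero_one (dw q r) hAm (fun x y hxy hx => wst_change hxy hx.1 hx.2) with h | h
    · exfalso
      apply h2
      have h5 : ∀ᵐ b ∂P, b ∉ A := measure_eq_zero_iff_ae_notMem.1 h
      rw [measure_eq_zero_iff_ae_notMem]
      filter_upwards [h5, hfinae] with b h6 h7 h8
      exact h6 ⟨h7, _, h8⟩
    · exact h
  choose M hM1 hM2 using fun n : ℕ => hcirc (n + 1) (by omega)
  refine squeeze (μ := P) (E := fun n : ℕ => {b | ∃ u ∈ bx (n + 1) (0, 0), InfC (Wst (xiB b)) u})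
    (C := fun n : ℕ => {b | Circ (n + 1) (M n) (Rcol (xiB b))}) ?_ ?_ ?_ hc hM2 ?_
  · rintro m n hmn ω ⟨u, hu, hu'⟩
    refine ⟨u, ?_, hu'⟩
    simp only [bx, Set.mem_ofPred_eq] at hu ⊢
    omega
  · intro n
    have : {b : Idx → Bool | ∃ u ∈ bx ((n : ℤ) + 1) (0, 0), InfC (Wst (xiB b)) u} =
        ⋃ u, {_b | u ∈ bx ((n : ℤ) + 1) (0, 0)} ∩ {b | InfC (Wst (xiB b)) u} := by
      ext; simp
    rw [this]
    exact MeasurableSet.iUnion fun u => (MeasurableSet.const _).inter (meas_infC meas_Wst u)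
  · refine le_antisymm prob_le_one (hA1 ▸ measure_mono ?_)
    rintro b ⟨-, u, hu⟩
    refine Set.mem_iUnion.2 ⟨u.1.natAbs + u.2.natAbs, u, ?_, hu⟩
    simp only [bx, Set.mem_ofPred_eq]
    omega
  · intro n ω hω ⟨u, hu, hu'⟩
    refine hu' ((bx_finite (M n) (0, 0)).subset fun v hv => ?_)
    exact circ_star (by omega) (hM1 n) hω hu hv

end DaC

namespace DaC

/-! ### The law of the binary digits -/

/-- one half -/
noncomputable def half : unitInterval := ⟨1 / 2, by norm_num, by norm_num⟩

lemma ber_half (b : Bool) : ber half {b} = 2⁻¹ := by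
  have h : ENNReal.ofReal (1 / 2) = 2⁻¹ := by
    rw [one_div, ENNReal.ofReal_inv_of_pos (by norm_num)]; simp
  have h'' : ENNReal.ofReal (1 - 2⁻¹) = 2⁻¹ := by rw [← h]; norm_num
  cases b <;> simp [ber, half, h'']

/-- integer with given binary digits -/
def dig (s : ℕ → Bool) : ℕ → ℤ
  | 0 => 0
  | n + 1 => 2 * dig s n + (if s n then 1 else 0)

lemma dig_bounds (s : ℕ → Bool) (n : ℕ) : 0 ≤ dig s n ∧ dig s n + 1 ≤ 2 ^ n := by
  induction n with
  | zero => simp [dig]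
  | succ n ih =>
    rw [dig, pow_succ]
    split_ifs <;> omega

lemma bit_iff (n : ℕ) (x : ℝ) (b : Bool) :
    bit n x = b ↔ ⌊x * 2 ^ (n + 1)⌋ % 2 = if b then 1 else 0 := by
  have h := boolOf_iff (⌊x * 2 ^ (n + 1)⌋ % 2 = 1)
  unfold bit
  cases b
  · rw [← Bool.not_eq_true, h]
    simp
  · rw [h]; simp

lemma floor_half (n : ℕ) (x : ℝ) : ⌊x * 2 ^ n⌋ = ⌊x * 2 ^ (n + 1)⌋ / 2 := by
  have h1 := Int.floor_le (x * 2 ^ (n + 1))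
  have h2 := Int.lt_floor_add_one (x * 2 ^ (n + 1))
  have h3 := Int.floor_le (x * 2 ^ n)
  have h4 := Int.lt_floor_add_one (x * 2 ^ n)
  rw [pow_succ] at *
  set a := ⌊x * 2 ^ n⌋
  set c := ⌊x * (2 ^ n * 2)⌋
  have h5 : (2 * a : ℝ) < c + 1 := by linarith
  have h6 : (c : ℝ) < 2 * a + 2 := by linarith
  have h7 : 2 * a < c + 1 := by exact_mod_cast h5
  have h8 : c < 2 * a + 2 := by exact_mod_cast h6
  omega

lemma bits_iff (s : ℕ → Bool) {x : ℝ} (hx : x ∈ Set.Ico (0 : ℝ) 1) (n : ℕ) :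
    (∀ k < n, bit k x = s k) ↔ ⌊x * 2 ^ n⌋ = dig s n := by
  induction n with
  | zero => simp [dig, Int.floor_eq_zero_iff, hx.1, hx.2]
  | succ n ih =>
    rw [Nat.forall_lt_succ_right, ih, bit_iff, dig, floor_half n x]
    split_ifs <;> omega

lemma meas_bit (n : ℕ) : Measurable (bit n) := by
  refine measurable_to_bool ?_
  have : bit n ⁻¹' {true} = (fun x : ℝ => ⌊x * 2 ^ (n + 1)⌋) ⁻¹' {z | z % 2 = 1} := by
    ext x
    simp [bit, boolOf]
  rw [this]
  exact (Int.measurable_floor.comp (measurable_id.mul_const _)) (MeasurableSet.of_discrete)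

lemma base_Ico : base = volume.restrict (Set.Ico (0 : ℝ) 1) :=
  (Measure.restrict_congr_set Ico_ae_eq_Ioc).symm

lemma base_bits (s : ℕ → Bool) (n : ℕ) : base {x | ∀ k < n, bit k x = s k} = 2⁻¹ ^ n := by
  have hm : MeasurableSet {x | ∀ k < n, bit k x = s k} := by
    have : {x | ∀ k < n, bit k x = s k} = ⋂ k ∈ Set.Iio n, bit k ⁻¹' {s k} := by
      ext; simp
    rw [this]
    exact MeasurableSet.biInter (Set.to_countable _) fun k _ => meas_bit k (measurableSet_singleton _)
  rw [base_Ico, Measure.restrict_apply hm]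
  have h1 : {x | ∀ k < n, bit k x = s k} ∩ Set.Ico (0 : ℝ) 1 =
      Set.Ico ((dig s n : ℝ) / 2 ^ n) ((dig s n + 1) / 2 ^ n) := by
    have hp : (0 : ℝ) < 2 ^ n := by positivity
    obtain ⟨hb1, hb2⟩ := dig_bounds s n
    have hb1' : (0 : ℝ) ≤ dig s n := by exact_mod_cast hb1
    have hb2' : (dig s n : ℝ) + 1 ≤ 2 ^ n := by exact_mod_cast hb2
    ext x
    simp only [Set.mem_inter_iff, Set.mem_ofPred_eq]
    constructor
    · rintro ⟨h2, h3⟩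
      rw [bits_iff s h3, Int.floor_eq_iff] at h2
      exact ⟨(div_le_iff₀ hp).2 h2.1, (lt_div_iff₀ hp).2 h2.2⟩
    · rintro ⟨h2, h3⟩
      have h4 : x ∈ Set.Ico (0 : ℝ) 1 := ⟨le_trans (by positivity) h2,
        lt_of_lt_of_le h3 ((div_le_one hp).2 hb2')⟩
      refine ⟨?_, h4⟩
      rw [bits_iff s h4, Int.floor_eq_iff]
      exact ⟨(div_le_iff₀ hp).1 h2, (lt_div_iff₀ hp).1 h3⟩
  rw [h1, Real.volume_Ico]
  have h2 : ((dig s n : ℝ) + 1) / 2 ^ n - dig s n / 2 ^ n = (2⁻¹) ^ n := by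
    rw [inv_pow]; field_simp; ring
  rw [h2, ENNReal.ofReal_pow (by norm_num), ENNReal.ofReal_inv_of_pos (by norm_num)]
  simp

/-- all binary digits -/
noncomputable def bitsB (x : ℝ) : ℕ → Bool := fun n => bit n x

lemma meas_bitsB : Measurable bitsB := measurable_pi_iff.2 meas_bit

lemma bits_law : base.map bitsB = bprod (fun _ : ℕ => half) := by
  have hlim := Measure.isProjectiveLimit_infinitePi (fun _ : ℕ => ber half)
  have : IsFiniteMeasure base := ⟨by simp [base]⟩
  refine IsProjectiveLimit.unique ?_ hlim
  refine (isProjectiveLimit_nat_iff (isProjectiveMeasureFamily_pi (fun _ : ℕ => ber half)) _).2 ?_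
  intro n
  rw [Measure.map_map (Preorder.measurable_frestrictLe n) meas_bitsB]
  rw [Measure.ext_iff_singleton]
  intro s
  rw [Measure.map_apply ((Preorder.measurable_frestrictLe n).comp meas_bitsB)
    (measurableSet_singleton _), Measure.pi_singleton]
  simp only [ber_half, Finset.prod_const, Finset.card_univ, Fintype.card_coe, Nat.card_Iic]
  rw [← base_bits (fun k => if h : k ∈ Finset.Iic n then s ⟨k, h⟩ else true) (n + 1)]
  congr 1
  ext x
  simp only [Set.mem_preimage, Set.mem_singleton_iff, funext_iff, Set.mem_ofPred_eq]
  constructor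
  · intro h k hk
    have hk' : k ∈ Finset.Iic n := by simp; omega
    rw [dif_pos hk', ← h ⟨k, hk'⟩]
    rfl
  · rintro h ⟨k, hk⟩
    have := h k (by simp at hk; omega)
    rw [dif_pos hk] at this
    exact this

/-! ### The law of the uniforms, thresholded -/

/-- real with given binary digits -/
noncomputable def binR (z : ℕ → Bool) : ℝ := ∑' k : ℕ, if z k then ((2 : ℝ)⁻¹) ^ (k + 1) else 0

lemma binR_summable (z : ℕ → Bool) :
    Summable (fun k : ℕ => if z k then ((2 : ℝ)⁻¹) ^ (k + 1) else 0) := by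
  have h : Summable (fun k : ℕ => ((2 : ℝ)⁻¹) ^ (k + 1)) :=
    (summable_nat_add_iff 1).2 (summable_geometric_of_lt_one (by norm_num) (by norm_num))
  refine Summable.of_nonneg_of_le (fun k => ?_) (fun k => ?_) h
  · split_ifs <;> positivity
  · split_ifs
    · exact le_rfl
    · positivity

lemma meas_binR : Measurable binR := by
  have h : ∀ z, Filter.Tendsto (fun n => ∑ k ∈ Finset.range n,
      if z k then ((2 : ℝ)⁻¹) ^ (k + 1) else 0) Filter.atTop (nhds (binR z)) := fun z =>
    (binR_summable z).hasSum.tendsto_sum_nat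
  refine measurable_of_tendsto_metrizable (f := fun n z => ∑ k ∈ Finset.range n,
      if z k then ((2 : ℝ)⁻¹) ^ (k + 1) else 0) ?_ (tendsto_pi_nhds.2 h)
  intro n
  refine Finset.measurable_sum _ fun k _ => ?_
  have h2 : Measurable (fun y : Bool => if y then ((2 : ℝ)⁻¹) ^ (k + 1) else 0) :=
    measurable_from_top
  exact h2.comp (measurable_pi_apply k)

lemma unif_eq (i : ℕ) (x : ℝ) : unif i x = binR (fun k => bit (Nat.pair i k) x) := rfl

/-- thresholded label -/
noncomputable def thr (t : ℝ) (z : ℕ → Bool) : Bool := boolOf (binR z < t)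

lemma meas_thr (t : ℝ) : Measurable (thr t) := by
  refine measurable_to_bool ?_
  have : thr t ⁻¹' {true} = binR ⁻¹' Set.Iio t := by
    ext x; simp [thr, boolOf]
  rw [this]
  exact meas_binR measurableSet_Iio

/-- parameter of the thresholded label -/
noncomputable def thrP (t : ℝ) : unitInterval :=
  ⟨(bprod (fun _ : ℕ => half)).real (thr t ⁻¹' {true}), measureReal_nonneg, measureReal_le_one⟩

lemma thr_law (t : ℝ) : (bprod (fun _ : ℕ => half)).map (thr t) = ber (thrP t) := by
  have hp : IsProbabilityMeasure ((bprod (fun _ : ℕ => half)).map (thr t)) :=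
    Measure.isProbabilityMeasure_map (meas_thr t).aemeasurable
  rw [Measure.ext_iff_singleton]
  have h1 : (bprod (fun _ : ℕ => half)).map (thr t) {true} = ENNReal.ofReal (thrP t) := by
    rw [Measure.map_apply (meas_thr t) (measurableSet_singleton _)]
    simp [thrP]
  intro b
  cases b
  · have h2 : ({false} : Set Bool) = {true}ᶜ := by ext b; cases b <;> simp
    rw [h2, prob_compl_eq_one_sub (measurableSet_singleton _),
      prob_compl_eq_one_sub (measurableSet_singleton _), h1]
    simp [ber]
  · rw [h1]; simp [ber]

lemma thrP_le {t : ℝ} (ht : t < 1 / 2) : (thrP t : ℝ) ≤ 1 / 2 := by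
  show (bprod (fun _ : ℕ => half)).real (thr t ⁻¹' {true}) ≤ 1 / 2
  have h1 : (thr t ⁻¹' {true}) ⊆ (fun z : ℕ → Bool => z 0) ⁻¹' {false} := by
    intro z hz
    have hz' : binR z < t := by simpa [thr, boolOf] using hz
    by_contra hc
    have hc' : z 0 = true := by simpa using hc
    have := (binR_summable z).le_tsum 0 (fun k _ => by split_ifs <;> positivity)
    rw [if_pos hc'] at this
    have h3 : binR z = ∑' k : ℕ, if z k then ((2 : ℝ)⁻¹) ^ (k + 1) else 0 := rfl
    rw [← h3] at this
    norm_num at this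
    linarith
  refine (measureReal_mono h1).trans ?_
  rw [measureReal_def, ← Measure.map_apply (measurable_pi_apply 0) (measurableSet_singleton _)]
  have h2 : (bprod (fun _ : ℕ => half)).map (fun z => z 0) = ber half :=
    Measure.infinitePi_map_eval (fun _ : ℕ => ber half) 0
  rw [h2, ber_half]
  simp

/-- position of the labels -/
noncomputable def pos : Idx → ℕ :=
  Sum.elim (fun e => 2 * eIdx e.1 (eEnd e)) (fun v => 2 * Encodable.encode v + 1)

lemma eIdx_comm (u v : V) : eIdx u v = eIdx v u := min_comm _ _

lemma eIdx_inj {u v u' v' : V} (h : eIdx u v = eIdx u' v') :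
    (u = u' ∧ v = v') ∨ (u = v' ∧ v = u') := by
  unfold eIdx at h
  rcases min_choice (Encodable.encode (u, v)) (Encodable.encode (v, u)) with h1 | h1 <;>
  rcases min_choice (Encodable.encode (u', v')) (Encodable.encode (v', u')) with h2 | h2 <;>
  rw [h1, h2] at h <;> have h3 := Encodable.encode_injective h <;>
  simp only [Prod.mk.injEq] at h3 <;> tauto

lemma pos_inj : Function.Injective pos := by
  rintro (e | v) (e' | v') h <;> simp only [pos, Sum.elim_inl, Sum.elim_inr] at h
  · have h1 : eIdx e.1 (eEnd e) = eIdx e'.1 (eEnd e') := by omega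
    congr 1
    rw [← edgeOf_eEnd e, ← edgeOf_eEnd e']
    rcases eIdx_inj h1 with h2 | h2
    · rw [h2.1, h2.2]
    · rw [h2.1, h2.2, edgeOf_comm]
  · omega
  · omega
  · congr 1
    exact Encodable.encode_injective (by omega)

/-- threshold of each label -/
def thre (p r : ℝ) : Idx → ℝ := Sum.elim (fun _ => p) (fun _ => r)

/-- all Boolean labels as functions of the sample -/
noncomputable def lab (p r : ℝ) (x : ℝ) : Idx → Bool :=
  fun i => thr (thre p r i) (fun k => bit (Nat.pair (pos i) k) x)

lemma meas_lab (p r : ℝ) : Measurable (lab p r) :=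
  measurable_pi_iff.2 fun _ => (meas_thr _).comp (measurable_pi_iff.2 fun _ => meas_bit _)

lemma lab_law (p r : ℝ) : base.map (lab p r) = bprod (dw (thrP p) (thrP r)) := by
  let f : Idx × ℕ → ℕ := fun a => Nat.pair (pos a.1) a.2
  have hf : Function.Injective f := by
    rintro ⟨i, k⟩ ⟨i', k'⟩ h
    obtain ⟨h1, h2⟩ := Nat.pair_eq_pair.1 h
    exact Prod.ext (pos_inj h1) h2
  have h1 : (bprod (fun _ : ℕ => half)).map (fun x => x ∘ f) = bprod (fun _ : Idx × ℕ => half) :=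
    bprod_comp_inj _ hf
  have h2 : (bprod (fun _ : Idx × ℕ => half)).map (MeasurableEquiv.curry Idx ℕ Bool) =
      Measure.infinitePi (fun _ : Idx => bprod (fun _ : ℕ => half)) :=
    Measure.infinitePi_map_curry (fun (_ : Idx) (_ : ℕ) => ber half)
  have h3 : (Measure.infinitePi (fun _ : Idx => bprod (fun _ : ℕ => half))).map
      (fun z i => thr (thre p r i) (z i)) = bprod (dw (thrP p) (thrP r)) := by
    rw [Measure.infinitePi_map_pi (f := fun i => thr (thre p r i)) _ (fun i => meas_thr _)]
    unfold bprod
    congr 1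
    funext i
    refine (thr_law _).trans ?_
    rcases i with i | i <;> rfl
  have m3 : Measurable (fun (z : Idx → ℕ → Bool) i => thr (thre p r i) (z i)) :=
    measurable_pi_iff.2 fun i => (meas_thr _).comp (measurable_pi_apply i)
  rw [← h3, ← h2, ← h1, ← bits_law, Measure.map_map (meas_comp _) meas_bitsB,
    Measure.map_map (MeasurableEquiv.measurable _) ((meas_comp _).comp meas_bitsB),
    Measure.map_map m3 ((MeasurableEquiv.measurable _).comp ((meas_comp _).comp meas_bitsB))]
  rfl

lemma edgeCfg_eq (p r x : ℝ) : edgeCfg SqAdj p x = etaOf (lab p r x ∘ Sum.inl) := by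
  funext u v
  rw [Bool.eq_iff_iff, etaOf_iff]
  simp only [edgeCfg, Bool.and_eq_true, boolOf_iff, Rbd]
  refine and_congr_right fun h => ?_
  have h1 : eIdx (edgeOf u v).1 (eEnd (edgeOf u v)) = eIdx u v := by
    rcases edgeOf_ends h with h2 | h2
    · rw [← h2.1, ← h2.2]
    · rw [← h2.1, ← h2.2, eIdx_comm]
  simp only [lab, Function.comp, thr, boolOf_iff, pos, Sum.elim_inl, thre, h1, edgeU, unif_eq]

lemma colourCfg_eq (p r x : ℝ) : colourCfg SqAdj p r x = xiB (lab p r x) := by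
  funext v
  rw [colourCfg, edgeCfg_eq p r x]
  rfl

lemma percProb_ne (cadj : V → V → Prop) (c : Bool) (p r : ℝ)
    (hm : MeasurableSet {b | InfC (fun u v => cadj u v ∧ xiB b u = c ∧ xiB b v = c) (0, 0)})
    (h : percProb SqAdj cadj c p r ≠ 0) :
    bprod (dw (thrP p) (thrP r))
      {b | InfC (fun u v => cadj u v ∧ xiB b u = c ∧ xiB b v = c) (0, 0)} ≠ 0 := by
  intro h0
  apply h
  rw [← lab_law, Measure.map_apply (meas_lab p r) hm] at h0
  unfold percProb DaCMeasure
  have hM : Measurable (fun x => (edgeCfg SqAdj p x, colourCfg SqAdj p r x)) := by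
    refine Measurable.prodMk ?_ ?_
    · refine measurable_pi_iff.2 fun u => measurable_pi_iff.2 fun v => ?_
      simp_rw [edgeCfg_eq p r]
      have : Measurable (fun y : Bool => boolOf (SqAdj u v) && y) := measurable_from_top
      exact this.comp ((measurable_pi_apply (Sum.inl (edgeOf u v))).comp (meas_lab p r))
    · rw [show colourCfg SqAdj p r = fun x => xiB (lab p r x) from funext (colourCfg_eq p r)]
      exact meas_xiB.comp (meas_lab p r)
  refine measure_mono_null (t := {ω : Config |
    InfC (fun u v => cadj u v ∧ ω.2 u = c ∧ ω.2 v = c) (0, 0)}) ?_ ?_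
  · intro ω hω
    exact Set.Infinite.mono (fun w hw => hw.2) hω
  · rw [Measure.map_apply hM]
    · refine Eq.trans (congrArg _ ?_) h0
      ext x
      simp only [Set.mem_preimage, Set.mem_ofPred_eq, colourCfg_eq]
    · refine meas_infC (R := fun ω : Config => fun u v => cadj u v ∧ ω.2 u = c ∧ ω.2 v = c) ?_ _
      intro a b
      have : {ω : Config | cadj a b ∧ ω.2 a = c ∧ ω.2 b = c} = {_ω | cadj a b} ∩
          ((fun ω => ω.2 a) ⁻¹' {c} ∩ (fun ω => ω.2 b) ⁻¹' {c}) := rfl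
      rw [this]
      exact (MeasurableSet.const _).inter
        ((((measurable_pi_apply _).comp measurable_snd) (measurableSet_singleton _)).inter
        (((measurable_pi_apply _).comp measurable_snd) (measurableSet_singleton _)))

lemma meas_Rcol (u v : V) : MeasurableSet {b | Rcol (xiB b) u v} := by
  have : {b | Rcol (xiB b) u v} = {_b | SqAdj u v} ∩
      ((fun b => xiB b u) ⁻¹' {true} ∩ (fun b => xiB b v) ⁻¹' {true}) := rfl
  rw [this]
  exact (MeasurableSet.const _).inter
    ((((measurable_pi_apply _).comp meas_xiB) (measurableSet_singleton _)).inter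
    (((measurable_pi_apply _).comp meas_xiB) (measurableSet_singleton _)))

/-- For every `p < 1/2`, `r_c(p) + r_c*(p) ≥ 1`. -/
theorem rc_add_rcStar_ge_one (p : ℝ) (hp0 : 0 ≤ p) (hp : p < 1 / 2) :
    1 ≤ rcSq p + rcStarSq p := by
  by_contra hcon
  push Not at hcon
  have n1 : 0 ≤ rcSq p := Real.sSup_nonneg fun r hr => hr.1.1
  have n2 : 0 ≤ rcStarSq p := Real.sSup_nonneg fun r hr => hr.1.1
  obtain ⟨r, hr1, hr2⟩ := exists_between (show rcSq p < 1 - rcStarSq p by linarith)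
  have t1 : thetaSq p r ≠ 0 := by
    intro h
    have : r ≤ rcSq p := le_csSup ⟨1, fun s hs => hs.1.2⟩ ⟨⟨by linarith, by linarith⟩, h⟩
    linarith
  have t2 : thetaStarSq p (1 - r) ≠ 0 := by
    intro h
    have : 1 - r ≤ rcStarSq p :=
      le_csSup ⟨1, fun s hs => hs.1.2⟩ ⟨⟨by linarith, by linarith⟩, h⟩
    linarith
  unfold thetaStarSq at t2
  rw [show (1 : ℝ) - (1 - r) = r by ring] at t2
  exact no_coexist (thrP p) (thrP r) (thrP_le hp)
    (percProb_ne SqAdj true p r (meas_infC meas_Rcol _) t1)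
    (percProb_ne StarAdj false p r (meas_infC meas_Wst _) t2)

end DaC
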